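/- Generalized Margulis Lemma for packed GCB-spaces (Corollary 2.7): Given real numbers P0, r0 > 0 there exists ε0 > 0, depending only on P0 and r0, such that for every GCB-space (X,σ) which is P0-packed at scale r0, every discrete group Γ of isometries of X, and every x ∈ X, one has nilrad(Γ,x) ≥ ε0; that is, for every r < ε0 the subgroup Γ_r(x) generated by {g ∈ Γ : d(x, g x) ≤ r} is virtually nilpotent. -/

import Mathlib

open Metric Filter

/-- Four-points condition for `δ`-hyperbolicity. -/
def IsDeltaHyperbolic (X : Type*) [MetricSpace X] (δ : ℝ) : Prop :=
  ∀ x y z w : X,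
    dist x y + dist z w ≤ max (dist x z + dist y w) (dist x w + dist y z) + 2 * δ

/-- `X` is `P₀`-packed at scale `r₀`: any subset of a closed ball of radius `3r₀` whose
points are pairwise at distance `> 2r₀` has cardinality at most `P₀`. -/
def IsPacked (X : Type*) [MetricSpace X] (P₀ r₀ : ℝ) : Prop :=
  ∀ x : X, ∀ S : Finset X, (↑S ⊆ closedBall x (3 * r₀)) →
    (∀ a ∈ S, ∀ b ∈ S, a ≠ b → 2 * r₀ < dist a b) → (S.card : ℝ) ≤ P₀

/-- A geodesically complete, convex, consistent, reversible geodesic bicombing on `X`.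
Together with completeness of `X` this is the notion of GCB-space. -/
structure IsGCB {X : Type*} [MetricSpace X] (σ : X → X → ℝ → X) : Prop where
  source : ∀ x y : X, σ x y 0 = x
  target : ∀ x y : X, σ x y 1 = y
  geodesic : ∀ x y : X, ∀ t ∈ Set.Icc (0:ℝ) 1, ∀ t' ∈ Set.Icc (0:ℝ) 1,
    dist (σ x y t) (σ x y t') = |t - t'| * dist x y
  convex : ∀ x y x' y' : X,
    ConvexOn ℝ (Set.Icc (0:ℝ) 1) fun t => dist (σ x y t) (σ x' y' t)
  consistent : ∀ x y : X, ∀ s t l : ℝ, 0 ≤ s → s ≤ t → t ≤ 1 → l ∈ Set.Icc (0:ℝ) 1 →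
    σ (σ x y s) (σ x y t) l = σ x y ((1 - l) * s + l * t)
  reversible : ∀ x y : X, ∀ t ∈ Set.Icc (0:ℝ) 1, σ x y t = σ y x (1 - t)
  geodComplete : ∀ x y : X, ∃ γ : ℝ → X, Isometry γ ∧
    (∀ s t : ℝ, s ≤ t → ∀ l ∈ Set.Icc (0:ℝ) 1, σ (γ s) (γ t) l = γ (s + l * (t - s))) ∧
    (∀ t ∈ Set.Icc (0:ℝ) 1, σ x y t = γ (t * dist x y))

/-- `g` is a `σ`-isometry: a surjective isometry preserving the bicombing `σ`. -/
def IsSigmaIsometry {X : Type*} [MetricSpace X] (σ : X → X → ℝ → X) (g : X ≃ᵢ X) : Prop :=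
  ∀ x y : X, ∀ t ∈ Set.Icc (0:ℝ) 1, g (σ x y t) = σ (g x) (g y) t

/-- A group of isometries is discrete if for every `x` and `R` only finitely many of its
elements displace `x` at most `R`. -/
def IsDiscreteSubgroup {X : Type*} [MetricSpace X] (Γ : Subgroup (X ≃ᵢ X)) : Prop :=
  ∀ x : X, ∀ R : ℝ, {g : X ≃ᵢ X | g ∈ Γ ∧ dist x (g x) ≤ R}.Finite

/-- A group is virtually nilpotent if it has a nilpotent subgroup of finite index. -/
def IsVirtuallyNilpotent (G : Type*) [Group G] : Prop :=
  ∃ H : Subgroup G, H.FiniteIndex ∧ Group.IsNilpotent H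

/-- `Γ` is non-elementary: it contains two elements generating a subgroup that is not
virtually nilpotent. -/
def IsNonElementary {X : Type*} [MetricSpace X] (Γ : Subgroup (X ≃ᵢ X)) : Prop :=
  ∃ a b : X ≃ᵢ X, a ∈ Γ ∧ b ∈ Γ ∧
    ¬ IsVirtuallyNilpotent ↥(Subgroup.closure ({a, b} : Set (X ≃ᵢ X)))

/-- An isometry is non-elliptic if its orbits are unbounded. -/
def IsNonElliptic {X : Type*} [MetricSpace X] (g : X ≃ᵢ X) : Prop :=
  ∀ x : X, ¬ Bornology.IsBounded (Set.range fun n : ℤ => (g ^ n) x)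

/-- The `r`-almost stabilizer `Γ_r(x)`, generated by the elements of `Γ` displacing `x`
at most `r`. -/
def almostStabilizer {X : Type*} [MetricSpace X] (Γ : Subgroup (X ≃ᵢ X)) (r : ℝ) (x : X) :
    Subgroup (X ≃ᵢ X) :=
  Subgroup.closure {g : X ≃ᵢ X | g ∈ Γ ∧ dist x (g x) ≤ r}

/-- The nilpotence radius of `Γ` at `x`. -/
noncomputable def nilrad {X : Type*} [MetricSpace X] (Γ : Subgroup (X ≃ᵢ X)) (x : X) : ℝ :=
  sSup {r : ℝ | 0 ≤ r ∧ IsVirtuallyNilpotent ↥(almostStabilizer Γ r x)}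

/-- The Margulis domain `M_ε(g)`. -/
def margulisDomain {X : Type*} [MetricSpace X] (g : X ≃ᵢ X) (ε : ℝ) : Set X :=
  {x : X | dist x (g x) ≤ ε}

/-- The generalized Margulis domain `ℳ_ε(g) = ⋃_{i ≠ 0} M_ε(gⁱ)`. -/
def genMargulisDomain {X : Type*} [MetricSpace X] (g : X ≃ᵢ X) (ε : ℝ) : Set X :=
  ⋃ i ∈ {i : ℤ | i ≠ 0}, margulisDomain (g ^ i) ε

/-- `f` parameterizes a geodesic segment from `x` to `y` on `[0, dist x y]`. -/
def IsGeodesicFrom {X : Type*} [MetricSpace X] (f : ℝ → X) (x y : X) : Prop :=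
  f 0 = x ∧ f (dist x y) = y ∧
    ∀ s ∈ Set.Icc 0 (dist x y), ∀ t ∈ Set.Icc 0 (dist x y), dist (f s) (f t) = |s - t|

/-- `X` is a geodesic space. -/
def IsGeodesicSpace (X : Type*) [MetricSpace X] : Prop :=
  ∀ x y : X, ∃ f : ℝ → X, IsGeodesicFrom f x y

/-- `C` is `lam`-quasiconvex: any two of its points are joined by a geodesic contained in
the closed `lam`-neighbourhood of `C`. -/
def IsQuasiconvex {X : Type*} [MetricSpace X] (lam : ℝ) (C : Set X) : Prop :=
  ∀ x ∈ C, ∀ y ∈ C, ∃ f : ℝ → X, IsGeodesicFrom f x y ∧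
    ∀ t ∈ Set.Icc 0 (dist x y), infDist (f t) C ≤ lam

/-- `C` is a convex subset: any two of its points are joined by a geodesic inside `C`. -/
def IsConvexSubset {X : Type*} [MetricSpace X] (C : Set X) : Prop :=
  ∀ x ∈ C, ∀ y ∈ C, ∃ f : ℝ → X, IsGeodesicFrom f x y ∧
    ∀ t ∈ Set.Icc 0 (dist x y), f t ∈ C

/-- Arc-length concatenation of three paths, of respective lengths `d₁`, `d₂` and the rest. -/
noncomputable def concatPath {X : Type*} (d₁ d₂ : ℝ) (f₁ f₂ f₃ : ℝ → X) : ℝ → X :=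
  fun t => if t ≤ d₁ then f₁ t else if t ≤ d₁ + d₂ then f₂ (t - d₁) else f₃ (t - d₁ - d₂)

/-! The displacement `g ↦ d(x, g x)` is a length function whose balls split into boundedly many
pieces of small diameter: in a GCB-space, extending geodesics transports a packing at a small scale
to scale `r₀`, so packing at scale `r₀` implies packing at all smaller scales.

The translates of a tent function on a small ball span an almost finite dimensional, almost
invariant subspace of `ℓ²(Γ)`. Cutting it out by a spectral projection of a frame operator gives a
new length function, the displacement of the projection, which is Lipschitz for the old one, whose
small balls lie in small balls of the old one, and which is very small on elements having many small
powers when the projection is built from a set which is almost invariant under these powers. By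
pigeonhole on the growth of the sets of elements whose first `M` powers are small, followed by
compactness (an ultrafilter limit), suitable scales `M` can be found uniformly.

Gleason's convolution argument then shows that one over the number of small powers is an
almost subadditive weight and that the commutator with an element having many small powers has twice
as many. Iterated commutators therefore end up in the finite normal subgroup of the elements all of
whose powers are small, so the elements with many small powers generate a virtually nilpotent group.
Elements of a sufficiently small ball lie in boundedly many cosets of it, so by stabilization of the
growth of powers they generate a virtually nilpotent group.
-/

open scoped Pointwise commutatorElement

/-! ### Virtually nilpotent groups -/

section VirtuallyNilpotent

variable {G : Type*} [Group G]

lemma IsVirtuallyNilpotent.of_injective {K : Type*} [Group K] (h : IsVirtuallyNilpotent G)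
    (f : K →* G) (hf : Function.Injective f) : IsVirtuallyNilpotent K := by
  obtain ⟨H, hH, hN⟩ := h
  refine ⟨H.comap f, ⟨?_⟩, ?_⟩
  · rw [Subgroup.index_comap]
    exact fun h0 => hH.index_ne_zero (Subgroup.index_eq_zero_of_relIndex_eq_zero h0)
  · let g : H.comap f →* H := (f.comp (H.comap f).subtype).codRestrict H fun x => x.2
    have hg : Function.Injective g := fun a b hab =>
      Subtype.ext (hf (congrArg Subtype.val hab))
    refine Subgroup.isNilpotent_of_ker_le_center g ?_
    rw [(MonoidHom.ker_eq_bot_iff g).2 hg]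
    exact bot_le

lemma IsVirtuallyNilpotent.of_finiteIndex {N : Subgroup G} (h : IsVirtuallyNilpotent N)
    (hi : N.FiniteIndex) : IsVirtuallyNilpotent G := by
  obtain ⟨H, hH, hN⟩ := h
  refine ⟨H.map N.subtype, ⟨?_⟩, ?_⟩
  · rw [Subgroup.index_map_subtype]
    exact mul_ne_zero hH.index_ne_zero hi.index_ne_zero
  · exact (Group.isNilpotent_congr (H.equivMapOfInjective N.subtype N.subtype_injective)).1 hN

-- The centralizer of `H` has finite index, and it meets `H` in its centre.
theorem isVirtuallyNilpotent_of_finite_normal (H : Subgroup G) [H.Normal] [Finite H]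
    [Group.IsNilpotent (G ⧸ H)] : IsVirtuallyNilpotent G := by
  let φ : G →* MulAut H := MulAut.conjNormal
  have : Finite (MulAut H) := Finite.of_injective (fun e : MulAut H => (e : H → H))
    DFunLike.coe_injective
  refine ⟨φ.ker, Subgroup.finiteIndex_ker φ, ?_⟩
  refine Subgroup.isNilpotent_of_ker_le_center ((QuotientGroup.mk' H).comp φ.ker.subtype) ?_
  intro x hx
  have hxH : (x : G) ∈ H := by simpa [MonoidHom.mem_ker] using hx
  rw [Subgroup.mem_center_iff]
  intro y
  have hconj : (φ y ⟨x, hxH⟩ : G) = x := by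
    rw [show φ y = 1 from y.2]
    rfl
  exact Subtype.ext (mul_inv_eq_iff_eq_mul.mp hconj)

lemma commutator_mem_of_mem_closure (N : Subgroup G) [N.Normal] {T : Set G} {x y : G}
    (hT : ∀ t ∈ T, ⁅x, t⁆ ∈ N) (hy : y ∈ Subgroup.closure T) : ⁅x, y⁆ ∈ N := by
  have mem_iff : ∀ z, ⁅x, z⁆ ∈ N ↔ z ∈ (Subgroup.centralizer {QuotientGroup.mk' N x}).comap
      (QuotientGroup.mk' N) := fun z => by
    rw [Subgroup.mem_comap, Subgroup.mem_centralizer_singleton_iff, ← QuotientGroup.eq_one_iff,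
      ← QuotientGroup.mk'_apply, map_commutatorElement, commutatorElement_eq_one_iff_mul_comm,
      eq_comm]
  exact (mem_iff y).2 ((Subgroup.closure_le _).2 (fun t ht => (mem_iff t).1 (hT t ht)) hy)

theorem isNilpotent_of_iterated_commutators {T : Set G} (hT : Subgroup.closure T = ⊤)
    {Q : ℕ → Set G} {K : ℕ} (hTQ : T ⊆ Q 0) (hK : Q K ⊆ {1})
    (hQ : ∀ k, ∀ g ∈ Q k, ∀ t ∈ T, ⁅g, t⁆ ∈ Q (k + 1)) : Group.IsNilpotent G := by
  have key : ∀ j ≤ K, Q (K - j) ⊆ (Subgroup.upperCentralSeries G j : Set G) := by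
    intro j
    induction j with
    | zero => simpa using hK
    | succ j ih =>
      intro hj x hx
      rw [SetLike.mem_coe, Subgroup.mem_upperCentralSeries_succ_iff]
      refine fun y => commutator_mem_of_mem_closure _ (fun t ht => ih (by omega) ?_)
        (hT ▸ Subgroup.mem_top y)
      have := hQ _ x hx t ht
      rwa [show K - (j + 1) + 1 = K - j by omega] at this
  refine ⟨K, ?_⟩
  rw [eq_top_iff, ← hT, Subgroup.closure_le]
  exact hTQ.trans (by simpa using key K le_rfl)

theorem isVirtuallyNilpotent_closure_of_iterated_commutators {T : Set G} {Q : ℕ → Set G} {K : ℕ}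
    (hTQ : T ⊆ Q 0) (hQ : ∀ k, ∀ g ∈ Q k, ∀ t ∈ T, ⁅g, t⁆ ∈ Q (k + 1))
    (H : Subgroup G) [Finite H] (hK : Q K ⊆ H) (hH : H ≤ Subgroup.closure T)
    (hconj : ∀ t ∈ T, ∀ h ∈ H, t * h * t⁻¹ ∈ H) :
    IsVirtuallyNilpotent (Subgroup.closure T) := by
  let N := Subgroup.closure T
  let H' : Subgroup N := H.subgroupOf N
  have hnorm : N ≤ Subgroup.normalizer (H : Set G) :=
    (Subgroup.closure_le _).2 fun t ht => Subgroup.mem_normalizer_fintype (hconj t ht)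
  have : H'.Normal := (Subgroup.normal_subgroupOf_iff_le_normalizer hH).2 hnorm
  have : Finite H' := Finite.of_equiv _ (Subgroup.subgroupOfEquivOfLe hH).symm.toEquiv
  let T' : Set N := Subtype.val ⁻¹' T
  have hT' : Subgroup.closure (QuotientGroup.mk' H' '' T') = ⊤ := by
    rw [← MonoidHom.map_closure, Subgroup.closure_closure_coe_preimage]
    exact Subgroup.map_top_of_surjective _ (QuotientGroup.mk'_surjective _)
  have : Group.IsNilpotent (N ⧸ H') := by
    refine isNilpotent_of_iterated_commutators (K := K) hT'
      (Q := fun k => QuotientGroup.mk' H' '' (Subtype.val ⁻¹' Q k)) ?_ ?_ ?_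
    · exact Set.image_mono (Set.preimage_mono hTQ)
    · rintro _ ⟨x, hx, rfl⟩
      exact (QuotientGroup.eq_one_iff x).2 (hK hx)
    · rintro k _ ⟨g, hg, rfl⟩ _ ⟨t, ht, rfl⟩
      exact ⟨⁅g, t⁆, hQ k g hg t ht, map_commutatorElement _ _ _⟩
  exact isVirtuallyNilpotent_of_finite_normal H'

lemma exists_succ_subset_of_ncard_le {α : Type*} {s : ℕ → Set α} (hs : Monotone s)
    (h0 : (s 0).Nonempty) {t : Set α} (ht : t.Finite) {c : ℕ} (hst : s c ⊆ t)
    (hc : t.ncard ≤ c) : ∃ i < c, s (i + 1) ⊆ s i := by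
  by_contra! hcon
  have hfin : ∀ i ≤ c, (s i).Finite := fun i hi => ht.subset ((hs hi).trans hst)
  have hcard : ∀ i ≤ c, i + 1 ≤ (s i).ncard := by
    intro i
    induction i with
    | zero => exact fun _ => (Set.ncard_pos (hfin 0 (by omega))).2 h0
    | succ i ih =>
      intro hi
      have := Set.ncard_lt_ncard (t := s (i + 1)) ⟨hs i.le_succ, hcon i hi⟩ (hfin _ hi)
      have := ih (by omega)
      omega
  have := hcard c le_rfl
  have := Set.ncard_le_ncard hst ht
  omega

lemma subgroupOf_finiteIndex_of_finite_image (K N : Subgroup G)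
    (h : ((QuotientGroup.mk : G → G ⧸ N) '' K).Finite) : (N.subgroupOf K).FiniteIndex := by
  have hsmul : ∀ k : K, k • ((1 : G) : G ⧸ N) = ((k : G) : G ⧸ N) := fun k =>
    congrArg QuotientGroup.mk (mul_one (k : G))
  have horbit : MulAction.orbit K ((1 : G) : G ⧸ N) = QuotientGroup.mk '' (K : Set G) := by
    ext u
    simp [MulAction.mem_orbit_iff, hsmul]
  have hstab : MulAction.stabilizer K ((1 : G) : G ⧸ N) = N.subgroupOf K := by
    ext k
    rw [MulAction.mem_stabilizer_iff, Subgroup.mem_subgroupOf, hsmul, eq_comm, QuotientGroup.eq,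
      inv_one, one_mul]
  rw [← hstab, Subgroup.finiteIndex_iff, MulAction.index_stabilizer, horbit]
  exact ((Set.ncard_pos h).2 ⟨_, 1, one_mem K, rfl⟩).ne'

-- The images of `E ^ n` in `G ⧸ N` stabilize at some `n < c`, and the stable image contains the
-- orbit of the trivial coset under the group generated by `E`.
theorem isVirtuallyNilpotent_closure_of_ncard_cosets_le {N : Subgroup G}
    (hN : IsVirtuallyNilpotent N) {E S : Set G} (h1 : 1 ∈ E) {c : ℕ} (hES : E ^ c ⊆ S)
    (hfin : ((QuotientGroup.mk : G → G ⧸ N) '' S).Finite)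
    (hcard : ((QuotientGroup.mk : G → G ⧸ N) '' S).ncard ≤ c) :
    IsVirtuallyNilpotent (Subgroup.closure E) := by
  let q : G → G ⧸ N := QuotientGroup.mk
  have hmono : Monotone fun i => q '' E ^ i := fun _ _ hij =>
    Set.image_mono (Set.pow_subset_pow_right h1 hij)
  obtain ⟨i, hi, hstable⟩ := exists_succ_subset_of_ncard_le hmono ⟨q 1, 1, by simp, rfl⟩ hfin
    (Set.image_mono hES) hcard
  have hfin_i : (q '' E ^ i).Finite := hfin.subset ((hmono hi.le).trans (Set.image_mono hES))
  have hE : Subgroup.closure E ≤ MulAction.stabilizer G (q '' E ^ i) := by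
    refine (Subgroup.closure_le _).2 fun g hg =>
      (MulAction.mem_stabilizer_set_iff_smul_set_subset hfin_i).2 ?_
    rintro _ ⟨_, ⟨w, hw, rfl⟩, rfl⟩
    exact hstable ⟨g * w, pow_succ' E i ▸ Set.mul_mem_mul hg hw, rfl⟩
  have himage : q '' (Subgroup.closure E : Set G) ⊆ q '' E ^ i := by
    rintro _ ⟨g, hg, rfl⟩
    have hmem := Set.smul_mem_smul_set (a := g)
      (Set.mem_image_of_mem q (Set.one_mem_pow h1 (n := i)))
    rwa [MulAction.mem_stabilizer_iff.1 (hE hg), MulAction.Quotient.smul_mk, smul_eq_mul,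
      mul_one] at hmem
  have hindex := subgroupOf_finiteIndex_of_finite_image (Subgroup.closure E) N
    (hfin_i.subset himage)
  refine IsVirtuallyNilpotent.of_finiteIndex (hN.of_injective
    (((Subgroup.closure E).subtype.comp (N.subgroupOf _).subtype).codRestrict N fun x => x.2)
    fun a b hab => ?_) hindex
  exact Subtype.ext (Subtype.ext (congrArg (Subtype.val : N → G) hab))

end VirtuallyNilpotent

/-! ### Length functions -/

section Seminorm

variable {G : Type*} [Group G]

lemma groupSeminorm_list_prod_le (ℓ : GroupSeminorm G) (l : List G) :
    ℓ l.prod ≤ (l.map ℓ).sum := by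
  induction l with
  | nil => simp [map_one_eq_zero]
  | cons g l ih =>
    rw [List.prod_cons, List.map_cons, List.sum_cons]
    exact (map_mul_le_add ℓ g l.prod).trans (by gcongr)

lemma groupSeminorm_pow_le (ℓ : GroupSeminorm G) (g : G) (i : ℕ) : ℓ (g ^ i) ≤ i * ℓ g := by
  simpa using groupSeminorm_list_prod_le ℓ (List.replicate i g)

lemma groupSeminorm_conj_le (ℓ : GroupSeminorm G) (y g : G) :
    ℓ (y⁻¹ * g * y) ≤ ℓ g + 2 * ℓ y := by
  have h₁ := map_mul_le_add ℓ (y⁻¹ * g) y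
  have h₂ := map_mul_le_add ℓ y⁻¹ g
  rw [map_inv_eq_map] at h₂
  linarith

lemma bddAbove_range_conj (ℓ : GroupSeminorm G) (ρ : ℝ) (g : G) :
    BddAbove (Set.range fun y : {y : G // ℓ y ≤ ρ} => ℓ (y.1⁻¹ * g * y.1)) := by
  refine ⟨ℓ g + 2 * ρ, ?_⟩
  rintro _ ⟨y, rfl⟩
  exact (groupSeminorm_conj_le ℓ y.1 g).trans (by gcongr; exact y.2)

/-- The length function `g ↦ sup ℓ (y⁻¹ g y)` over the `y` with `ℓ y ≤ ρ`: the largest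
displacement of `g` on the `ρ`-ball, for the left-invariant pseudometric `ℓ (a⁻¹ b)`.
It is `0` if `ρ < 0`. -/
noncomputable def conjSup (ℓ : GroupSeminorm G) (ρ : ℝ) : GroupSeminorm G where
  toFun g := ⨆ y : {y : G // ℓ y ≤ ρ}, ℓ (y.1⁻¹ * g * y.1)
  map_one' := by simp [map_one_eq_zero]
  mul_le' g h := by
    refine Real.iSup_le (fun y => ?_) (add_nonneg (Real.iSup_nonneg fun _ => apply_nonneg _ _)
      (Real.iSup_nonneg fun _ => apply_nonneg _ _))
    rw [show y.1⁻¹ * (g * h) * y.1 = y.1⁻¹ * g * y.1 * (y.1⁻¹ * h * y.1) by group]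
    exact (map_mul_le_add ℓ _ _).trans (add_le_add (le_ciSup (bddAbove_range_conj ℓ ρ g) y)
      (le_ciSup (bddAbove_range_conj ℓ ρ h) y))
  inv' g := by
    congr 1
    ext y
    rw [← map_inv_eq_map ℓ]
    congr 1
    group

lemma le_conjSup (ℓ : GroupSeminorm G) {ρ : ℝ} {y : G} (hy : ℓ y ≤ ρ) (g : G) :
    ℓ (y⁻¹ * g * y) ≤ conjSup ℓ ρ g :=
  le_ciSup (bddAbove_range_conj ℓ ρ g) ⟨y, hy⟩

lemma conjSup_le (ℓ : GroupSeminorm G) {ρ c : ℝ} (hc : 0 ≤ c) {g : G}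
    (h : ∀ y, ℓ y ≤ ρ → ℓ (y⁻¹ * g * y) ≤ c) : conjSup ℓ ρ g ≤ c :=
  Real.iSup_le (fun y => h y.1 y.2) hc

lemma self_le_conjSup (ℓ : GroupSeminorm G) {ρ : ℝ} (hρ : 0 ≤ ρ) (g : G) :
    ℓ g ≤ conjSup ℓ ρ g := by
  simpa using le_conjSup ℓ (y := 1) ((map_one_eq_zero ℓ).trans_le hρ) g

lemma conjSup_mono (ℓ : GroupSeminorm G) {ρ s : ℝ} (hρs : ρ ≤ s) (g : G) :
    conjSup ℓ ρ g ≤ conjSup ℓ s g :=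
  conjSup_le ℓ (apply_nonneg _ _) fun _ hy => le_conjSup ℓ (hy.trans hρs) g

lemma conjSup_conj_le (ℓ : GroupSeminorm G) {ρ s t : ℝ} {y : G} (hy : ℓ y ≤ s)
    (ht : ρ + s ≤ t) (g : G) : conjSup ℓ ρ (y⁻¹ * g * y) ≤ conjSup ℓ t g := by
  refine conjSup_le ℓ (apply_nonneg _ _) fun z hz => ?_
  have hyz : ℓ (y * z) ≤ t := by
    have := map_mul_le_add ℓ y z
    linarith
  rw [show z⁻¹ * (y⁻¹ * g * y) * z = (y * z)⁻¹ * g * (y * z) by group]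
  exact le_conjSup ℓ hyz g

/-- Quantitative total boundedness: for every `δ > 0` the `ℓ`-ball of radius `R` can be coloured
with `C δ` colours so that `ν (g⁻¹ h) ≤ δ` whenever `g` and `h` have the same colour. -/
def HasSmallPartitions (ℓ ν : GroupSeminorm G) (R : ℝ) (C : ℝ → ℕ) : Prop :=
  ∀ δ > 0, ∃ κ : G → Fin (C δ), ∀ g h, ℓ g ≤ R → ℓ h ≤ R → κ g = κ h → ν (g⁻¹ * h) ≤ δ

-- Colour `g` by the map sending a colour class of the `ρ`-ball, represented by `z`, to the colour
-- of `g * z`.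
theorem HasSmallPartitions.conjSup {ℓ : GroupSeminorm G} {R S ρ : ℝ} {C : ℝ → ℕ}
    (h : HasSmallPartitions ℓ ℓ R C) (hρ : ρ ≤ R) (hS : S + ρ ≤ R) :
    HasSmallPartitions ℓ (conjSup ℓ ρ) S fun δ => C (δ / 3) ^ C (δ / 3) := by
  classical
  intro δ hδ
  obtain ⟨κ, hκ⟩ := h (δ / 3) (by positivity)
  let rep : Fin (C (δ / 3)) → G := fun j => if hj : ∃ y, ℓ y ≤ ρ ∧ κ y = j then hj.choose else 1
  have hrep : ∀ y, ℓ y ≤ ρ → ℓ (rep (κ y)) ≤ ρ ∧ κ (rep (κ y)) = κ y := fun y hy => by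
    have hex : ∃ z, ℓ z ≤ ρ ∧ κ z = κ y := ⟨y, hy, rfl⟩
    simpa only [rep, dif_pos hex] using hex.choose_spec
  refine ⟨fun g => finFunctionFinEquiv fun j => κ (g * rep j), fun g h hg hh hgh => ?_⟩
  refine conjSup_le ℓ hδ.le fun y hy => ?_
  obtain ⟨hz, hκz⟩ := hrep y hy
  have hgz : κ (g * rep (κ y)) = κ (h * rep (κ y)) :=
    congrFun (finFunctionFinEquiv.injective hgh) (κ y)
  set z := rep (κ y)
  have hmid := hκ (g * z) (h * z) ((map_mul_le_add ℓ g z).trans (by linarith))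
    ((map_mul_le_add ℓ h z).trans (by linarith)) hgz
  have hleft := hκ y z (hy.trans hρ) (hz.trans hρ) hκz.symm
  have hright := hκ z y (hz.trans hρ) (hy.trans hρ) hκz
  calc ℓ (y⁻¹ * (g⁻¹ * h) * y) = ℓ (y⁻¹ * z * ((g * z)⁻¹ * (h * z)) * (z⁻¹ * y)) := by
        congr 1; group
    _ ≤ ℓ (y⁻¹ * z) + ℓ ((g * z)⁻¹ * (h * z)) + ℓ (z⁻¹ * y) :=
        (map_mul_le_add ℓ _ _).trans (by gcongr; exact map_mul_le_add ℓ _ _)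
    _ ≤ δ := by linarith

lemma HasSmallPartitions.card_le {ℓ ν : GroupSeminorm G} {R δ : ℝ} {C : ℝ → ℕ}
    (h : HasSmallPartitions ℓ ν R C) (hδ : 0 < δ) {A V : Finset G} (hA : ∀ g ∈ A, ℓ g ≤ R)
    (hV : ∀ g, ν g ≤ δ → g ∈ V) : (A.card : ℝ) ≤ C δ * V.card := by
  classical
  obtain ⟨κ, hκ⟩ := h δ hδ
  have hclass : ∀ j ∈ Finset.univ, (A.filter fun g => κ g = j).card ≤ V.card := by
    intro j _
    rcases (A.filter fun g => κ g = j).eq_empty_or_nonempty with h0 | ⟨g, hg⟩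
    · simp [h0]
    · rw [Finset.mem_filter] at hg
      refine Finset.card_le_card_of_injOn (g⁻¹ * ·) (fun a ha => ?_)
        (mul_right_injective g⁻¹).injOn
      rw [Finset.coe_filter] at ha
      exact hV _ (hκ g a (hA g hg.1) (hA a ha.1) (hg.2.trans ha.2.symm))
  have := Finset.card_le_mul_card_image_of_maps_to (fun g _ => Finset.mem_univ (κ g)) _ hclass
  rw [Finset.card_univ, Fintype.card_fin, mul_comm] at this
  exact_mod_cast this

lemma HasSmallPartitions.ncard_cosets_le {ℓ ν : GroupSeminorm G} {R δ : ℝ} {C : ℝ → ℕ}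
    (h : HasSmallPartitions ℓ ν R C) (hδ : 0 < δ) {N : Subgroup G} (hN : ∀ g, ν g ≤ δ → g ∈ N) :
    ((QuotientGroup.mk : G → G ⧸ N) '' {g | ℓ g ≤ R}).Finite ∧
      ((QuotientGroup.mk : G → G ⧸ N) '' {g | ℓ g ≤ R}).ncard ≤ C δ := by
  obtain ⟨κ, hκ⟩ := h δ hδ
  let f : ↥((QuotientGroup.mk : G → G ⧸ N) '' {g | ℓ g ≤ R}) → Fin (C δ) := fun u => κ u.2.choose
  have hf : Function.Injective f := by
    intro u v huv
    have hcoset := QuotientGroup.eq.2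
      (hN _ (hκ _ _ u.2.choose_spec.1 v.2.choose_spec.1 huv))
    rw [u.2.choose_spec.2, v.2.choose_spec.2] at hcoset
    exact Subtype.ext hcoset
  have := Finite.of_injective f hf
  refine ⟨Set.toFinite _, ?_⟩
  rw [← Nat.card_coe_set_eq]
  simpa using Nat.card_le_card_of_injective f hf

end Seminorm

lemma le_sum_map_of_mem {α : Type*} {ω : α → ℝ} (h0 : ∀ a, 0 ≤ ω a) {l : List α} {a : α}
    (ha : a ∈ l) : ω a ≤ (l.map ω).sum :=
  List.single_le_sum (by simpa using fun a _ => h0 a) _ (List.mem_map_of_mem ha)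

section WordSeminorm

variable {G : Type*} [Group G] (ω : G → ℝ)

lemma bddBelow_range_weight (h0 : ∀ g, 0 ≤ ω g) (z : G) :
    BddBelow (Set.range fun l : {l : List G // l.prod = z} => (l.1.map ω).sum) := by
  refine ⟨0, ?_⟩
  rintro _ ⟨l, rfl⟩
  exact List.sum_nonneg (by simp [h0])

variable (h0 : ∀ g, 0 ≤ ω g) (hinv : ∀ g, ω g⁻¹ = ω g)

/-- The word length associated with a symmetric weight `ω`: the infimum of the total weights of
the words representing an element. -/
noncomputable def wordSeminorm : GroupSeminorm G where
  toFun z := ⨅ l : {l : List G // l.prod = z}, (l.1.map ω).sum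
  map_one' := by
    refine le_antisymm ?_ (Real.iInf_nonneg fun l => List.sum_nonneg (by simp [h0]))
    exact ciInf_le_of_le (bddBelow_range_weight ω h0 1) ⟨[], rfl⟩ (by simp)
  mul_le' g h := by
    have : ∀ z, Nonempty {l : List G // l.prod = z} := fun z => ⟨[z], by simp⟩
    refine le_ciInf_add_ciInf fun l m => ?_
    exact ciInf_le_of_le (bddBelow_range_weight ω h0 _)
      ⟨l.1 ++ m.1, by rw [List.prod_append, l.2, m.2]⟩ (by simp)
  inv' g := by
    have inv_le : ∀ z : G, (⨅ l : {l : List G // l.prod = z⁻¹}, (l.1.map ω).sum) ≤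
        ⨅ l : {l : List G // l.prod = z}, (l.1.map ω).sum := by
      intro z
      have : Nonempty {l : List G // l.prod = z} := ⟨[z], by simp⟩
      refine le_ciInf fun l => ciInf_le_of_le (bddBelow_range_weight ω h0 _)
        ⟨(l.1.map fun x => x⁻¹).reverse, by rw [← List.prod_inv_reverse, l.2]⟩ ?_
      rw [List.map_reverse, List.sum_reverse, List.map_map]
      exact (congrArg List.sum (List.map_congr_left fun x _ => hinv x)).le
    have hle := inv_le g⁻¹
    rw [inv_inv] at hle
    exact le_antisymm (inv_le g) hle

lemma wordSeminorm_le (g : G) : wordSeminorm ω h0 hinv g ≤ ω g :=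
  ciInf_le_of_le (bddBelow_range_weight ω h0 g) ⟨[g], by simp⟩ (by simp)

lemma exists_list_of_wordSeminorm_lt {z : G} {c : ℝ} (h : wordSeminorm ω h0 hinv z < c) :
    ∃ l : List G, l.prod = z ∧ (l.map ω).sum < c := by
  have : Nonempty {l : List G // l.prod = z} := ⟨[z], by simp⟩
  obtain ⟨l, hl⟩ := exists_lt_of_ciInf_lt h
  exact ⟨l.1, l.2, hl⟩

end WordSeminorm

/-! ### Gleason's convolution argument -/

section Plateau

variable {G : Type*} [Group G] (lam σ : GroupSeminorm G) {a : ℝ}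

/-- The function `y ↦ sup (1 - lam (y * s))⁺` over the `σ`-ball of radius `a`. It equals `1` on
this ball, vanishes off the product of the open unit ball of `lam` with it, and its left translates
by `g` differ from it by at most `lam g`. -/
noncomputable def plateau (a : ℝ) (y : G) : ℝ :=
  ⨆ s : {s : G // σ s ≤ a}, max (1 - lam (y * s.1)) 0

lemma bddAbove_range_plateau (a : ℝ) (y : G) :
    BddAbove (Set.range fun s : {s : G // σ s ≤ a} => max (1 - lam (y * s.1)) 0) := by
  refine ⟨1, ?_⟩
  rintro _ ⟨s, rfl⟩
  exact max_le (by linarith [apply_nonneg lam (y * s.1)]) zero_le_one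

lemma plateau_nonneg (a : ℝ) (y : G) : 0 ≤ plateau lam σ a y :=
  Real.iSup_nonneg fun _ => le_max_right _ _

lemma plateau_le_one (a : ℝ) (y : G) : plateau lam σ a y ≤ 1 :=
  Real.iSup_le (fun s => max_le (by linarith [apply_nonneg lam (y * s.1)]) zero_le_one) zero_le_one

lemma abs_plateau_le_one (a : ℝ) (y : G) : |plateau lam σ a y| ≤ 1 := by
  rw [abs_of_nonneg (plateau_nonneg lam σ a y)]
  exact plateau_le_one lam σ a y

lemma one_sub_le_plateau {s : G} (hs : σ s ≤ a) (y : G) :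
    1 - lam (y * s) ≤ plateau lam σ a y :=
  (le_max_left _ _).trans (le_ciSup (bddAbove_range_plateau lam σ a y) ⟨s, hs⟩)

lemma plateau_eq_one {y : G} (hy : σ y ≤ a) : plateau lam σ a y = 1 := by
  refine le_antisymm (plateau_le_one lam σ a y) ?_
  simpa [map_one_eq_zero] using
    one_sub_le_plateau lam σ (a := a) (s := y⁻¹) (by rwa [map_inv_eq_map]) y

lemma exists_eq_mul_of_plateau_ne_zero {y : G} (h : plateau lam σ a y ≠ 0) :
    ∃ w s, lam w < 1 ∧ σ s ≤ a ∧ y = w * s := by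
  contrapose! h
  refine le_antisymm (Real.iSup_le (fun s => max_le ?_ le_rfl) le_rfl) (plateau_nonneg lam σ a y)
  by_contra! hs
  exact h (y * s.1) s.1⁻¹ (by linarith) (by rw [map_inv_eq_map]; exact s.2) (by group)

lemma abs_plateau_inv_mul_sub_le (a : ℝ) (g y : G) :
    |plateau lam σ a (g⁻¹ * y) - plateau lam σ a y| ≤ lam g := by
  have le_add : ∀ g y, plateau lam σ a (g⁻¹ * y) ≤ plateau lam σ a y + lam g := by
    intro g y
    have hnonneg := add_nonneg (plateau_nonneg lam σ a y) (apply_nonneg lam g)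
    refine Real.iSup_le (fun s => max_le ?_ hnonneg) hnonneg
    have hs := one_sub_le_plateau lam σ s.2 y
    have hmul := map_mul_le_add lam g (g⁻¹ * y * s.1)
    rw [show g * (g⁻¹ * y * s.1) = y * s.1 by group] at hmul
    linarith
  have hle := le_add g y
  have hge := le_add g⁻¹ (g⁻¹ * y)
  rw [inv_inv, mul_inv_cancel_left, map_inv_eq_map] at hge
  rw [abs_sub_le_iff]
  constructor <;> linarith

/-- The tent function of radius `a` for the length function `σ`. -/
noncomputable def tent (a : ℝ) (u : G) : ℝ := max (1 - σ u / a) 0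

lemma tent_nonneg (a : ℝ) (u : G) : 0 ≤ tent σ a u := le_max_right _ _

lemma abs_tent_mul_sub_le (ha : 0 < a) (k u : G) : |tent σ a (k * u) - tent σ a u| ≤ σ k / a := by
  have hle := map_mul_le_add σ k u
  have hge := map_mul_le_add σ k⁻¹ (k * u)
  rw [inv_mul_cancel_left, map_inv_eq_map] at hge
  calc |tent σ a (k * u) - tent σ a u| ≤ |1 - σ (k * u) / a - (1 - σ u / a)| :=
        abs_max_sub_max_le_abs _ _ 0
    _ = |σ u - σ (k * u)| / a := by
        rw [← abs_of_pos ha, ← abs_div, abs_of_pos ha]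
        ring_nf
    _ ≤ σ k / a := by
        gcongr
        rw [abs_sub_le_iff]
        constructor <;> linarith

lemma lt_of_tent_ne_zero (ha : 0 < a) {u : G} (h : tent σ a u ≠ 0) : σ u < a := by
  contrapose! h
  refine max_eq_right ?_
  rwa [sub_nonpos, one_le_div₀ ha]

end Plateau

section Convolution

variable {G : Type*} [Group G] {F : Finset G} {φ η : G → ℝ}

/-- The convolution `φ * η`, when `φ` is supported on the finite set `F`. -/
noncomputable def convOn (F : Finset G) (φ η : G → ℝ) (z : G) : ℝ :=
  ∑ y ∈ F, φ y * η (y⁻¹ * z)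

lemma exists_of_convOn_ne_zero {z : G} (h : convOn F φ η z ≠ 0) :
    ∃ y, φ y ≠ 0 ∧ η (y⁻¹ * z) ≠ 0 := by
  obtain ⟨y, _, hy⟩ := Finset.exists_ne_zero_of_sum_ne_zero h
  exact ⟨y, left_ne_zero_of_mul hy, right_ne_zero_of_mul hy⟩

lemma convOn_eq_of_subset {E : Finset G} (hFE : F ⊆ E) (hF : Function.support φ ⊆ F)
    (η : G → ℝ) (z : G) : convOn F φ η z = convOn E φ η z := by
  refine Finset.sum_subset hFE fun y _ hy => ?_
  rw [Function.notMem_support.1 fun h => hy (hF h), zero_mul]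

open Classical in
lemma convOn_inv_mul_sub (hF : Function.support φ ⊆ F) (η : G → ℝ) (g z : G) :
    convOn F φ η (g⁻¹ * z) - convOn F φ η z =
      convOn (F ∪ F.image (g * ·)) (fun y => φ (g⁻¹ * y) - φ y) η z := by
  have htranslate : convOn F φ η (g⁻¹ * z) =
      convOn (F ∪ F.image (g * ·)) (fun y => φ (g⁻¹ * y)) η z := by
    rw [← convOn_eq_of_subset (F := F.image (g * ·)) Finset.subset_union_right]
    · unfold convOn
      rw [Finset.sum_image (mul_right_injective g).injOn]
      simp only [inv_mul_cancel_left, mul_inv_rev, mul_assoc]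
    · intro y hy
      exact Finset.mem_coe.2 (Finset.mem_image.2 ⟨_, hF hy, mul_inv_cancel_left g y⟩)
  rw [htranslate, convOn_eq_of_subset (E := F ∪ F.image (g * ·)) Finset.subset_union_left hF]
  simp only [convOn, sub_mul, Finset.sum_sub_distrib]

lemma abs_convOn_inv_mul_sub_le (k : G) {b c : ℝ} (hφ : ∀ y ∈ F, |φ y| ≤ b)
    (hη : ∀ y ∈ F, ∀ u, |η (y⁻¹ * k⁻¹ * y * u) - η u| ≤ c) (z : G) :
    |convOn F φ η (k⁻¹ * z) - convOn F φ η z| ≤ F.card * (b * c) := by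
  rw [convOn, convOn, ← Finset.sum_sub_distrib, ← nsmul_eq_mul]
  refine (Finset.abs_sum_le_sum_abs _ _).trans (Finset.sum_le_card_nsmul _ _ _ fun y hy => ?_)
  have hyz := hη y hy (y⁻¹ * z)
  rw [show y⁻¹ * k⁻¹ * y * (y⁻¹ * z) = y⁻¹ * (k⁻¹ * z) by group] at hyz
  rw [← mul_sub, abs_mul]
  exact mul_le_mul (hφ y hy) hyz (abs_nonneg _) ((abs_nonneg _).trans (hφ y hy))

-- One difference falls on `φ`, the other on `η`: the product of two small factors.
lemma abs_convOn_second_difference_le (hF : Function.support φ ⊆ F) (g k : G) {b c : ℝ}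
    (hc : 0 ≤ c) (hφ : ∀ y, |φ (g⁻¹ * y) - φ y| ≤ b)
    (hη : ∀ y ∈ F, ∀ u, |η (y⁻¹ * k⁻¹ * y * u) - η u| ≤ c ∧
      |η ((g * y)⁻¹ * k⁻¹ * (g * y) * u) - η u| ≤ c) (z : G) :
    |(convOn F φ η (g⁻¹ * (k⁻¹ * z)) - convOn F φ η (k⁻¹ * z)) -
      (convOn F φ η (g⁻¹ * z) - convOn F φ η z)| ≤ 2 * F.card * (b * c) := by
  classical
  have hb : 0 ≤ b := (abs_nonneg _).trans (hφ 1)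
  have hcard : ((F ∪ F.image (g * ·)).card : ℝ) ≤ 2 * F.card := by
    have hunion := Finset.card_union_le F (F.image (g * ·))
    have himage := Finset.card_image_le (s := F) (f := (g * ·))
    exact_mod_cast (by omega : (F ∪ F.image (g * ·)).card ≤ 2 * F.card)
  rw [convOn_inv_mul_sub hF, convOn_inv_mul_sub hF]
  refine (abs_convOn_inv_mul_sub_le k (fun y _ => hφ y) (fun y hy u => ?_) z).trans
    (mul_le_mul_of_nonneg_right hcard (by positivity))
  rcases Finset.mem_union.1 hy with hy | hy
  · exact (hη y hy u).1
  · obtain ⟨x, hx, rfl⟩ := Finset.mem_image.1 hy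
    exact (hη x hx u).2

end Convolution

section Translation

variable {G : Type*} [Group G] (ψ : G → ℝ)

lemma abs_inv_list_prod_mul_sub_le (ω : G → ℝ) {c : ℝ} {l : List G}
    (h : ∀ g ∈ l, ∀ z, |ψ (g⁻¹ * z) - ψ z| ≤ c * ω g) (z : G) :
    |ψ (l.prod⁻¹ * z) - ψ z| ≤ c * (l.map ω).sum := by
  induction l generalizing z with
  | nil => simp
  | cons g l ih =>
    have hg := h g (by simp) z
    have hl := ih (fun g' hg' => h g' (List.mem_cons_of_mem _ hg')) (g⁻¹ * z)
    rw [List.prod_cons, mul_inv_rev, mul_assoc, List.map_cons, List.sum_cons, mul_add]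
    have := abs_sub_le (ψ (l.prod⁻¹ * (g⁻¹ * z))) (ψ (g⁻¹ * z)) (ψ z)
    linarith

-- Telescope along the powers of `g`: `n ∂_g ψ` is `∂_{g ^ n} ψ` up to second differences.
lemma natCast_mul_abs_inv_mul_sub_le (g : G) (n : ℕ) {P R : ℝ}
    (hP : ∀ z, |ψ ((g ^ n)⁻¹ * z) - ψ z| ≤ P)
    (hR : ∀ i < n, ∀ z, |(ψ (g⁻¹ * ((g ^ i)⁻¹ * z)) - ψ ((g ^ i)⁻¹ * z)) -
      (ψ (g⁻¹ * z) - ψ z)| ≤ R) (z : G) :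
    n * |ψ (g⁻¹ * z) - ψ z| ≤ P + n * R := by
  have htelescope : ∑ i ∈ Finset.range n, (ψ (g⁻¹ * ((g ^ i)⁻¹ * z)) - ψ ((g ^ i)⁻¹ * z)) =
      ψ ((g ^ n)⁻¹ * z) - ψ z := by
    simpa [pow_succ, mul_assoc] using Finset.sum_range_sub (fun i => ψ ((g ^ i)⁻¹ * z)) n
  have hsum : (n : ℝ) * (ψ (g⁻¹ * z) - ψ z) = (ψ ((g ^ n)⁻¹ * z) - ψ z) -
      ∑ i ∈ Finset.range n, ((ψ (g⁻¹ * ((g ^ i)⁻¹ * z)) - ψ ((g ^ i)⁻¹ * z)) -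
        (ψ (g⁻¹ * z) - ψ z)) := by
    rw [Finset.sum_sub_distrib, htelescope]
    simp [mul_sub]
  rw [← Nat.abs_cast n, ← abs_mul, Nat.abs_cast, hsum]
  refine (abs_sub _ _).trans (add_le_add (hP z) ((Finset.abs_sum_le_sum_abs _ _).trans ?_))
  simpa using Finset.sum_le_card_nsmul _ _ R fun i hi => hR i (Finset.mem_range.1 hi) z

end Translation

section Escape

variable {G : Type*} [Group G] (lam σ : GroupSeminorm G) {a : ℝ} {F : Finset G}

lemma abs_convOn_plateau_tent_inv_mul_sub_le {ε w : ℝ} (ha : 0 < a)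
    (hF : Function.support (plateau lam σ a) ⊆ F) (g : G) (n : ℕ) (hn : 0 < n) (hε₀ : 0 ≤ ε)
    (hε : ∀ i ≤ n, ∀ y ∈ F, σ (y⁻¹ * g ^ i * y) ≤ ε) (hw : lam g ≤ w) (hnw : 1 ≤ n * w) (z : G) :
    |convOn F (plateau lam σ a) (tent σ a) (g⁻¹ * z) - convOn F (plateau lam σ a) (tent σ a) z| ≤
      3 * F.card * ε / a * w := by
  have htent : ∀ i ≤ n, ∀ y ∈ F, ∀ u,
      |tent σ a (y⁻¹ * (g ^ i)⁻¹ * y * u) - tent σ a u| ≤ ε / a := by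
    intro i hi y hy u
    refine (abs_tent_mul_sub_le σ ha _ u).trans ?_
    rw [show y⁻¹ * (g ^ i)⁻¹ * y = (y⁻¹ * g ^ i * y)⁻¹ by group, map_inv_eq_map]
    gcongr
    exact hε i hi y hy
  have hfirst := abs_convOn_inv_mul_sub_le (g ^ n) (fun y _ => abs_plateau_le_one lam σ a y)
    (htent n le_rfl)
  have hsecond : ∀ i < n, ∀ z, _ := fun i hi =>
    abs_convOn_second_difference_le (η := tent σ a) hF g (g ^ i) (c := ε / a) (by positivity)
      (fun y => (abs_plateau_inv_mul_sub_le lam σ a g y).trans hw) fun y hy u => by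
        refine ⟨htent i hi.le y hy u, ?_⟩
        rw [show (g * y)⁻¹ * (g ^ i)⁻¹ * (g * y) = y⁻¹ * (g⁻¹ * (g ^ i)⁻¹ * g) * y by group,
          show g⁻¹ * (g ^ i)⁻¹ * g = (g ^ i)⁻¹ by group]
        exact htent i hi.le y hy u
  refine le_of_mul_le_mul_left ((natCast_mul_abs_inv_mul_sub_le _ g n hfirst hsecond z).trans ?_)
    (Nat.cast_pos.2 hn)
  calc F.card * (1 * (ε / a)) + n * (2 * F.card * (w * (ε / a)))
      = 1 * (F.card * (ε / a)) + n * (2 * F.card * (w * (ε / a))) := by ring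
    _ ≤ n * w * (F.card * (ε / a)) + n * (2 * F.card * (w * (ε / a))) := by gcongr
    _ = n * (3 * F.card * ε / a * w) := by ring

lemma card_div_two_le_convOn_plateau_tent_one (ha : 0 < a) {V : Finset G}
    (hF : Function.support (plateau lam σ a) ⊆ F) (hV : ∀ y ∈ V, σ y ≤ a / 2) :
    (V.card : ℝ) / 2 ≤ convOn F (plateau lam σ a) (tent σ a) 1 := by
  have hplateau : ∀ y ∈ V, plateau lam σ a y = 1 := fun y hy =>
    plateau_eq_one lam σ ((hV y hy).trans (by linarith))
  have hVF : V ⊆ F := fun y hy => hF (by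
    rw [Function.mem_support, hplateau y hy]
    exact one_ne_zero)
  have hterm : ∀ y ∈ V, (1 / 2 : ℝ) ≤ plateau lam σ a y * tent σ a (y⁻¹ * 1) := by
    intro y hy
    have : σ y / a ≤ 1 / 2 := by
      rw [div_le_iff₀ ha]
      linarith [hV y hy]
    rw [hplateau y hy, one_mul, mul_one]
    refine le_max_of_le_left ?_
    rw [map_inv_eq_map]
    linarith
  calc (V.card : ℝ) / 2 = V.card • (1 / 2 : ℝ) := by
        rw [nsmul_eq_mul]
        ring
    _ ≤ ∑ y ∈ V, plateau lam σ a y * tent σ a (y⁻¹ * 1) := Finset.card_nsmul_le_sum _ _ _ hterm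
    _ ≤ convOn F (plateau lam σ a) (tent σ a) 1 :=
        Finset.sum_le_sum_of_subset_of_nonneg hVF fun y _ _ =>
          mul_nonneg (plateau_nonneg lam σ a y) (tent_nonneg σ a _)

-- The word moves `plateau * tent` by less than its value at `1`, so the product of the word lies
-- in its support.
theorem exists_list_prod_eq_mul_of_sum_le {ε L : ℝ} (ha : 0 < a) {V : Finset G}
    (hF : ∀ w s, lam w < 1 → σ s ≤ a → w * s ∈ F)
    (hV : ∀ y ∈ V, σ y ≤ a / 2) (ω : G → ℝ) (hε₀ : 0 ≤ ε)
    (hsmall : 6 * F.card * ε * L < a * V.card) {l : List G}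
    (hl : ∀ g ∈ l, lam g ≤ ω g ∧ ∃ n : ℕ, 0 < n ∧ 1 ≤ n * ω g ∧
      ∀ i ≤ n, ∀ y ∈ F, σ (y⁻¹ * g ^ i * y) ≤ ε) (hL : (l.map ω).sum ≤ L) :
    ∃ w s, lam w < 1 ∧ σ s ≤ 2 * a ∧ l.prod = w * s := by
  have hsupp : Function.support (plateau lam σ a) ⊆ F := by
    intro y hy
    obtain ⟨w, s, hw, hs, rfl⟩ := exists_eq_mul_of_plateau_ne_zero lam σ hy
    exact hF w s hw hs
  set ψ := convOn F (plateau lam σ a) (tent σ a)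
  have hword := abs_inv_list_prod_mul_sub_le ψ ω (c := 3 * F.card * ε / a) (l := l)
    (fun g hg z => by
      obtain ⟨hlam, n, hn, hnω, hpow⟩ := hl g hg
      exact abs_convOn_plateau_tent_inv_mul_sub_le lam σ ha hsupp g n hn hε₀ hpow hlam hnω z)
    l.prod
  rw [inv_mul_cancel] at hword
  have hone := card_div_two_le_convOn_plateau_tent_one lam σ ha hsupp hV
  have hlt : 3 * F.card * ε / a * (l.map ω).sum < (V.card : ℝ) / 2 := by
    refine (mul_le_mul_of_nonneg_left hL (by positivity)).trans_lt ?_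
    rw [div_mul_eq_mul_div, div_lt_iff₀ ha]
    linarith
  have hne : ψ l.prod ≠ 0 := by
    intro h
    rw [h, sub_zero] at hword
    linarith [le_abs_self (ψ 1)]
  obtain ⟨y, hy, hyl⟩ := exists_of_convOn_ne_zero hne
  obtain ⟨w, s, hw, hs, rfl⟩ := exists_eq_mul_of_plateau_ne_zero lam σ hy
  have htent := lt_of_tent_ne_zero σ ha hyl
  have hmul := map_mul_le_add σ s ((w * s)⁻¹ * l.prod)
  exact ⟨w, s * ((w * s)⁻¹ * l.prod), hw, by linarith, by group⟩

lemma abs_convOn_plateau_second_difference_le (hF : Function.support (plateau lam σ a) ⊆ F)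
    (g h : G) {α β : ℝ}
    (hg : ∀ y ∈ F, lam (y⁻¹ * g * y) ≤ α ∧ lam ((h * y)⁻¹ * g * (h * y)) ≤ α)
    (hh : lam h ≤ β) (hα : 0 ≤ α) (z : G) :
    |(convOn F (plateau lam σ a) (plateau lam σ a) (h⁻¹ * (g⁻¹ * z)) -
        convOn F (plateau lam σ a) (plateau lam σ a) (g⁻¹ * z)) -
      (convOn F (plateau lam σ a) (plateau lam σ a) (h⁻¹ * z) -
        convOn F (plateau lam σ a) (plateau lam σ a) z)| ≤ 2 * F.card * (β * α) := by
  have htranslate : ∀ y u, |plateau lam σ a (y⁻¹ * g⁻¹ * y * u) - plateau lam σ a u| ≤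
      lam (y⁻¹ * g * y) := by
    intro y u
    rw [show y⁻¹ * g⁻¹ * y = (y⁻¹ * g * y)⁻¹ by group]
    exact abs_plateau_inv_mul_sub_le lam σ a _ u
  exact abs_convOn_second_difference_le hF h g hα
    (fun y => (abs_plateau_inv_mul_sub_le lam σ a h y).trans hh)
    (fun y hy u => ⟨(htranslate y u).trans (hg y hy).1, (htranslate _ u).trans (hg y hy).2⟩) z

-- `∂_{[g⁻¹, h⁻¹]} = ∂_g ∂_h - ∂_h ∂_g` up to a translation.
lemma abs_convOn_plateau_commutator_sub_le (hF : Function.support (plateau lam σ a) ⊆ F)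
    (g h : G) {α β : ℝ}
    (hg : ∀ y ∈ F, lam (y⁻¹ * g * y) ≤ α ∧ lam ((h * y)⁻¹ * g * (h * y)) ≤ α)
    (hh : ∀ y ∈ F, lam (y⁻¹ * h * y) ≤ β ∧ lam ((g * y)⁻¹ * h * (g * y)) ≤ β)
    (hg1 : lam g ≤ α) (hh1 : lam h ≤ β) (z : G) :
    |convOn F (plateau lam σ a) (plateau lam σ a) (⁅g⁻¹, h⁻¹⁆⁻¹ * z) -
        convOn F (plateau lam σ a) (plateau lam σ a) z| ≤ 4 * F.card * (α * β) := by
  have hgh := abs_convOn_plateau_second_difference_le lam σ hF g h hg hh1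
    ((apply_nonneg lam g).trans hg1) (h * g * z)
  have hhg := abs_convOn_plateau_second_difference_le lam σ hF h g hh hg1
    ((apply_nonneg lam h).trans hh1) (h * g * z)
  rw [show h⁻¹ * (g⁻¹ * (h * g * z)) = ⁅g⁻¹, h⁻¹⁆⁻¹ * z by
    rw [commutatorElement_def]; group] at hgh
  rw [show g⁻¹ * (h⁻¹ * (h * g * z)) = z by group] at hhg
  rw [abs_le] at hgh hhg ⊢
  constructor <;> linarith [hgh.1, hgh.2, hhg.1, hhg.2]

end Escape

/-! ### Spectral projections of frame operators -/

section FrameOperator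

variable {H : Type*} [NormedAddCommGroup H] [InnerProductSpace ℝ H] {β : Type*}

/-- The frame operator `q ↦ ∑ ⟨u y, q⟩ u y` of the finite family `u y`, `y ∈ B`. -/
noncomputable def frameOperator (B : Finset β) (u : β → H) : H →L[ℝ] H :=
  ∑ y ∈ B, (innerSL ℝ (u y)).smulRight (u y)

lemma frameOperator_apply (B : Finset β) (u : β → H) (q : H) :
    frameOperator B u q = ∑ y ∈ B, inner ℝ (u y) q • u y := by
  simp [frameOperator]

lemma inner_frameOperator (B : Finset β) (u : β → H) (p q : H) :
    inner ℝ p (frameOperator B u q) = ∑ y ∈ B, inner ℝ (u y) p * inner ℝ (u y) q := by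
  rw [frameOperator_apply, inner_sum]
  refine Finset.sum_congr rfl fun y _ => ?_
  rw [real_inner_smul_right, real_inner_comm p, mul_comm]

lemma frameOperator_isSymmetric (B : Finset β) (u : β → H) :
    (frameOperator B u).toLinearMap.IsSymmetric := by
  intro p q
  rw [real_inner_comm]
  simp only [ContinuousLinearMap.coe_coe, inner_frameOperator, mul_comm]

lemma frameOperator_mem_span (B : Finset β) (u : β → H) (q : H) :
    frameOperator B u q ∈ Submodule.span ℝ (u '' B) := by
  rw [frameOperator_apply]
  exact Submodule.sum_mem _ fun y hy =>
    Submodule.smul_mem _ _ (Submodule.subset_span (Set.mem_image_of_mem u hy))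

theorem exists_orthonormal_frameOperator_eq (B : Finset β) (u : β → H) :
    ∃ (n : ℕ) (w : Fin n → H) (μ : Fin n → ℝ), Orthonormal ℝ w ∧
      ∀ q, frameOperator B u q = ∑ i, (μ i * inner ℝ (w i) q) • w i := by
  let W := Submodule.span ℝ (u '' B)
  have : FiniteDimensional ℝ W := FiniteDimensional.span_of_finite ℝ (B.finite_toSet.image u)
  let T : W →ₗ[ℝ] W :=
    (frameOperator B u).toLinearMap.restrict fun q _ => frameOperator_mem_span B u q
  have hT : T.IsSymmetric := (frameOperator_isSymmetric B u).restrict_invariant _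
  let e := hT.eigenvectorBasis rfl
  let μ := hT.eigenvalues rfl
  have he : ∀ i, frameOperator B u (e i) = μ i • (e i : H) := fun i =>
    congrArg Subtype.val (hT.apply_eigenvectorBasis rfl i)
  refine ⟨_, fun i => e i, μ, e.orthonormal.comp_linearIsometry W.subtypeₗᵢ, fun q => ?_⟩
  have hrepr := congrArg Subtype.val (e.sum_repr ⟨_, frameOperator_mem_span B u q⟩)
  simp only [Submodule.coe_sum, Submodule.coe_smul] at hrepr
  rw [← hrepr]
  refine Finset.sum_congr rfl fun i _ => ?_
  congr 1
  calc e.repr ⟨frameOperator B u q, frameOperator_mem_span B u q⟩ i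
      = inner ℝ (e i : H) (frameOperator B u q) := e.repr_apply_apply _ i
    _ = inner ℝ (frameOperator B u (e i)) q := (frameOperator_isSymmetric B u _ _).symm
    _ = μ i * inner ℝ (e i : H) q := by rw [he, real_inner_smul_left]

lemma norm_map_frameOperator_sub_le (T : H →ₗ[ℝ] H) {B : Finset β} {u : β → H} {t : ℝ}
    (hT : ∀ y ∈ B, ‖T (u y) - u y‖ ≤ t) (v : H) :
    ‖T (frameOperator B u v) - frameOperator B u v‖ ≤ (∑ y ∈ B, ‖u y‖) * ‖v‖ * t := by
  rw [frameOperator_apply, map_sum, ← Finset.sum_sub_distrib, Finset.sum_mul, Finset.sum_mul]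
  refine norm_sum_le_of_le B fun y hy => ?_
  rw [map_smul, ← smul_sub, norm_smul]
  exact mul_le_mul (norm_inner_le_norm _ _) (hT y hy) (norm_nonneg _) (by positivity)

section Eigenvalues

variable {ι : Type*} [Fintype ι] {w : ι → H} {μ : ι → ℝ} {B : Finset β} {u : β → H}

lemma eigenvalue_frameOperator_eq (hw : Orthonormal ℝ w)
    (hA : ∀ q, frameOperator B u q = ∑ i, (μ i * inner ℝ (w i) q) • w i) (i : ι) :
    μ i = ∑ y ∈ B, inner ℝ (w i) (u y) ^ 2 := by
  classical
  have hμ : inner ℝ (w i) (frameOperator B u (w i)) = μ i := by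
    simp [hA, real_inner_smul_right, orthonormal_iff_ite.1 hw, hw.1 i]
  rw [← hμ, inner_frameOperator]
  exact Finset.sum_congr rfl fun y _ => by rw [real_inner_comm, sq]

lemma sum_eigenvalue_frameOperator_le (hw : Orthonormal ℝ w)
    (hA : ∀ q, frameOperator B u q = ∑ i, (μ i * inner ℝ (w i) q) • w i) :
    ∑ i, μ i ≤ ∑ y ∈ B, ‖u y‖ ^ 2 := by
  simp_rw [eigenvalue_frameOperator_eq hw hA]
  rw [Finset.sum_comm]
  refine Finset.sum_le_sum fun y _ => ?_
  simpa using hw.sum_inner_products_le (u y) (s := Finset.univ)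

end Eigenvalues

end FrameOperator

section SpectralGap

variable {H : Type*} [NormedAddCommGroup H] [InnerProductSpace ℝ H] {ι : Type*}

instance finiteDimensional_span_image_finset (w : ι → H) (J : Finset ι) :
    FiniteDimensional ℝ (Submodule.span ℝ (w '' J)) :=
  FiniteDimensional.span_of_finite ℝ (J.finite_toSet.image w)

/-- The orthogonal projection onto the span of the vectors `w i`, `i ∈ J`; in the sequel these are
the eigenvectors of an operator for the upper part of its spectrum. -/
noncomputable def spectralProjection (w : ι → H) (J : Finset ι) : H →L[ℝ] H :=
  (Submodule.span ℝ (w '' J)).starProjection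

lemma mem_span_image {w : ι → H} {J : Finset ι} {i : ι} (hi : i ∈ J) :
    w i ∈ Submodule.span ℝ (w '' J) :=
  Submodule.subset_span (Set.mem_image_of_mem w hi)

lemma spectralProjection_apply {w : ι → H} (hw : Orthonormal ℝ w) (J : Finset ι) (v : H) :
    spectralProjection w J v = ∑ i ∈ J, inner ℝ (w i) v • w i := by
  classical
  refine Submodule.eq_starProjection_of_mem_orthogonal
    (Submodule.sum_mem _ fun i hi => Submodule.smul_mem _ _ (mem_span_image hi)) ?_
  rw [← Submodule.span_singleton_le_iff_mem, Submodule.le_orthogonal_iff_le_orthogonal,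
    Submodule.span_le]
  rintro _ ⟨i, hi, rfl⟩
  rw [SetLike.mem_coe, Submodule.mem_orthogonal_singleton_iff_inner_left, inner_sub_right,
    inner_sum]
  simp [real_inner_smul_right, orthonormal_iff_ite.1 hw, Finset.mem_coe.1 hi]

lemma inner_sub_spectralProjection_of_mem {w : ι → H} {J : Finset ι} {i : ι} (hi : i ∈ J) (v : H) :
    inner ℝ (w i) (v - spectralProjection w J v) = 0 := by
  rw [real_inner_comm]
  exact Submodule.starProjection_inner_eq_zero v _ (mem_span_image hi)

lemma inner_sub_spectralProjection_of_notMem {w : ι → H} (hw : Orthonormal ℝ w) {J : Finset ι}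
    {i : ι} (hi : i ∉ J) (v : H) :
    inner ℝ (w i) (v - spectralProjection w J v) = inner ℝ (w i) v := by
  classical
  rw [spectralProjection_apply hw, inner_sub_right, inner_sum]
  simp [real_inner_smul_right, orthonormal_iff_ite.1 hw, hi]

lemma inner_sub_spectralProjection_self (w : ι → H) (J : Finset ι) (v : H) :
    inner ℝ (v - spectralProjection w J v) v = ‖v - spectralProjection w J v‖ ^ 2 := by
  rw [← real_inner_self_eq_norm_sq, inner_sub_right (v - _) v]
  rw [spectralProjection, Submodule.starProjection_inner_eq_zero v _
    (Submodule.starProjection_apply_mem _ v), sub_zero]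

/-- `A` is diagonal in the orthonormal family `w`, with eigenvalues `μ` at least `b` for the
indices in `J` and at most `b - γ` for the others. -/
structure HasSpectralGap [Fintype ι] (A : H →L[ℝ] H) (w : ι → H) (μ : ι → ℝ) (J : Finset ι)
    (b γ : ℝ) : Prop where
  orthonormal : Orthonormal ℝ w
  apply_eq : ∀ q, A q = ∑ i, (μ i * inner ℝ (w i) q) • w i
  le_of_mem : ∀ i ∈ J, b ≤ μ i
  le_of_notMem : ∀ i, i ∉ J → μ i ≤ b - γ
  pos : 0 < γ
  le : γ ≤ b

namespace HasSpectralGap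

variable [Fintype ι] {A : H →L[ℝ] H} {w : ι → H} {μ : ι → ℝ} {J : Finset ι} {b γ : ℝ}

lemma apply_eigenvector (h : HasSpectralGap A w μ J b γ) (i : ι) : A (w i) = μ i • w i := by
  classical
  simp [h.apply_eq, orthonormal_iff_ite.1 h.orthonormal]

lemma inner_sub_spectralProjection_le (h : HasSpectralGap A w μ J b γ) (f : H) :
    inner ℝ (f - spectralProjection w J f) (A f) ≤
      (b - γ) * ‖f - spectralProjection w J f‖ ^ 2 := by
  set q := f - spectralProjection w J f with hq
  have hterm : ∀ i, inner ℝ q ((μ i * inner ℝ (w i) f) • w i) ≤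
      (b - γ) * ‖inner ℝ (w i) q‖ ^ 2 := by
    intro i
    rw [real_inner_smul_right, real_inner_comm (w i) q]
    by_cases hi : i ∈ J
    · simp [hq, inner_sub_spectralProjection_of_mem hi]
    · rw [hq, inner_sub_spectralProjection_of_notMem h.orthonormal hi, Real.norm_eq_abs, sq_abs,
        mul_assoc, ← sq]
      exact mul_le_mul_of_nonneg_right (h.le_of_notMem i hi) (sq_nonneg _)
  rw [h.apply_eq, inner_sum]
  refine (Finset.sum_le_sum fun i _ => hterm i).trans ?_
  rw [← Finset.mul_sum]
  exact mul_le_mul_of_nonneg_left (h.orthonormal.sum_inner_products_le q) (sub_nonneg.2 h.le)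

lemma norm_sub_spectralProjection_le (h : HasSpectralGap A w μ J b γ) (f : H) :
    (1 - (b - γ)) * ‖f - spectralProjection w J f‖ ≤ ‖f - A f‖ := by
  set q := f - spectralProjection w J f
  rcases (norm_nonneg q).eq_or_lt with h0 | h0
  · rw [← h0, mul_zero]
    exact norm_nonneg _
  have hcauchy := real_inner_le_norm q (f - A f)
  rw [inner_sub_right, inner_sub_spectralProjection_self] at hcauchy
  have hA := h.inner_sub_spectralProjection_le f
  exact le_of_mul_le_mul_left (by nlinarith : ‖q‖ * ((1 - (b - γ)) * ‖q‖) ≤ ‖q‖ * ‖f - A f‖) h0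

-- Pairing `[τ, A] (w i)` with the component of `τ (w i)` off the upper spectral subspace picks up
-- the gap.
lemma norm_isometry_sub_spectralProjection_le (h : HasSpectralGap A w μ J b γ) {κ : ℝ}
    (τ : H ≃ₗᵢ[ℝ] H) (hκ : ∀ v, ‖τ (A v) - A (τ v)‖ ≤ κ * ‖v‖) {i : ι} (hi : i ∈ J) :
    ‖τ (w i) - spectralProjection w J (τ (w i))‖ ≤ κ / γ := by
  set q := τ (w i) - spectralProjection w J (τ (w i))
  have hcomm : ‖τ (A (w i)) - A (τ (w i))‖ ≤ κ := by simpa [h.orthonormal.1 i] using hκ (w i)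
  rcases (norm_nonneg q).eq_or_lt with h0 | h0
  · rw [← h0]
    exact div_nonneg ((norm_nonneg _).trans hcomm) h.pos.le
  have hcauchy := real_inner_le_norm q (τ (A (w i)) - A (τ (w i)))
  rw [inner_sub_right, h.apply_eigenvector, map_smul, real_inner_smul_right,
    inner_sub_spectralProjection_self] at hcauchy
  rw [h.apply_eigenvector, map_smul] at hcomm
  have hA := h.inner_sub_spectralProjection_le (τ (w i))
  have hb := mul_le_mul_of_nonneg_right (h.le_of_mem i hi) (sq_nonneg ‖q‖)
  have hq_mul := mul_le_mul_of_nonneg_left hcomm h0.le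
  rw [le_div_iff₀ h.pos]
  exact le_of_mul_le_mul_left (by nlinarith : ‖q‖ * (‖q‖ * γ) ≤ ‖q‖ * κ) h0

lemma norm_isometry_spectralProjection_sub_le (h : HasSpectralGap A w μ J b γ) {κ : ℝ}
    (τ : H ≃ₗᵢ[ℝ] H) (hκ : ∀ v, ‖τ (A v) - A (τ v)‖ ≤ κ * ‖v‖) (v : H) :
    ‖τ (spectralProjection w J v) - spectralProjection w J (τ (spectralProjection w J v))‖ ≤
      J.card * (κ / γ) * ‖v‖ := by
  have hsum : τ (spectralProjection w J v) - spectralProjection w J (τ (spectralProjection w J v)) =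
      ∑ j ∈ J, inner ℝ (w j) v • (τ (w j) - spectralProjection w J (τ (w j))) := by
    conv_lhs => rw [spectralProjection_apply h.orthonormal J v]
    simp only [map_sum, map_smul, smul_sub, Finset.sum_sub_distrib]
  rw [hsum, mul_assoc, ← nsmul_eq_mul, mul_comm (κ / γ)]
  refine (norm_sum_le _ _).trans (Finset.sum_le_card_nsmul _ _ _ fun j hj => ?_)
  have hinner := norm_inner_le_norm (𝕜 := ℝ) (w j) v
  rw [h.orthonormal.1 j, one_mul] at hinner
  rw [norm_smul]
  exact mul_le_mul hinner (h.norm_isometry_sub_spectralProjection_le τ hκ hj) (norm_nonneg _)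
    (norm_nonneg _)

lemma exists_apply_eq_spectralProjection (h : HasSpectralGap A w μ J b γ) (v : H) :
    ∃ v', A v' = spectralProjection w J v ∧ ‖v'‖ ≤ J.card * (b⁻¹ * ‖v‖) := by
  have hb : 0 < b := h.pos.trans_le h.le
  refine ⟨∑ i ∈ J, ((μ i)⁻¹ * inner ℝ (w i) v) • w i, ?_, ?_⟩
  · rw [map_sum, spectralProjection_apply h.orthonormal]
    refine Finset.sum_congr rfl fun i hi => ?_
    have hμ : μ i ≠ 0 := (hb.trans_le (h.le_of_mem i hi)).ne'
    rw [map_smul, h.apply_eigenvector, smul_smul]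
    congr 1
    field_simp
  · rw [← nsmul_eq_mul]
    refine (norm_sum_le _ _).trans (Finset.sum_le_card_nsmul _ _ _ fun i hi => ?_)
    have hinner := norm_inner_le_norm (𝕜 := ℝ) (w i) v
    rw [h.orthonormal.1 i, one_mul] at hinner
    have hbμ := h.le_of_mem i hi
    rw [norm_smul, norm_mul, norm_inv, Real.norm_of_nonneg (hb.le.trans hbμ), h.orthonormal.1 i,
      mul_one]
    gcongr

end HasSpectralGap

-- Among the `D + 1` disjoint intervals `[a + k γ, a + (k + 1) γ)`, one contains no `μ i`.
lemma exists_interval_avoiding (S : Finset ι) (μ : ι → ℝ) (a : ℝ) {γ : ℝ} (hγ : 0 < γ) {D : ℕ}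
    (hS : S.card ≤ D) (ha : ∀ i ∈ S, a ≤ μ i) :
    ∃ k ≤ D, ∀ i ∈ S, μ i < a + (k + 1) * γ → μ i < a + k * γ := by
  classical
  obtain ⟨k, hk, hkS⟩ := Finset.exists_mem_notMem_of_card_lt_card
    (s := S.image fun i => ⌊(μ i - a) / γ⌋₊) (t := Finset.range (D + 1))
    (Finset.card_image_le.trans_lt (by simpa [Nat.lt_succ_iff] using hS))
  refine ⟨k, Nat.lt_succ_iff.1 (Finset.mem_range.1 hk), fun i hi hlt => ?_⟩
  contrapose! hkS
  refine Finset.mem_image.2 ⟨i, hi, ?_⟩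
  rw [Nat.floor_eq_iff (div_nonneg (sub_nonneg.2 (ha i hi)) hγ.le), le_div_iff₀ hγ,
    div_lt_iff₀ hγ]
  constructor <;> linarith

theorem exists_hasSpectralGap [Fintype ι] {A : H →L[ℝ] H} {w : ι → H} {μ : ι → ℝ}
    (hw : Orthonormal ℝ w) (hA : ∀ q, A q = ∑ i, (μ i * inner ℝ (w i) q) • w i)
    (hμ : ∀ i, 0 ≤ μ i) {D : ℕ} (hD : 4 * ∑ i, μ i ≤ D) :
    ∃ (b : ℝ) (J : Finset ι), HasSpectralGap A w μ J b (1 / (4 * (D + 1))) ∧ 1 / 4 ≤ b ∧ b ≤ 1 / 2 ∧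
      J.card ≤ D := by
  classical
  set γ : ℝ := 1 / (4 * (D + 1)) with hγ_def
  have hγ : 0 < γ := by positivity
  let S := Finset.univ.filter fun i => 1 / 4 ≤ μ i
  have hS : S.card ≤ D := by
    have hle : S.card • (1 / 4 : ℝ) ≤ ∑ i ∈ S, μ i :=
      Finset.card_nsmul_le_sum _ _ _ fun i hi => (Finset.mem_filter.1 hi).2
    have hsub : ∑ i ∈ S, μ i ≤ ∑ i, μ i :=
      Finset.sum_le_sum_of_subset_of_nonneg (Finset.subset_univ _) fun i _ _ => hμ i
    rw [nsmul_eq_mul] at hle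
    exact_mod_cast (by linarith : (S.card : ℝ) ≤ D)
  obtain ⟨k, hk, hgap⟩ := exists_interval_avoiding S μ (1 / 4) hγ hS
    fun i hi => (Finset.mem_filter.1 hi).2
  have hkγ : 0 ≤ k * γ := by positivity
  have hk_le : (k + 1) * γ ≤ 1 / 4 := by
    calc (k + 1) * γ ≤ (D + 1) * γ := by gcongr
      _ = 1 / 4 := by
        rw [hγ_def]
        field_simp
  refine ⟨1 / 4 + (k + 1) * γ, S.filter fun i => 1 / 4 + (k + 1) * γ ≤ μ i,
    ⟨hw, hA, fun i hi => (Finset.mem_filter.1 hi).2, fun i hi => ?_, hγ, by linarith⟩,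
    by linarith, by linarith, (Finset.card_filter_le _ _).trans hS⟩
  by_cases hiS : i ∈ S
  · have hlt := hgap i hiS (by simpa [hiS] using hi)
    linarith
  · have hlt : μ i < 1 / 4 := by simpa [S] using hiS
    linarith

end SpectralGap

section UnitaryRepresentation

variable {H : Type*} [NormedAddCommGroup H] [InnerProductSpace ℝ H] {G : Type*} [Group G]
  (τ : G →* H ≃ₗᵢ[ℝ] H)

lemma map_mul_apply_eq (g h : G) (v : H) : τ (g * h) v = τ g (τ h v) := by
  rw [map_mul]
  rfl

/-- The length function `g ↦ ‖τ g P - P‖` measuring how far `g` moves the range of `P` in a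
unitary representation. -/
noncomputable def rangeDisplacement (P : H →L[ℝ] H) : GroupSeminorm G where
  toFun g := ‖((τ g : H ≃L[ℝ] H) : H →L[ℝ] H).comp P - P‖
  map_one' := by
    have : ((τ 1 : H ≃L[ℝ] H) : H →L[ℝ] H).comp P = P := by
      ext v
      simp
    rw [this, sub_self, norm_zero]
  mul_le' g h := by
    refine ContinuousLinearMap.opNorm_le_bound _ (by positivity) fun v => ?_
    have hg := (((τ g : H ≃L[ℝ] H) : H →L[ℝ] H).comp P - P).le_opNorm v
    have hh := (((τ h : H ≃L[ℝ] H) : H →L[ℝ] H).comp P - P).le_opNorm v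
    simp only [sub_apply, ContinuousLinearMap.comp_apply, ContinuousLinearEquiv.coe_coe,
      LinearIsometryEquiv.coe_toContinuousLinearEquiv] at hg hh ⊢
    rw [map_mul_apply_eq, add_mul]
    have htriangle := norm_sub_le_norm_sub_add_norm_sub (τ g (τ h (P v))) (τ g (P v)) (P v)
    rw [← map_sub, LinearIsometryEquiv.norm_map] at htriangle
    linarith
  inv' g := by
    have inv_le : ∀ g, ‖((τ g⁻¹ : H ≃L[ℝ] H) : H →L[ℝ] H).comp P - P‖ ≤
        ‖((τ g : H ≃L[ℝ] H) : H →L[ℝ] H).comp P - P‖ := by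
      intro g
      refine ContinuousLinearMap.opNorm_le_bound _ (norm_nonneg _) fun v => ?_
      refine le_trans (le_of_eq ?_) ((((τ g : H ≃L[ℝ] H) : H →L[ℝ] H).comp P - P).le_opNorm v)
      simp only [sub_apply, ContinuousLinearMap.comp_apply, ContinuousLinearEquiv.coe_coe,
        LinearIsometryEquiv.coe_toContinuousLinearEquiv]
      rw [← LinearIsometryEquiv.norm_map (τ g) (τ g⁻¹ (P v) - P v), map_sub, ← map_mul_apply_eq,
        mul_inv_cancel, map_one, norm_sub_rev]
      rfl
    refine le_antisymm (inv_le g) ?_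
    simpa using inv_le g⁻¹

lemma norm_sub_le_rangeDisplacement (P : H →L[ℝ] H) (g : G) (v : H) :
    ‖τ g (P v) - P v‖ ≤ rangeDisplacement τ P g * ‖v‖ :=
  (((τ g : H ≃L[ℝ] H) : H →L[ℝ] H).comp P - P).le_opNorm v

lemma rangeDisplacement_le (P : H →L[ℝ] H) (g : G) {c : ℝ} (hc : 0 ≤ c)
    (h : ∀ v, ‖τ g (P v) - P v‖ ≤ c * ‖v‖) : rangeDisplacement τ P g ≤ c :=
  ContinuousLinearMap.opNorm_le_bound _ hc h

lemma norm_sub_le_rangeDisplacement_add (P : H →L[ℝ] H) (g : G) (v : H) :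
    ‖τ g v - v‖ ≤ rangeDisplacement τ P g * ‖v‖ + 2 * ‖v - P v‖ := by
  have hrange := norm_sub_le_rangeDisplacement τ P g v
  have hsub := norm_sub_le ((τ g (P v) - P v) + τ g (v - P v)) (v - P v)
  have hadd := norm_add_le (τ g (P v) - P v) (τ g (v - P v))
  rw [LinearIsometryEquiv.norm_map] at hadd
  rw [show τ g v - v = (τ g (P v) - P v) + τ g (v - P v) - (v - P v) by rw [map_sub]; abel]
  linarith

lemma map_sum_pow_sub_self (g : G) (m : ℕ) (e : H) :
    τ g (∑ i ∈ Finset.range m, (τ (g ^ i) e - e)) - ∑ i ∈ Finset.range m, (τ (g ^ i) e - e) =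
      (τ (g ^ m) e - e) - (m : ℝ) • (τ g e - e) := by
  have htelescope := Finset.sum_range_sub (fun i => τ (g ^ i) e) m
  simp only [pow_succ', map_mul_apply_eq, pow_zero, map_one, LinearIsometryEquiv.coe_one, id_eq,
    Finset.sum_sub_distrib] at htelescope
  simp only [map_sum, map_sub, map_nsmul, Finset.sum_sub_distrib, Finset.sum_const,
    Finset.card_range]
  rw [← htelescope, smul_sub, Nat.cast_smul_eq_nsmul, Nat.cast_smul_eq_nsmul]
  abel

-- The sum of the displacements `τ (g ^ i) e - e` is nearly in the range of `P` and at most half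
-- as long as `m` times `v`; telescoping its displacement by `g` bounds `m (τ g e - e)`.
theorem rangeDisplacement_le_of_pow_le {P : H →L[ℝ] H} (hP : ∀ v, ‖P v‖ ≤ ‖v‖)
    (hPP : ∀ v, P (P v) = P v) {η : ℝ} (hη₀ : 0 ≤ η) (g : G) {m : ℕ} (hm : 0 < m)
    (hη : ∀ i < m, ∀ v, ‖τ (g ^ i) (P v) - P (τ (g ^ i) (P v))‖ ≤ η * ‖v‖)
    (hx : ∀ i < m, rangeDisplacement τ P (g ^ i) ≤ 1 / 2) :
    rangeDisplacement τ P g ≤ 4 / m + 4 * η := by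
  have hm' : (0 : ℝ) < m := Nat.cast_pos.2 hm
  have := apply_nonneg (rangeDisplacement τ P) g
  suffices h : rangeDisplacement τ P g ≤ 2 / m + 2 * η + rangeDisplacement τ P g / 2 by
    rw [show 4 / (m : ℝ) = 2 * (2 / m) by ring]
    linarith
  refine rangeDisplacement_le τ P g (by positivity) fun v => ?_
  have htelescope := map_sum_pow_sub_self τ g m (P v)
  set S : H := ∑ i ∈ Finset.range m, (τ (g ^ i) (P v) - P v) with hS
  have hS_norm : ‖S‖ ≤ m * (1 / 2 * ‖v‖) := by
    have := norm_sum_le_of_le (Finset.range m) fun i hi =>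
      (norm_sub_le_rangeDisplacement τ P (g ^ i) v).trans
        (mul_le_mul_of_nonneg_right (hx i (Finset.mem_range.1 hi)) (norm_nonneg v))
    rwa [Finset.sum_const, Finset.card_range, nsmul_eq_mul] at this
  have hS_range : ‖S - P S‖ ≤ m * (η * ‖v‖) := by
    have hsum : S - P S = ∑ i ∈ Finset.range m, (τ (g ^ i) (P v) - P (τ (g ^ i) (P v))) := by
      simp only [hS, map_sum, map_sub, hPP, ← Finset.sum_sub_distrib]
      exact Finset.sum_congr rfl fun i _ => by abel
    have := norm_sum_le_of_le (Finset.range m) fun i hi => hη i (Finset.mem_range.1 hi) v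
    rwa [Finset.sum_const, Finset.card_range, nsmul_eq_mul, ← hsum] at this
  have hgS : ‖τ g S - S‖ ≤ rangeDisplacement τ P g * (m * (1 / 2 * ‖v‖)) + 2 * (m * (η * ‖v‖)) :=
    (norm_sub_le_rangeDisplacement_add τ P g S).trans (by gcongr)
  have hmul : m * ‖τ g (P v) - P v‖ ≤ 2 * ‖v‖ + ‖τ g S - S‖ := by
    have hsub := norm_sub_le (τ (g ^ m) (P v) - P v) (τ g S - S)
    rw [htelescope, sub_sub_cancel, norm_smul, Real.norm_natCast, ← htelescope] at hsub
    have hm_sub := norm_sub_le (τ (g ^ m) (P v)) (P v)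
    rw [LinearIsometryEquiv.norm_map] at hm_sub
    linarith [hP v]
  refine le_of_mul_le_mul_left (hmul.trans ?_) hm'
  calc 2 * ‖v‖ + ‖τ g S - S‖ ≤
        2 * ‖v‖ + (rangeDisplacement τ P g * (m * (1 / 2 * ‖v‖)) + 2 * (m * (η * ‖v‖))) := by
        gcongr
    _ = m * ((2 / m + 2 * η + rangeDisplacement τ P g / 2) * ‖v‖) := by
        field_simp
        ring

theorem exists_spectral_groupSeminorm {β : Type*} (B : Finset β) (u : β → H) {D : ℕ}
    (hD : 4 * ∑ y ∈ B, ‖u y‖ ^ 2 ≤ D) : ∃ x : GroupSeminorm G,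
      (∀ f, 20 * ‖f - frameOperator B u f‖ ≤ ‖f‖ → ∀ g, x g ≤ 1 / 2 →
        10 * ‖τ g f - f‖ ≤ 7 * ‖f‖) ∧
      (∀ g t, 0 ≤ t → (∀ y ∈ B, ‖τ g (u y) - u y‖ ≤ t) →
        x g ≤ 4 * D * (∑ y ∈ B, ‖u y‖) * t) ∧
      (∀ g κ, 0 ≤ κ → ∀ m : ℕ, 0 < m → (∀ i < m, ∀ v,
          ‖τ (g ^ i) (frameOperator B u v) - frameOperator B u (τ (g ^ i) v)‖ ≤ κ * ‖v‖) →
        (∀ i < m, x (g ^ i) ≤ 1 / 2) → x g ≤ 4 / m + 16 * D * (D + 1) * κ) := by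
  obtain ⟨n, w, μ, hw, hA⟩ := exists_orthonormal_frameOperator_eq B u
  obtain ⟨b, J, hgap, hb₁, hb₂, hJ⟩ := exists_hasSpectralGap hw hA (D := D)
    (fun i => by rw [eigenvalue_frameOperator_eq hw hA]; positivity)
    (by linarith [sum_eigenvalue_frameOperator_le hw hA])
  have hJ' : (J.card : ℝ) ≤ D := Nat.cast_le.2 hJ
  refine ⟨rangeDisplacement τ (spectralProjection w J), fun f hf g hg => ?_, fun g t ht hu => ?_,
    fun g κ hκ m hm hcomm hx => ?_⟩
  · have hproj := hgap.norm_sub_spectralProjection_le f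
    have hmove := norm_sub_le_rangeDisplacement_add τ (spectralProjection w J) g f
    have hhalf : 1 / 2 * ‖f - spectralProjection w J f‖ ≤
        (1 - (b - 1 / (4 * (D + 1)))) * ‖f - spectralProjection w J f‖ := by
      gcongr
      linarith [hgap.pos]
    nlinarith [mul_le_mul_of_nonneg_right hg (norm_nonneg f)]
  · refine rangeDisplacement_le τ _ g (by positivity) fun v => ?_
    obtain ⟨v', hv', hv'_norm⟩ := hgap.exists_apply_eq_spectralProjection v
    have hb : b⁻¹ ≤ 4 := by
      rw [inv_le_comm₀ (by linarith) (by norm_num)]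
      linarith
    rw [← hv']
    calc ‖τ g (frameOperator B u v') - frameOperator B u v'‖ ≤ (∑ y ∈ B, ‖u y‖) * ‖v'‖ * t :=
          norm_map_frameOperator_sub_le (τ g).toLinearEquiv.toLinearMap hu v'
      _ ≤ (∑ y ∈ B, ‖u y‖) * (D * (4 * ‖v‖)) * t := by
          gcongr
          exact hv'_norm.trans (by gcongr)
      _ = 4 * D * (∑ y ∈ B, ‖u y‖) * t * ‖v‖ := by ring
  · have hη : ∀ i < m, ∀ v, _ ≤ D * (κ / (1 / (4 * (D + 1)))) * ‖v‖ := fun i hi v =>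
      (hgap.norm_isometry_spectralProjection_sub_le (τ (g ^ i)) (hcomm i hi) v).trans (by gcongr)
    refine (rangeDisplacement_le_of_pow_le τ (fun v => Submodule.norm_starProjection_apply_le _ v)
      (fun v => Submodule.starProjection_eq_self_iff.2 (Submodule.starProjection_apply_mem _ v))
      (by positivity) g hm hη hx).trans (le_of_eq ?_)
    field_simp
    ring

end UnitaryRepresentation

/-! ### Spectral length functions from the regular representation -/

section SquareSummable

variable {G : Type*}

/-- A finitely supported function as an element of `ℓ²(G)`. -/
noncomputable def l2Of (f : G → ℝ) (hf : (Function.support f).Finite) : lp (fun _ : G => ℝ) 2 :=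
  ⟨f, by
    change Memℓp _ 2
    rw [memℓp_gen_iff (by norm_num)]
    refine summable_of_hasFiniteSupport (hf.subset fun z hz => ?_)
    contrapose! hz
    simp [Function.notMem_support.1 hz]⟩

variable {v : lp (fun _ : G => ℝ) 2} {F : Finset G}

lemma l2_norm_sq_eq_sum (hF : Function.support v ⊆ F) : ‖v‖ ^ 2 = ∑ z ∈ F, v z ^ 2 := by
  rw [← real_inner_self_eq_norm_sq, lp.inner_eq_tsum, tsum_eq_sum (s := F)]
  · exact Finset.sum_congr rfl fun z _ => by simp [sq]
  · intro z hz
    simp [Function.notMem_support.1 fun hv => hz (hF hv)]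

lemma l2_norm_sq_le (hF : Function.support v ⊆ F) {c : ℝ} (hc : ∀ z, |v z| ≤ c) :
    ‖v‖ ^ 2 ≤ F.card * c ^ 2 := by
  rw [l2_norm_sq_eq_sum hF, ← nsmul_eq_mul]
  refine Finset.sum_le_card_nsmul _ _ _ fun z _ => ?_
  rw [← sq_abs]
  exact pow_le_pow_left₀ (abs_nonneg _) (hc z) 2

lemma sum_sq_le_l2_norm_sq (v : lp (fun _ : G => ℝ) 2) (F : Finset G) :
    ∑ z ∈ F, v z ^ 2 ≤ ‖v‖ ^ 2 := by
  have hsum : HasSum (fun z => inner ℝ (v z) (v z)) (inner ℝ v v) := lp.hasSum_inner v v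
  rw [real_inner_self_eq_norm_sq] at hsum
  refine (Finset.sum_congr rfl fun z _ => ?_).trans_le
    (sum_le_hasSum F (fun z _ => real_inner_self_nonneg) hsum)
  simp [sq]

end SquareSummable

section RegularRepresentation

variable {G : Type*} [Group G]

/-- Left translation by `g` on `ℓ²(G)`. -/
noncomputable def l2TranslateIsometry (g : G) :
    lp (fun _ : G => ℝ) 2 →ₗᵢ[ℝ] lp (fun _ : G => ℝ) 2 where
  toFun v := ⟨fun z => v (g⁻¹ * z), by
    have h := lp.memℓp v
    change Memℓp _ 2
    rw [memℓp_gen_iff (by norm_num)] at h ⊢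
    exact (Equiv.mulLeft g⁻¹).summable_iff.2 h⟩
  map_add' v w := by ext z; rfl
  map_smul' c v := by ext z; rfl
  norm_map' v := by
    rw [lp.norm_eq_tsum_rpow (by norm_num), lp.norm_eq_tsum_rpow (by norm_num)]
    congr 1
    exact (Equiv.mulLeft g⁻¹).tsum_eq fun z => ‖v z‖ ^ (2 : ENNReal).toReal

lemma l2TranslateIsometry_apply (g : G) (v : lp (fun _ : G => ℝ) 2) (z : G) :
    l2TranslateIsometry g v z = v (g⁻¹ * z) := rfl

/-- The left regular representation of `G` on `ℓ²(G)`. -/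
noncomputable def l2Translate :
    G →* (lp (fun _ : G => ℝ) 2 ≃ₗᵢ[ℝ] lp (fun _ : G => ℝ) 2) where
  toFun g :=
    { toLinearEquiv := LinearEquiv.ofLinearMap (l2TranslateIsometry g).toLinearMap
        (l2TranslateIsometry g⁻¹).toLinearMap
        (by ext v z; simp [l2TranslateIsometry_apply])
        (by ext v z; simp [l2TranslateIsometry_apply])
      norm_map' := (l2TranslateIsometry g).norm_map }
  map_one' := by
    ext v z
    change v (1⁻¹ * z) = v z
    simp
  map_mul' g h := by
    ext v z
    change v ((g * h)⁻¹ * z) = v (h⁻¹ * (g⁻¹ * z))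
    simp [mul_assoc]

lemma l2Translate_apply (g : G) (v : lp (fun _ : G => ℝ) 2) (z : G) :
    l2Translate g v z = v (g⁻¹ * z) := rfl

lemma inner_l2Translate {v : lp (fun _ : G => ℝ) 2} {F : Finset G} (hF : Function.support v ⊆ F)
    (y : G) (w : lp (fun _ : G => ℝ) 2) :
    inner ℝ (l2Translate y v) w = ∑ s ∈ F, v s * w (y * s) := by
  rw [lp.inner_eq_tsum, ← (Equiv.mulLeft y).tsum_eq, tsum_eq_sum (s := F)]
  · refine Finset.sum_congr rfl fun s _ => ?_
    simp [l2Translate_apply, mul_comm]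
  · intro s hs
    simp [l2Translate_apply, Function.notMem_support.1 fun hv => hs (hF hv)]

lemma frameOperator_l2Translate_apply {φ v : lp (fun _ : G => ℝ) 2} {F B : Finset G}
    (hF : Function.support φ ⊆ F) (hB : ∀ y, inner ℝ (l2Translate y φ) v ≠ 0 → y ∈ B) (z : G) :
    frameOperator B (fun y => l2Translate y φ) v z =
      ∑ s ∈ F, φ s * ∑ t ∈ F, φ t * v (z * s⁻¹ * t) := by
  have happly : frameOperator B (fun y => l2Translate y φ) v z =
      ∑ y ∈ B, inner ℝ (l2Translate y φ) v * φ (y⁻¹ * z) := by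
    simp only [frameOperator_apply, lp.coeFn_sum, Finset.sum_apply]
    rfl
  have hB_zero : ∀ y ∉ B, inner ℝ (l2Translate y φ) v * φ (y⁻¹ * z) = 0 := fun y hy => by
    rw [by_contra fun h => hy (hB y h), zero_mul]
  simp only [inner_l2Translate hF] at happly hB_zero
  rw [happly, ← tsum_eq_sum (L := .unconditional G) hB_zero,
    ← ((Equiv.inv G).trans (Equiv.mulLeft z)).tsum_eq, tsum_eq_sum (s := F)]
  · refine Finset.sum_congr rfl fun s _ => ?_
    simp [mul_comm]
  · intro s hs
    simp [Function.notMem_support.1 fun h => hs (hF h)]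

lemma norm_map_conj_sub_eq {H : Type*} [NormedAddCommGroup H] [InnerProductSpace ℝ H]
    (τ : G →* H ≃ₗᵢ[ℝ] H) (φ : H) (g y : G) :
    ‖τ (y⁻¹ * g * y) φ - φ‖ = ‖τ g (τ y φ) - τ y φ‖ := by
  rw [← (τ y).norm_map, map_sub, ← map_mul_apply_eq, ← map_mul_apply_eq,
    show y * (y⁻¹ * g * y) = g * y by group]

lemma norm_map_frameOperator_sub_frameOperator_map_le [DecidableEq G] {H : Type*}
    [NormedAddCommGroup H] [InnerProductSpace ℝ H] (τ : G →* H ≃ₗᵢ[ℝ] H) (φ : H) (B : Finset G)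
    (g : G) (v : H) :
    ‖τ g (frameOperator B (fun y => τ y φ) v) - frameOperator B (fun y => τ y φ) (τ g v)‖ ≤
      2 * ((g • B) \ B).card * ‖φ‖ ^ 2 * ‖v‖ := by
  set f : G → H := fun y => inner ℝ (τ y φ) (τ g v) • τ y φ with hf
  have hmap : τ g (frameOperator B (fun y => τ y φ) v) = ∑ y ∈ g • B, f y := by
    rw [frameOperator_apply, map_sum, Finset.smul_finset_def, Finset.sum_image (by simp)]
    refine Finset.sum_congr rfl fun y _ => ?_
    simp only [hf, smul_eq_mul, map_mul_apply_eq, map_smul, LinearIsometryEquiv.inner_map_map]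
  have hf_norm : ∀ y, ‖f y‖ ≤ ‖φ‖ ^ 2 * ‖v‖ := by
    intro y
    have := norm_inner_le_norm (𝕜 := ℝ) (τ y φ) (τ g v)
    rw [LinearIsometryEquiv.norm_map, LinearIsometryEquiv.norm_map] at this
    rw [hf, norm_smul, LinearIsometryEquiv.norm_map]
    calc _ ≤ ‖φ‖ * ‖v‖ * ‖φ‖ := by gcongr
      _ = _ := by ring
  have hcard : (B \ (g • B)).card = ((g • B) \ B).card :=
    Finset.card_sdiff_comm (Finset.card_smul_finset g B).symm
  have hleft := norm_sum_le_of_le ((g • B) \ B) fun y _ => hf_norm y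
  have hright := norm_sum_le_of_le (B \ (g • B)) fun y _ => hf_norm y
  rw [Finset.sum_const, nsmul_eq_mul] at hleft hright
  rw [hcard] at hright
  rw [hmap, frameOperator_apply, ← Finset.sum_sdiff_sub_sum_sdiff]
  linarith [norm_sub_le (∑ y ∈ (g • B) \ B, f y) (∑ y ∈ B \ (g • B), f y)]

end RegularRepresentation

section Mollifier

variable {G : Type*} [Group G] (ν : GroupSeminorm G)

lemma abs_tent_mul_right_sub_le {r : ℝ} (hr : 0 < r) (u k : G) :
    |tent ν r (u * k) - tent ν r u| ≤ ν k / r := by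
  have h := abs_tent_mul_sub_le ν hr k⁻¹ u⁻¹
  unfold tent at h ⊢
  rwa [← mul_inv_rev, map_inv_eq_map, map_inv_eq_map, map_inv_eq_map] at h

lemma half_le_tent {a : ℝ} (ha : 0 < a) {g : G} (hg : ν g ≤ a / 2) : 1 / 2 ≤ tent ν a g := by
  refine le_max_of_le_left ?_
  have : ν g / a ≤ 1 / 2 := by
    rw [div_le_iff₀ ha]
    linarith
  linarith

/-- A probability kernel on `F` supported where `ν < δ`. -/
structure IsMollifier (δ : ℝ) (F : Finset G) (φ : G → ℝ) : Prop where
  nonneg : ∀ s, 0 ≤ φ s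
  sum_eq_one : ∑ s ∈ F, φ s = 1
  support_subset : Function.support φ ⊆ F
  lt_of_ne_zero : ∀ s, φ s ≠ 0 → ν s < δ

lemma IsMollifier.abs_sum_mul_sub_le {ν} {δ : ℝ} {F : Finset G} {φ : G → ℝ}
    (hφ : IsMollifier ν δ F φ) {c : G → ℝ} {a e : ℝ} (h : ∀ s, ν s < δ → |c s - a| ≤ e) :
    |∑ s ∈ F, φ s * c s - a| ≤ e := by
  have hsub : ∑ s ∈ F, φ s * c s - a = ∑ s ∈ F, φ s * (c s - a) := by
    simp_rw [mul_sub, Finset.sum_sub_distrib, ← Finset.sum_mul, hφ.sum_eq_one, one_mul]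
  rw [hsub]
  calc |∑ s ∈ F, φ s * (c s - a)| ≤ ∑ s ∈ F, |φ s * (c s - a)| := Finset.abs_sum_le_sum_abs _ _
    _ ≤ ∑ s ∈ F, φ s * e := by
        refine Finset.sum_le_sum fun s _ => ?_
        rw [abs_mul, abs_of_nonneg (hφ.nonneg s)]
        rcases eq_or_ne (φ s) 0 with hs | hs
        · simp [hs]
        · exact mul_le_mul_of_nonneg_left (h s (hφ.lt_of_ne_zero s hs)) (hφ.nonneg s)
    _ = e := by rw [← Finset.sum_mul, hφ.sum_eq_one, one_mul]

lemma IsMollifier.abs_sum_mul_tent_sub_le {ν} {δ : ℝ} {F : Finset G} {φ : G → ℝ}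
    (hφ : IsMollifier ν δ F φ) {r : ℝ} (hr : 0 < r) (z : G) :
    |∑ s ∈ F, φ s * (∑ t ∈ F, φ t * tent ν r (z * s⁻¹ * t)) - tent ν r z| ≤ 2 * δ / r := by
  refine hφ.abs_sum_mul_sub_le fun s hs => hφ.abs_sum_mul_sub_le fun t ht => ?_
  have hst := abs_tent_mul_right_sub_le ν hr (z * s⁻¹) t
  have hzs := abs_tent_mul_right_sub_le ν hr z s⁻¹
  rw [map_inv_eq_map] at hzs
  calc |tent ν r (z * s⁻¹ * t) - tent ν r z| ≤ ν t / r + ν s / r :=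
        (abs_sub_le _ _ _).trans (add_le_add hst hzs)
    _ ≤ δ / r + δ / r := by gcongr
    _ = 2 * δ / r := by ring

/-- The tent function of radius `a` for `ν`, as an element of `ℓ²(G)`. -/
noncomputable def l2Tent {a : ℝ} (ha : 0 < a) (hfin : {g | ν g < a}.Finite) :
    lp (fun _ : G => ℝ) 2 :=
  l2Of (tent ν a) (hfin.subset fun _ hg => lt_of_tent_ne_zero ν ha hg)

variable {a : ℝ} (ha : 0 < a) (hfin : {g | ν g < a}.Finite) {F : Finset G}

lemma l2Tent_apply (z : G) : l2Tent ν ha hfin z = tent ν a z := rfl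

lemma support_l2Tent_subset (hF : ∀ g, ν g < a → g ∈ F) :
    Function.support (l2Tent ν ha hfin) ⊆ F := fun g hg => hF g (lt_of_tent_ne_zero ν ha hg)

lemma norm_sq_l2Tent_le (hF : ∀ g, ν g < a → g ∈ F) :
    ‖l2Tent ν ha hfin‖ ^ 2 ≤ ∑ s ∈ F, tent ν a s := by
  rw [l2_norm_sq_eq_sum (support_l2Tent_subset ν ha hfin hF)]
  refine Finset.sum_le_sum fun s _ => ?_
  have hle : tent ν a s ≤ 1 :=
    max_le (sub_le_self _ (div_nonneg (apply_nonneg ν s) ha.le)) zero_le_one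
  rw [l2Tent_apply, sq]
  exact mul_le_of_le_one_left (tent_nonneg ν a s) hle

lemma card_div_four_le_norm_sq_l2Tent {V : Finset G} (hV : ∀ g ∈ V, ν g ≤ a / 2) :
    (V.card : ℝ) / 4 ≤ ‖l2Tent ν ha hfin‖ ^ 2 := by
  refine le_trans ?_ (sum_sq_le_l2_norm_sq _ V)
  have := Finset.card_nsmul_le_sum V (fun s => l2Tent ν ha hfin s ^ 2) (1 / 4) fun s hs => by
    have hhalf := half_le_tent ν ha (hV s hs)
    rw [l2Tent_apply]
    nlinarith
  rw [nsmul_eq_mul] at this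
  linarith

lemma norm_sq_l2Translate_l2Tent_sub_le (hF : ∀ g, ν g < a → g ∈ F) (k : G) :
    ‖l2Translate k (l2Tent ν ha hfin) - l2Tent ν ha hfin‖ ^ 2 ≤ 2 * F.card * (ν k / a) ^ 2 := by
  classical
  have hsupp : Function.support (l2Translate k (l2Tent ν ha hfin) - l2Tent ν ha hfin) ⊆
      (F ∪ k • F : Finset G) := by
    intro z hz
    by_cases hz₀ : tent ν a z = 0
    · have hkz : tent ν a (k⁻¹ * z) ≠ 0 := fun h => hz (by
        change tent ν a (k⁻¹ * z) - tent ν a z = 0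
        rw [h, hz₀, sub_zero])
      exact Finset.mem_union_right _ (Finset.mem_smul_finset.2
        ⟨k⁻¹ * z, hF _ (lt_of_tent_ne_zero ν ha hkz), by simp⟩)
    · exact Finset.mem_union_left _ (hF z (lt_of_tent_ne_zero ν ha hz₀))
  refine (l2_norm_sq_le hsupp (c := ν k / a) fun z => ?_).trans ?_
  · have h := abs_tent_mul_sub_le ν ha k⁻¹ z
    rwa [map_inv_eq_map] at h
  · have hcard : (F ∪ k • F).card ≤ 2 * F.card := by
      have := Finset.card_union_le F (k • F)
      rw [Finset.card_smul_finset] at this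
      omega
    gcongr
    exact_mod_cast hcard

lemma lt_two_mul_of_norm_l2Translate_l2Tent_sub_le {g : G}
    (hg : 10 * ‖l2Translate g (l2Tent ν ha hfin) - l2Tent ν ha hfin‖ ≤ 7 * ‖l2Tent ν ha hfin‖) :
    ν g < 2 * a := by
  set T := l2Tent ν ha hfin
  by_contra! hcon
  have horth : inner ℝ (l2Translate g T) T = 0 := by
    rw [inner_l2Translate (F := hfin.toFinset)
      (support_l2Tent_subset ν ha hfin fun g hg => hfin.mem_toFinset.2 hg)]
    refine Finset.sum_eq_zero fun s _ => ?_
    by_contra hne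
    have hs := lt_of_tent_ne_zero ν ha (left_ne_zero_of_mul hne)
    have hgs := lt_of_tent_ne_zero ν ha (right_ne_zero_of_mul hne)
    have htriangle := map_mul_le_add ν (g * s) s⁻¹
    rw [mul_inv_cancel_right, map_inv_eq_map] at htriangle
    linarith
  have hpyth := norm_sub_sq_real (l2Translate g T) T
  rw [horth, LinearIsometryEquiv.norm_map] at hpyth
  have hpos : 0 < ‖T‖ ^ 2 := by
    have := card_div_four_le_norm_sq_l2Tent ν ha hfin (V := {1})
      (by simpa using half_pos ha |>.le)
    simp only [Finset.card_singleton, Nat.cast_one] at this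
    linarith
  have hsq : (10 * ‖l2Translate g T - T‖) ^ 2 ≤ (7 * ‖T‖) ^ 2 := by gcongr
  nlinarith

/-- The tent function of radius `a`, normalized to a probability kernel. -/
noncomputable def l2Mollifier : lp (fun _ : G => ℝ) 2 :=
  (∑ s ∈ hfin.toFinset, tent ν a s)⁻¹ • l2Tent ν ha hfin

lemma card_div_two_le_sum_tent (ha : 0 < a) {W : Finset G} (hW : ∀ g ∈ W, ν g ≤ a / 2) :
    (W.card : ℝ) / 2 ≤ ∑ s ∈ hfin.toFinset, tent ν a s := by
  have hsub : W ⊆ hfin.toFinset := fun g hg => hfin.mem_toFinset.2 (by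
    have := hW g hg
    change ν g < a
    linarith)
  have hsum := Finset.card_nsmul_le_sum W (tent ν a) (1 / 2) fun s hs => half_le_tent ν ha (hW s hs)
  rw [nsmul_eq_mul, mul_one_div] at hsum
  exact hsum.trans (Finset.sum_le_sum_of_subset_of_nonneg hsub fun s _ _ => tent_nonneg ν a s)

lemma sum_tent_pos (ha : 0 < a) : 0 < ∑ s ∈ hfin.toFinset, tent ν a s := by
  have := card_div_two_le_sum_tent ν hfin ha (W := {1}) (by simpa using half_pos ha |>.le)
  simp only [Finset.card_singleton, Nat.cast_one] at this
  linarith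

lemma isMollifier_l2Mollifier (hF : ∀ g, ν g < a → g ∈ F) :
    IsMollifier ν a F (l2Mollifier ν ha hfin) where
  nonneg s := mul_nonneg (inv_nonneg.2 (sum_tent_pos ν hfin ha).le) (tent_nonneg ν a s)
  sum_eq_one := by
    have hsum : ∑ s ∈ F, tent ν a s = ∑ s ∈ hfin.toFinset, tent ν a s := by
      refine (Finset.sum_subset (fun g hg => hF g (hfin.mem_toFinset.1 hg)) fun g _ hg => ?_).symm
      contrapose! hg
      exact hfin.mem_toFinset.2 (lt_of_tent_ne_zero ν ha hg)
    change ∑ s ∈ F, (∑ s ∈ hfin.toFinset, tent ν a s)⁻¹ * tent ν a s = 1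
    rw [← Finset.mul_sum, hsum, inv_mul_cancel₀ (sum_tent_pos ν hfin ha).ne']
  support_subset g hg := hF g (lt_of_tent_ne_zero ν ha (right_ne_zero_of_mul hg))
  lt_of_ne_zero g hg := lt_of_tent_ne_zero ν ha (right_ne_zero_of_mul hg)

lemma norm_sq_l2Mollifier_le {W : Finset G} (hW₀ : W.Nonempty) (hW : ∀ g ∈ W, ν g ≤ a / 2) :
    ‖l2Mollifier ν ha hfin‖ ^ 2 ≤ 2 / W.card := by
  have : (0 : ℝ) < W.card := Nat.cast_pos.2 hW₀.card_pos
  set Z := ∑ s ∈ hfin.toFinset, tent ν a s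
  have hZ : 0 < Z := sum_tent_pos ν hfin ha
  rw [l2Mollifier, norm_smul, norm_inv, Real.norm_of_nonneg hZ.le, mul_pow]
  calc Z⁻¹ ^ 2 * ‖l2Tent ν ha hfin‖ ^ 2 ≤ Z⁻¹ ^ 2 * Z := by
        gcongr
        exact norm_sq_l2Tent_le ν ha hfin fun g hg => hfin.mem_toFinset.2 hg
    _ = 1 / Z := by field_simp
    _ ≤ 1 / (W.card / 2) := by
        gcongr
        exact card_div_two_le_sum_tent ν hfin ha hW
    _ = 2 / W.card := by field_simp

lemma norm_l2Translate_l2Mollifier_sub_le {W : Finset G} (hW₀ : W.Nonempty)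
    (hW : ∀ g ∈ W, ν g ≤ a / 2) (hF : ∀ g, ν g < a → g ∈ F) (k : G) :
    ‖l2Translate k (l2Mollifier ν ha hfin) - l2Mollifier ν ha hfin‖ ≤
      √(2 * F.card) * (2 / W.card * (ν k / a)) := by
  have : (0 : ℝ) < W.card := Nat.cast_pos.2 hW₀.card_pos
  have := apply_nonneg ν k
  have hsum := card_div_two_le_sum_tent ν hfin ha hW
  have htent : ‖l2Translate k (l2Tent ν ha hfin) - l2Tent ν ha hfin‖ ≤
      √(2 * F.card) * (ν k / a) := by
    refine le_of_sq_le_sq ?_ (by positivity)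
    rw [mul_pow, Real.sq_sqrt (by positivity)]
    exact norm_sq_l2Translate_l2Tent_sub_le ν ha hfin hF k
  rw [l2Mollifier, map_smul, ← smul_sub, norm_smul, norm_inv,
    Real.norm_of_nonneg (sum_tent_pos ν hfin ha).le]
  calc _ ≤ ((W.card : ℝ) / 2)⁻¹ * (√(2 * F.card) * (ν k / a)) := by gcongr
    _ = √(2 * F.card) * (2 / W.card * (ν k / a)) := by
        rw [inv_div]
        ring

lemma sum_norm_l2Translate_l2Mollifier_mul_le {W B : Finset G} (hW₀ : W.Nonempty)
    (hW : ∀ g ∈ W, ν g ≤ a / 2) (hFB : F ⊆ B) {C : ℝ} (hC : 1 ≤ C)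
    (hBW : (B.card : ℝ) ≤ C * W.card) :
    (∑ y ∈ B, ‖l2Translate y (l2Mollifier ν ha hfin)‖) * (√(2 * F.card) * (2 / W.card)) ≤
      4 * C ^ 2 := by
  have hW_pos : (0 : ℝ) < W.card := Nat.cast_pos.2 hW₀.card_pos
  have hFB_card : (F.card : ℝ) ≤ B.card := Nat.cast_le.2 (Finset.card_le_card hFB)
  have hnorm_sq := norm_sq_l2Mollifier_le ν ha hfin hW₀ hW
  set Φ := l2Mollifier ν ha hfin
  have hsqrt : ‖Φ‖ * √(2 * F.card) ≤ 2 * C := by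
    refine le_of_sq_le_sq ?_ (by positivity)
    rw [mul_pow, Real.sq_sqrt (by positivity)]
    calc ‖Φ‖ ^ 2 * (2 * F.card) ≤ (2 / W.card) * (2 * (C * W.card)) := by
          gcongr
          exact hFB_card.trans hBW
      _ = 4 * C := by field_simp; ring
      _ ≤ (2 * C) ^ 2 := by nlinarith
  have hratio : B.card * (2 / W.card : ℝ) ≤ 2 * C := by
    rw [mul_div_assoc', div_le_iff₀ hW_pos]
    linarith
  simp_rw [LinearIsometryEquiv.norm_map]
  rw [Finset.sum_const, nsmul_eq_mul]
  calc (B.card * ‖Φ‖) * (√(2 * F.card) * (2 / W.card))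
      = (‖Φ‖ * √(2 * F.card)) * (B.card * (2 / W.card)) := by ring
    _ ≤ (2 * C) * (2 * C) := by gcongr
    _ = 4 * C ^ 2 := by ring

section TestFunction

variable {ν} {r δ : ℝ} (hr : 0 < r) (hfin : {g | ν g < r}.Finite) {F B : Finset G}
  {φ : lp (fun _ : G => ℝ) 2}

lemma IsMollifier.frameOperator_l2Tent_apply (hφ : IsMollifier ν δ F φ)
    (hB : ∀ g, ν g < r + δ → g ∈ B) (z : G) :
    frameOperator B (fun y => l2Translate y φ) (l2Tent ν hr hfin) z =
      ∑ s ∈ F, φ s * ∑ t ∈ F, φ t * tent ν r (z * s⁻¹ * t) := by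
  refine frameOperator_l2Translate_apply hφ.support_subset (fun y hy => hB y ?_) z
  rw [inner_l2Translate hφ.support_subset] at hy
  obtain ⟨s, _, hs⟩ := Finset.exists_ne_zero_of_sum_ne_zero hy
  have hs_lt := hφ.lt_of_ne_zero s (left_ne_zero_of_mul hs)
  have hys_lt := lt_of_tent_ne_zero ν hr (right_ne_zero_of_mul hs)
  have htriangle := map_mul_le_add ν (y * s) s⁻¹
  rw [mul_inv_cancel_right, map_inv_eq_map] at htriangle
  linarith

lemma IsMollifier.support_sub_frameOperator_l2Tent_subset (hφ : IsMollifier ν δ F φ)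
    (hδ : 0 < δ) (hF : ∀ g, ν g < r + 2 * δ → g ∈ F) (hB : ∀ g, ν g < r + δ → g ∈ B) :
    Function.support (l2Tent ν hr hfin -
      frameOperator B (fun y => l2Translate y φ) (l2Tent ν hr hfin)) ⊆ F := by
  intro z hz
  refine hF z ?_
  by_cases hz₀ : tent ν r z = 0
  · rw [Function.mem_support, lp.coeFn_sub, Pi.sub_apply, hφ.frameOperator_l2Tent_apply hr hfin hB,
      l2Tent_apply, hz₀, zero_sub, neg_ne_zero] at hz
    obtain ⟨s, _, hs⟩ := Finset.exists_ne_zero_of_sum_ne_zero hz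
    obtain ⟨t, _, ht⟩ := Finset.exists_ne_zero_of_sum_ne_zero (right_ne_zero_of_mul hs)
    have hs_lt := hφ.lt_of_ne_zero s (left_ne_zero_of_mul hs)
    have ht_lt := hφ.lt_of_ne_zero t (left_ne_zero_of_mul ht)
    have hzst := lt_of_tent_ne_zero ν hr (right_ne_zero_of_mul ht)
    have htriangle := map_mul_le_add ν (z * s⁻¹ * t) (t⁻¹ * s)
    have hts := map_mul_le_add ν t⁻¹ s
    rw [show z * s⁻¹ * t * (t⁻¹ * s) = z by group] at htriangle
    rw [map_inv_eq_map] at hts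
    linarith
  · linarith [lt_of_tent_ne_zero ν hr hz₀]

lemma IsMollifier.norm_sub_frameOperator_l2Tent_le (hφ : IsMollifier ν δ F φ) (hδ : 0 < δ)
    (hF : ∀ g, ν g < r + 2 * δ → g ∈ F) (hB : ∀ g, ν g < r + δ → g ∈ B) {V : Finset G}
    (hV : ∀ g ∈ V, ν g ≤ r / 2) {C : ℝ} (hC : 1 ≤ C) (hFV : (F.card : ℝ) ≤ C * V.card)
    (hδr : 80 * C * δ ≤ r) :
    20 * ‖l2Tent ν hr hfin - frameOperator B (fun y => l2Translate y φ) (l2Tent ν hr hfin)‖ ≤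
      ‖l2Tent ν hr hfin‖ := by
  have hsmall : C * (2 * δ / r) ^ 2 ≤ 1 / 1600 := by
    have hCδ : C * (δ / r) ≤ 1 / 80 := by
      rw [← mul_div_assoc, div_le_iff₀ hr]
      linarith
    have hle : δ / r ≤ C * (δ / r) := le_mul_of_one_le_left (by positivity) hC
    have hpos : 0 ≤ δ / r := by positivity
    calc C * (2 * δ / r) ^ 2 = 4 * (C * (δ / r)) * (δ / r) := by ring
      _ ≤ 1 / 1600 := by nlinarith
  have hdiff := l2_norm_sq_le (hφ.support_sub_frameOperator_l2Tent_subset hr hfin hδ hF hB)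
    (c := 2 * δ / r) fun z => by
      rw [lp.coeFn_sub, Pi.sub_apply, hφ.frameOperator_l2Tent_apply hr hfin hB, abs_sub_comm]
      exact hφ.abs_sum_mul_tent_sub_le hr z
  refine le_of_sq_le_sq ?_ (norm_nonneg _)
  rw [mul_pow]
  calc _ ≤ 20 ^ 2 * (F.card * (2 * δ / r) ^ 2) := by gcongr
    _ ≤ 20 ^ 2 * ((C * V.card) * (2 * δ / r) ^ 2) := by gcongr
    _ = 400 * V.card * (C * (2 * δ / r) ^ 2) := by ring
    _ ≤ 400 * V.card * (1 / 1600) := by gcongr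
    _ = (V.card : ℝ) / 4 := by ring
    _ ≤ ‖l2Tent ν hr hfin‖ ^ 2 := card_div_four_le_norm_sq_l2Tent ν hr hfin hV

end TestFunction

theorem exists_regularRepresentation_groupSeminorm [DecidableEq G] {r δ C₁ C₂ : ℝ}
    (hr : 0 < r) (hδ : 0 < δ) (hC₁ : 1 ≤ C₁) (hC₂ : 1 ≤ C₂) (hδr : 80 * C₁ * δ ≤ r)
    {U V W B : Finset G} (hU : ∀ g, ν g ≤ 2 * r → g ∈ U) (hV : ∀ g ∈ V, ν g ≤ r / 2)
    (hUV : (U.card : ℝ) ≤ C₁ * V.card) (hW : ∀ g ∈ W, ν g ≤ δ / 2) (hW₀ : W.Nonempty)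
    (hUB : U ⊆ B) (hBW : (B.card : ℝ) ≤ C₂ * W.card) {D : ℕ} (hD : 8 * C₂ ≤ D) :
    ∃ x : GroupSeminorm G, (∀ g, x g ≤ 1 / 2 → ν g ≤ 2 * r) ∧
      (∀ g t, 0 ≤ t → (∀ y ∈ B, ν (y⁻¹ * g * y) ≤ t) → x g ≤ 16 * D * C₂ ^ 2 / δ * t) ∧
      (∀ g κ, 0 ≤ κ → ∀ m : ℕ, 0 < m →
        (∀ i < m, (((g ^ i • B) \ B).card : ℝ) ≤ κ * W.card) →
        (∀ i < m, x (g ^ i) ≤ 1 / 2) → x g ≤ 4 / m + 64 * D * (D + 1) * κ) := by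
  have : (0 : ℝ) < W.card := Nat.cast_pos.2 hW₀.card_pos
  have hδr' : 2 * δ ≤ r := by nlinarith
  have hfin : ∀ {c}, c ≤ 2 * r → {g | ν g < c}.Finite := fun hc =>
    U.finite_toSet.subset fun g hg => hU g (le_of_lt (hg.trans_le hc))
  have hδU : ∀ g, ν g < δ → g ∈ U := fun g hg => hU g (by linarith)
  set Φ := l2Mollifier ν hδ (hfin (by linarith))
  have hΦ : ‖Φ‖ ^ 2 ≤ 2 / W.card := norm_sq_l2Mollifier_le ν hδ _ hW₀ hW
  obtain ⟨x, hx_test, hx_lip, hx_pow⟩ := exists_spectral_groupSeminorm l2Translate B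
    (fun y => l2Translate y Φ) (D := D) (by
      simp_rw [LinearIsometryEquiv.norm_map]
      rw [Finset.sum_const, nsmul_eq_mul]
      calc 4 * ((B.card : ℝ) * ‖Φ‖ ^ 2) ≤ 4 * ((C₂ * W.card) * (2 / W.card)) := by gcongr
        _ = 8 * C₂ := by field_simp; ring
        _ ≤ D := hD)
  refine ⟨x, fun g hg => ?_, fun g t ht hg => ?_, fun g κ hκ m hm hB hx => ?_⟩
  · have hmoll : IsMollifier ν δ U Φ := isMollifier_l2Mollifier ν hδ _ hδU
    exact (lt_two_mul_of_norm_l2Translate_l2Tent_sub_le ν hr (hfin (by linarith)) (hx_test _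
      (hmoll.norm_sub_frameOperator_l2Tent_le hr _ hδ (fun g hg => hU g (by linarith))
        (fun g hg => hUB (hU g (by linarith))) hV hC₁ hUV hδr) g hg)).le
  · refine (hx_lip g (√(2 * U.card) * (2 / W.card * (t / δ))) (by positivity)
      fun y hy => ?_).trans ?_
    · rw [← norm_map_conj_sub_eq]
      refine (norm_l2Translate_l2Mollifier_sub_le ν hδ _ hW₀ hW hδU _).trans ?_
      gcongr
      exact hg y hy
    · have hsum := sum_norm_l2Translate_l2Mollifier_mul_le ν hδ (hfin (by linarith)) hW₀ hW hUB
        hC₂ hBW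
      calc _ = 4 * (D : ℝ) * (t / δ) *
            ((∑ y ∈ B, ‖l2Translate y Φ‖) * (√(2 * U.card) * (2 / W.card))) := by ring
        _ ≤ 4 * D * (t / δ) * (4 * C₂ ^ 2) := by gcongr
        _ = 16 * D * C₂ ^ 2 / δ * t := by ring
  · refine (hx_pow g (4 * κ) (by positivity) m hm (fun i hi v => ?_) hx).trans_eq (by ring)
    refine (norm_map_frameOperator_sub_frameOperator_map_le l2Translate Φ B (g ^ i) v).trans ?_
    have hi_card := hB i hi
    calc 2 * (((g ^ i • B) \ B).card : ℝ) * ‖Φ‖ ^ 2 * ‖v‖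
        ≤ 2 * (κ * W.card) * (2 / W.card) * ‖v‖ := by gcongr
      _ = 4 * κ * ‖v‖ := by field_simp; ring

end Mollifier

/-! ### Elements with many small powers -/

section SmallPowers

variable {G : Type*} [Group G]

/-- The elements whose first `M` powers are `ε`-small. -/
def powSmall (σ : GroupSeminorm G) (ε : ℝ) (M : ℕ) : Set G := {g | ∀ i ≤ M, σ (g ^ i) ≤ ε}

lemma one_mem_powSmall (σ : GroupSeminorm G) {ε : ℝ} (hε : 0 ≤ ε) (M : ℕ) :
    1 ∈ powSmall σ ε M := fun i _ => by simpa using hε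

lemma inv_mem_powSmall {σ : GroupSeminorm G} {ε : ℝ} {M : ℕ} {g : G}
    (h : g ∈ powSmall σ ε M) : g⁻¹ ∈ powSmall σ ε M := fun i hi => by
  rw [inv_pow, map_inv_eq_map]
  exact h i hi

lemma powSmall_anti (σ : GroupSeminorm G) (ε : ℝ) : Antitone (powSmall σ ε) :=
  fun _ _ hMN _ hg i hi => hg i (hi.trans hMN)

lemma le_of_mem_powSmall {σ : GroupSeminorm G} {ε : ℝ} {M : ℕ} {g : G}
    (h : g ∈ powSmall σ ε M) (hM : 1 ≤ M) : σ g ≤ ε := by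
  simpa using h 1 hM

lemma mem_pow_of_wordSeminorm_lt_one {ω : G → ℝ} {h0 : ∀ g, 0 ≤ ω g}
    {hinv : ∀ g, ω g⁻¹ = ω g} {Q : Set G} (h1 : 1 ∈ Q) {n : ℕ} (hn : 0 < n)
    (hQ : ∀ g ∈ Q, 1 / n ≤ ω g) (hQc : ∀ g ∉ Q, 1 ≤ ω g) {w : G}
    (hw : wordSeminorm ω h0 hinv w < 1) : w ∈ Q ^ n := by
  obtain ⟨l, rfl, hl⟩ := exists_list_of_wordSeminorm_lt ω h0 hinv hw
  have hlQ : ∀ g ∈ l, g ∈ Q := by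
    intro g hg
    by_contra hgQ
    linarith [hQc g hgQ, le_sum_map_of_mem h0 hg]
  have hlen : l.length * (1 / n : ℝ) ≤ (l.map ω).sum := by
    have := List.card_nsmul_le_sum (l.map ω) (1 / n : ℝ)
      (by simpa using fun g hg => hQ g (hlQ g hg))
    simpa using this
  rw [mul_one_div] at hlen
  have hln : l.length ≤ n := by
    have := hlen.trans_lt hl
    rw [div_lt_one (by positivity)] at this
    exact_mod_cast this.le
  exact Set.pow_subset_pow_right h1 hln
    (Set.mem_pow.2 ⟨fun i => ⟨l.get i, hlQ _ (l.get_mem i)⟩, by simp⟩)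

theorem pow_subset_pow_mul_of_powSmall (ℓ : GroupSeminorm G) {a ε L : ℝ} (ha : 0 < a)
    (ha1 : a ≤ 1) (hε₀ : 0 ≤ ε) {F V : Finset G} (hF : ∀ g, ℓ g ≤ 2 → g ∈ F)
    (hF3 : ∀ g ∈ F, ℓ g ≤ 3) (hV : ∀ g ∈ V, conjSup ℓ 2 g ≤ a / 2)
    (hsmall : 6 * F.card * ε * L < a * V.card) {Q : Set G} (h1 : 1 ∈ Q)
    (hinv : ∀ g ∈ Q, g⁻¹ ∈ Q) {n : ℕ} (hn : 0 < n) (hQn : ∀ g ∈ Q ^ n, ℓ g ≤ 1)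
    (hQ : Q ⊆ powSmall (conjSup ℓ 5) ε n) {N : ℕ} (hN : (N : ℝ) ≤ L * n) :
    Q ^ N ⊆ Q ^ n * {s | conjSup ℓ 2 s ≤ 2 * a} := by
  classical
  intro z hz
  obtain ⟨f, rfl⟩ := Set.mem_pow.1 hz
  set ω : G → ℝ := fun g => if g ∈ Q then 1 / n else 1
  have hωQ : ∀ g ∈ Q, ω g = 1 / n := fun g hg => if_pos hg
  have hω₀ : ∀ g, 0 ≤ ω g := fun g => by simp only [ω]; split_ifs <;> positivity
  have hωinv : ∀ g, ω g⁻¹ = ω g := fun g => by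
    have : g⁻¹ ∈ Q ↔ g ∈ Q := ⟨fun h => by simpa using hinv _ h, hinv g⟩
    simp only [ω, this]
  have hlam : ∀ w, wordSeminorm ω hω₀ hωinv w < 1 → w ∈ Q ^ n := fun w =>
    mem_pow_of_wordSeminorm_lt_one h1 hn (fun g hg => (hωQ g hg).ge) fun g hg => (if_neg hg).ge
  have hsum : ((List.ofFn fun i => (f i : G)).map ω).sum ≤ L := by
    have : ∀ i, ω (f i) = 1 / n := fun i => hωQ _ (f i).2
    rw [List.map_ofFn, List.sum_ofFn]
    simp only [Function.comp_apply, this, Finset.sum_const, Finset.card_univ, Fintype.card_fin,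
      nsmul_eq_mul]
    rwa [mul_one_div, div_le_iff₀ (by positivity)]
  obtain ⟨w, s, hw, hs, hws⟩ := exists_list_prod_eq_mul_of_sum_le
    (wordSeminorm ω hω₀ hωinv) (conjSup ℓ 2) ha
    (fun w s hw hs => hF _ <| by
      linarith [map_mul_le_add ℓ w s, hQn w (hlam w hw), self_le_conjSup ℓ zero_le_two s])
    hV ω hε₀ hsmall (by
      simp only [List.forall_mem_ofFn_iff]
      refine fun j => ⟨wordSeminorm_le ω hω₀ hωinv _, n, hn, ?_, fun i hi y hy => ?_⟩
      · rw [hωQ _ (f j).2, mul_one_div_cancel (by positivity)]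
      · exact (conjSup_conj_le ℓ (hF3 y hy) (by norm_num) _).trans (hQ (f j).2 i hi)) hsum
  exact ⟨w, hlam w hw, s, hs, hws.symm⟩

-- Among the increasing sets `P ^ t * A`, two consecutive ones have almost the same size.
lemma exists_card_smul_sdiff_le [DecidableEq G] {P A : Set G} (h1 : 1 ∈ P) {S : Finset G} {p : ℕ}
    (hS : ∀ t ≤ p, P ^ t * A ⊆ S) {c : ℝ} (hc : (S.card : ℝ) ≤ p * c) (hp : 0 < p) :
    ∃ Y ⊆ S, A ⊆ Y ∧ ∀ h ∈ P, (((h • Y) \ Y).card : ℝ) ≤ c := by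
  classical
  set Y : ℕ → Finset G := fun t => S.filter (· ∈ P ^ t * A)
  have hYmem : ∀ t ≤ p, ∀ g ∈ P ^ t * A, g ∈ Y t := fun t ht g hg =>
    Finset.mem_filter.2 ⟨hS t ht hg, hg⟩
  obtain ⟨t, ht, htc⟩ : ∃ t ∈ Finset.range p, ((Y (t + 1)).card : ℝ) - (Y t).card ≤ c := by
    refine Finset.exists_le_of_sum_le (by simpa using hp.ne') ?_
    rw [Finset.sum_range_sub fun t => ((Y t).card : ℝ)]
    have hYp : ((Y p).card : ℝ) ≤ S.card := by exact_mod_cast Finset.card_filter_le _ _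
    simp only [Finset.sum_const, Finset.card_range, nsmul_eq_mul]
    linarith [Nat.cast_nonneg (α := ℝ) (Y 0).card]
  rw [Finset.mem_range] at ht
  have hsub : ∀ h ∈ P, h • Y t ⊆ Y (t + 1) := by
    intro h hh _ hhg
    obtain ⟨g, hg, rfl⟩ := Finset.mem_smul_finset.1 hhg
    refine hYmem (t + 1) ht _ ?_
    rw [pow_succ', mul_assoc]
    exact Set.mul_mem_mul hh (Finset.mem_filter.1 hg).2
  have hmono : Y t ⊆ Y (t + 1) := by simpa using hsub 1 h1
  refine ⟨Y t, Finset.filter_subset _ _, fun g hg => hYmem t ht.le g ?_, fun h hh => ?_⟩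
  · exact ⟨1, Set.one_mem_pow h1, g, hg, one_mul g⟩
  · have hcard : (((h • Y t) \ Y t).card : ℝ) ≤ (Y (t + 1) \ Y t).card := by
      exact_mod_cast Finset.card_le_card (Finset.sdiff_subset_sdiff (hsub h hh) le_rfl)
    rw [Finset.cast_card_sdiff hmono] at hcard
    exact hcard.trans htc

lemma le_of_forall_pow_le_imp_le (x : GroupSeminorm G) {a b c : ℝ} (hb : 0 ≤ b) (hc : 0 ≤ c)
    (habc : b + c ≤ a) {Q : Set G} (hQ : ∀ q ∈ Q, x q ≤ c) {n : ℕ}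
    (hstep : ∀ k, 0 < k → k < n → (∀ g ∈ Q ^ k, x g ≤ a) → ∀ g ∈ Q ^ k, x g ≤ b) :
    ∀ g ∈ Q ^ n, x g ≤ a := by
  induction n with
  | zero => simpa using (by linarith : 0 ≤ a)
  | succ n ih =>
    intro g hg
    rw [pow_succ] at hg
    obtain ⟨w, hw, q, hq, rfl⟩ := Set.mem_mul.1 hg
    have hxw : x w ≤ b := by
      rcases n.eq_zero_or_pos with rfl | hn
      · obtain rfl : w = 1 := by simpa using hw
        simpa using hb
      · exact hstep n hn n.lt_succ_self
          (ih fun k hk hkn => hstep k hk (hkn.trans n.lt_succ_self)) w hw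
    linarith [map_mul_le_add x w q, hQ q hq]

lemma pow_subset_pow_mul_of_hasSmallPartitions {ℓ : GroupSeminorm G} {C : ℝ → ℕ}
    (hfin : ∀ R, {g | ℓ g ≤ R}.Finite) (hC : HasSmallPartitions ℓ ℓ 20 C) {a ε L : ℝ}
    (ha : 0 < a) (ha1 : a ≤ 1) (hε₀ : 0 ≤ ε) (hL : 0 ≤ L)
    (hsmall : 6 * (C (a / 2 / 3) ^ C (a / 2 / 3) : ℕ) * ε * L < a) {Q : Set G} (h1 : 1 ∈ Q)
    (hinv : ∀ g ∈ Q, g⁻¹ ∈ Q) {n : ℕ} (hn : 0 < n) (hQn : ∀ g ∈ Q ^ n, ℓ g ≤ 1)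
    (hQ : Q ⊆ powSmall (conjSup ℓ 5) ε n) {N : ℕ} (hN : (N : ℝ) ≤ L * n) :
    Q ^ N ⊆ Q ^ n * {s | conjSup ℓ 2 s ≤ 2 * a} := by
  classical
  set F := (hfin 2).toFinset
  set V := F.filter fun g => conjSup ℓ 2 g ≤ a / 2
  have hF : ∀ g, g ∈ F ↔ ℓ g ≤ 2 := fun g => by simp [F]
  have hV : ∀ g, conjSup ℓ 2 g ≤ a / 2 → g ∈ V := fun g hg => by
    rw [Finset.mem_filter, hF]
    exact ⟨by linarith [self_le_conjSup ℓ zero_le_two g], hg⟩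
  have hV₀ : (0 : ℝ) < V.card := by
    have : V.Nonempty := ⟨1, hV 1 (by rw [map_one_eq_zero]; positivity)⟩
    exact_mod_cast this.card_pos
  have hFV : (F.card : ℝ) ≤ (C (a / 2 / 3) ^ C (a / 2 / 3) : ℕ) * V.card :=
    (hC.conjSup (S := 18) (ρ := 2) (by norm_num) (by norm_num)).card_le (half_pos ha)
      (fun g hg => ((hF g).1 hg).trans (by norm_num)) hV
  refine pow_subset_pow_mul_of_powSmall ℓ (V := V) ha ha1 hε₀ (fun g => (hF g).2)
    (fun g hg => ((hF g).1 hg).trans (by norm_num)) (fun g hg => (Finset.mem_filter.1 hg).2)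
    ?_ h1 hinv hn hQn hQ hN
  calc 6 * (F.card : ℝ) * ε * L
      ≤ 6 * ((C (a / 2 / 3) ^ C (a / 2 / 3) : ℕ) * V.card) * ε * L := by gcongr
    _ = (6 * (C (a / 2 / 3) ^ C (a / 2 / 3) : ℕ) * ε * L) * V.card := by ring
    _ < a * V.card := by gcongr

end SmallPowers

theorem exists_groupSeminorm_of_hasSmallPartitions (C : ℝ → ℕ) {r : ℝ} (hr : 0 < r) :
    ∃ K > 0, ∃ A > 0, ∀ (G : Type*) [Group G] [DecidableEq G] (ℓ ν : GroupSeminorm G) (R : ℝ),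
      HasSmallPartitions ℓ ν R C → ∀ B : Finset G, (∀ g, ν g ≤ 2 * r → g ∈ B) →
      (∀ g ∈ B, ℓ g ≤ R) → ∃ x : GroupSeminorm G, (∀ g, x g ≤ 1 / 2 → ν g ≤ 2 * r) ∧
        (∀ g t, 0 ≤ t → (∀ y ∈ B, ν (y⁻¹ * g * y) ≤ t) → x g ≤ K * t) ∧
        ∀ g κ, 0 ≤ κ → ∀ m : ℕ, 0 < m → (∀ i < m, (((g ^ i • B) \ B).card : ℝ) ≤ κ * B.card) →
          (∀ i < m, x (g ^ i) ≤ 1 / 2) → x g ≤ 4 / m + A * κ := by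
  obtain ⟨C₁, hC₁, hC₁'⟩ : ∃ c : ℝ, 1 ≤ c ∧ (C (r / 2) : ℝ) ≤ c :=
    ⟨max 1 _, le_max_left _ _, le_max_right _ _⟩
  obtain ⟨δ, hδ, hδr⟩ : ∃ δ : ℝ, 0 < δ ∧ 80 * C₁ * δ = r :=
    ⟨r / (80 * C₁), by positivity, by field_simp⟩
  obtain ⟨C₂, hC₂, hC₂'⟩ : ∃ c : ℝ, 1 ≤ c ∧ (C (δ / 2) : ℝ) ≤ c :=
    ⟨max 1 _, le_max_left _ _, le_max_right _ _⟩
  obtain ⟨D, hD⟩ := exists_nat_ge (8 * C₂)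
  have hD₀ : (0 : ℝ) < D := by linarith
  refine ⟨16 * D * C₂ ^ 2 / δ, by positivity, 64 * D * (D + 1) * C₂, by positivity, ?_⟩
  intro G _ _ ℓ ν R hC B hB hBR
  set S : ℝ → Finset G := fun t => B.filter (ν · ≤ t)
  have hS_le : ∀ t, ∀ g ∈ S t, ν g ≤ t := fun t g hg => (Finset.mem_filter.1 hg).2
  have hS_mem : ∀ t ≤ 2 * r, ∀ g, ν g ≤ t → g ∈ S t := fun t ht g hg =>
    Finset.mem_filter.2 ⟨hB g (hg.trans ht), hg⟩
  have hδr' : δ / 2 ≤ 2 * r := by nlinarith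
  have hBW : (B.card : ℝ) ≤ C₂ * (S (δ / 2)).card :=
    (hC.card_le (half_pos hδ) hBR (hS_mem _ hδr')).trans (by gcongr)
  obtain ⟨x, hx_test, hx_lip, hx_pow⟩ := exists_regularRepresentation_groupSeminorm ν
    (U := S (2 * r)) (V := S (r / 2)) hr hδ hC₁ hC₂ hδr.le (hS_mem _ le_rfl) (hS_le _)
    ((hC.card_le (half_pos hr) (fun g hg => hBR g (Finset.filter_subset _ _ hg))
      (hS_mem _ (by linarith))).trans (by gcongr))
    (hS_le _) ⟨1, hS_mem _ hδr' 1 (by rw [map_one_eq_zero]; positivity)⟩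
    (Finset.filter_subset _ _) hBW hD
  refine ⟨x, hx_test, hx_lip, fun g κ hκ m hm hg hxg => ?_⟩
  refine (hx_pow g (κ * C₂) (by positivity) m hm (fun i hi => (hg i hi).trans ?_) hxg).trans_eq
    (by ring)
  calc κ * (B.card : ℝ) ≤ κ * (C₂ * (S (δ / 2)).card) := by gcongr
    _ = κ * C₂ * (S (δ / 2)).card := by ring

-- Powers of elements of `Q ^ k` are long products, which can be shortened: so the bound `a` on
-- `Q ^ k` improves itself to `b`.
lemma le_of_pow_subset_pow_mul {G : Type*} [Group G] (x : GroupSeminorm G) {a b c d : ℝ}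
    (hb : 0 ≤ b) (hc : 0 ≤ c) (habc : b + c ≤ a) (hacd : a + c ≤ d) {Q E : Set G} (h1 : 1 ∈ Q)
    (hQ : ∀ q ∈ Q, x q ≤ c) (hE : ∀ s ∈ E, x s ≤ c) {n m : ℕ}
    (hshort : ∀ k, 0 < k → k < n → ∀ i < m, Q ^ (k * i) ⊆ Q ^ k * E)
    (hpow : ∀ g ∈ Q ^ n, (∀ i < m, x (g ^ i) ≤ d) → x g ≤ b) : ∀ g ∈ Q ^ n, x g ≤ a := by
  refine le_of_forall_pow_le_imp_le x hb hc habc hQ fun k hk hkn hQk g hg =>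
    hpow g (Set.pow_subset_pow_right h1 hkn.le hg) fun i hi => ?_
  obtain ⟨w, hw, s, hs, hws⟩ := hshort k hk hkn i hi (pow_mul Q k i ▸ Set.pow_mem_pow hg)
  rw [← hws]
  linarith [map_mul_le_add x w s, hQk w hw, hE s hs]

-- Apply `le_of_pow_subset_pow_mul` to the seminorm of an almost `Q ^ (128 * n)`-invariant set.
theorem exists_pow_le_quarter (C : ℝ → ℕ) : ∃ η > 0, η ≤ 1 / 2 ∧ ∃ p : ℕ, 0 < p ∧
    ∀ (G : Type*) [Group G] (ℓ : GroupSeminorm G), (∀ R, {g | ℓ g ≤ R}.Finite) →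
      HasSmallPartitions ℓ ℓ 20 C → ∀ Q : Set G, 1 ∈ Q → (∀ q ∈ Q, conjSup ℓ 2 q ≤ η) →
      ∀ n, 0 < n → (∀ g ∈ Q ^ n, ℓ g ≤ 1) →
      (∀ k, 0 < k → k ≤ n → ∀ N ≤ 128 * p * k, Q ^ N ⊆ Q ^ k * {s | conjSup ℓ 2 s ≤ η}) →
      ∀ g ∈ Q ^ n, ℓ g ≤ 1 / 4 := by
  classical
  obtain ⟨K, hK, A, hA, hseminorm⟩ :=
    exists_groupSeminorm_of_hasSmallPartitions C (r := 1 / 8) (by norm_num)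
  obtain ⟨κ, hκ, hAκ⟩ : ∃ κ > 0, A * κ = 1 / 32 := ⟨1 / (32 * A), by positivity, by field_simp⟩
  obtain ⟨p, hp⟩ := exists_nat_gt (C (1 / 4) / κ)
  have hp₀ : 0 < p := by exact_mod_cast hp.trans_le' (by positivity : 0 ≤ C (1 / 4) / κ)
  rw [div_lt_iff₀ hκ] at hp
  set η : ℝ := min (1 / 2) (1 / (16 * K))
  have hη : K * η ≤ 1 / 16 := by
    calc K * η ≤ K * (1 / (16 * K)) := by gcongr; exact min_le_right _ _
      _ = 1 / 16 := by field_simp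
  have hη2 : η ≤ 1 / 2 := min_le_left _ _
  refine ⟨η, by positivity, hη2, p, hp₀, ?_⟩
  intro G _ ℓ hfin hC Q h1 hQη n hn hQn hshort
  set S : ℝ → Finset G := fun R => (hfin R).toFinset
  have hS : ∀ R g, g ∈ S R ↔ ℓ g ≤ R := fun R g => by simp [S]
  have hcard : ((S 2).card : ℝ) ≤ p * (κ * (S (1 / 4)).card) := by
    refine (hC.card_le (δ := 1 / 4) (by norm_num)
      (fun g hg => ((hS _ g).1 hg).trans (by norm_num)) fun g => (hS _ g).2).trans ?_
    rw [← mul_assoc]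
    gcongr
  have hproducts : ∀ t ≤ p, (Q ^ (128 * n)) ^ t * {s | ℓ s ≤ 1 / 4} ⊆ S 2 := by
    rintro t ht _ ⟨q, hq, s, hs, rfl⟩
    simp only [← pow_mul] at hq
    obtain ⟨w, hw, v, hv, rfl⟩ := hshort n hn le_rfl (128 * n * t) (by nlinarith) hq
    replace hs : ℓ s ≤ 1 / 4 := hs
    replace hv : conjSup ℓ 2 v ≤ η := hv
    refine (hS _ _).2 ?_
    linarith [map_mul_le_add ℓ (w * v) s, map_mul_le_add ℓ w v, hQn w hw,
      self_le_conjSup ℓ zero_le_two v]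
  obtain ⟨Y, hYS, hAY, hY⟩ := exists_card_smul_sdiff_le (Set.one_mem_pow h1) hproducts hcard hp₀
  have hSY : (S (1 / 4)).card ≤ Y.card := Finset.card_le_card fun g hg => hAY ((hS _ g).1 hg)
  obtain ⟨x, hx_test, hx_lip, hx_pow⟩ := hseminorm G ℓ ℓ 20 hC Y
    (fun g hg => hAY (hg.trans_eq (by norm_num)))
    fun g hg => ((hS _ g).1 (hYS hg)).trans (by norm_num)
  have hxη : ∀ {s}, conjSup ℓ 2 s ≤ η → x s ≤ 1 / 16 := fun {s} hs =>
    (hx_lip s η (by positivity) fun y hy =>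
      (le_conjSup ℓ ((hS _ y).1 (hYS hy)) s).trans hs).trans hη
  have hx : ∀ g ∈ Q ^ n, x g ≤ 1 / 8 := by
    refine le_of_pow_subset_pow_mul x (b := 1 / 16) (c := 1 / 16) (d := 1 / 2) (m := 128)
      (by norm_num) (by norm_num) (by norm_num) (by norm_num) h1 (fun q hq => hxη (hQη q hq))
      (fun s => hxη) (fun k hk hkn i hi => hshort k hk hkn.le (k * i) ?_) fun g hg hgx => ?_
    · linarith [Nat.mul_le_mul hi.le (Nat.le_mul_of_pos_left k hp₀)]
    · refine (hx_pow g κ hκ.le 128 (by norm_num) (fun i hi => ?_) hgx).trans_eq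
        (by rw [hAκ]; norm_num)
      have hgi : g ^ i ∈ Q ^ (n * i) := pow_mul Q n i ▸ Set.pow_mem_pow hg
      have hni : n * i ≤ 128 * n := by linarith [Nat.mul_le_mul_right n hi.le]
      refine (hY _ (Set.pow_subset_pow_right h1 hni hgi)).trans ?_
      gcongr
  exact fun g hg => (hx_test g ((hx g hg).trans (by norm_num))).trans_eq (by norm_num)

theorem exists_powSmall_pow_le_one (C : ℝ → ℕ) : ∃ ε : ℝ, 0 < ε ∧ ε ≤ 1 / 4 ∧
    ∀ (G : Type*) [Group G] (ℓ : GroupSeminorm G), (∀ R, {g | ℓ g ≤ R}.Finite) →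
      HasSmallPartitions ℓ ℓ 20 C → ∀ M : ℕ, ∀ g ∈ powSmall (conjSup ℓ 5) ε M ^ M, ℓ g ≤ 1 := by
  obtain ⟨η, hη₀, hη, p, hp, hquarter⟩ := exists_pow_le_quarter C
  obtain ⟨a, rfl⟩ : ∃ a, η = 2 * a := ⟨η / 2, by ring⟩
  set c : ℕ := C (a / 2 / 3) ^ C (a / 2 / 3)
  have ha : 0 < a := by linarith
  have hp1 : (1 : ℝ) ≤ p := by exact_mod_cast hp
  set ε : ℝ := a / (6 * (c + 1) * (128 * p))
  have hε₀ : 0 < ε := by positivity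
  have hεa : ε ≤ a := div_le_self ha.le (by nlinarith [Nat.cast_nonneg (α := ℝ) c])
  have hsmall : 6 * c * ε * (128 * p) < a := by
    calc 6 * c * ε * (128 * p) < 6 * (c + 1) * ε * (128 * p) := by gcongr; linarith
      _ = a := by simp only [ε]; field_simp
  refine ⟨ε, hε₀, hεa.trans (by linarith), fun G _ ℓ hfin hC M => ?_⟩
  set Q := powSmall (conjSup ℓ 5) ε M
  rcases M.eq_zero_or_pos with rfl | hM
  · simp
  have h1 : 1 ∈ Q := one_mem_powSmall _ hε₀.le M
  have hQε : ∀ q ∈ Q, conjSup ℓ 5 q ≤ ε := fun q hq => le_of_mem_powSmall hq hM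
  refine le_of_forall_pow_le_imp_le ℓ (b := 1 / 4) (c := 1 / 4) (by norm_num) (by norm_num)
    (by norm_num) (fun q hq => ?_) fun n hn hnM hQn => ?_
  · linarith [self_le_conjSup ℓ (by norm_num : (0 : ℝ) ≤ 5) q, hQε q hq]
  · refine hquarter G ℓ hfin hC Q h1 (fun q hq => ?_) n hn hQn fun k hk hkn N hN => ?_
    · linarith [conjSup_mono ℓ (by norm_num : (2 : ℝ) ≤ 5) q, hQε q hq]
    · exact pow_subset_pow_mul_of_hasSmallPartitions hfin hC ha (by linarith) hε₀.le
        (by positivity) hsmall h1 (fun _ => inv_mem_powSmall) hk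
        (fun g hg => hQn g (Set.pow_subset_pow_right h1 hkn hg))
        (powSmall_anti _ _ (hkn.trans hnM.le)) (by exact_mod_cast hN)

/-! ### Trapping times -/

-- With `F M j` a limit of `y n M j` along a nonprincipal ultrafilter, `s = sup_j inf_M F M j`.
theorem exists_stabilizing_indices {ι : Type*} {y : ℕ → ℕ → ℕ → ℝ} {c : ℝ}
    (h0 : ∀ n M j, 0 ≤ y n M j) (hc : ∀ n M j, y n M j ≤ c)
    (hanti : ∀ n j, Antitone fun M => y n M j) {κ : ι → ℝ} (hκ : ∀ i, 0 < κ i) (m : ι → ℕ) :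
    ∃ (s : ℝ) (j M : ι → ℕ), (∀ i, j i + m i ≤ M i) ∧ ∀ P : Finset ι, ∃ J N,
      (∀ i ∈ P, j i ≤ J ∧ M i ≤ N) ∧ ∃ᶠ n in atTop, ∀ i ∈ P,
        s - κ i < y n N (j i) ∧ y n N J < s + κ i ∧ y n (M i) (j i + m i) < s + κ i := by
  have hlim : ∀ M j, ∃ t ∈ Set.Icc 0 c,
      Tendsto (fun n => y n M j) (hyperfilter ℕ : Filter ℕ) (nhds t) := fun M j =>
    isCompact_Icc.ultrafilter_le_nhds ((hyperfilter ℕ).map fun n => y n M j)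
      (le_principal_iff.2 (mem_map.2 (univ_mem' fun n => ⟨h0 n M j, hc n M j⟩)))
  choose F hF hlim using hlim
  have hFanti : ∀ j, Antitone fun M => F M j := fun j M N hMN =>
    le_of_tendsto_of_tendsto' (hlim N j) (hlim M j) fun n => hanti n j hMN
  have hbelow : ∀ j, BddBelow (Set.range fun M => F M j) := fun j =>
    ⟨0, Set.forall_mem_range.2 fun M => (hF M j).1⟩
  have habove : BddAbove (Set.range fun j => ⨅ M, F M j) :=
    ⟨c, Set.forall_mem_range.2 fun j => (ciInf_le (hbelow j) 0).trans (hF 0 j).2⟩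
  set s := ⨆ j, ⨅ M, F M j
  have hlower : ∀ i, ∃ j, ∀ M, s - κ i < F M j := fun i => by
    obtain ⟨j, hj⟩ := exists_lt_of_lt_ciSup (sub_lt_self s (hκ i))
    exact ⟨j, fun M => hj.trans_le (ciInf_le (hbelow j) M)⟩
  have hupper : ∀ i j, ∀ᶠ M in atTop, F M j < s + κ i := fun i j => by
    obtain ⟨M, hM⟩ := exists_lt_of_ciInf_lt
      ((le_ciSup habove j).trans_lt (lt_add_of_pos_right s (hκ i)))
    filter_upwards [eventually_ge_atTop M] with N hN
    exact (hFanti j hN).trans_lt hM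
  choose j hj using hlower
  choose M hM hjM using fun i =>
    ((hupper i (j i + m i)).and (eventually_ge_atTop (j i + m i))).exists
  refine ⟨s, j, M, hjM, fun P => ?_⟩
  set J := P.sup j
  obtain ⟨N, hN⟩ : ∃ N, ∀ i ∈ P, M i ≤ N ∧ F N J < s + κ i :=
    ((eventually_all_finset P).2 fun i _ => (eventually_ge_atTop (M i)).and (hupper i J)).exists
  refine ⟨J, N, fun i hi => ⟨Finset.le_sup hi, (hN i hi).1⟩, ?_⟩
  refine Frequently.filter_mono (Eventually.frequently ?_) Nat.hyperfilter_le_atTop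
  exact (eventually_all_finset P).2 fun i hi =>
    ((hlim N (j i)).eventually_const_lt (hj i N)).and
      (((hlim N J).eventually_lt_const (hN i hi).2).and
        ((hlim (M i) (j i + m i)).eventually_lt_const (hM i)))

section Trapping

variable {G : Type*} [Group G]

lemma card_smul_sdiff_le [DecidableEq G] {B Y Z : Finset G} {h : G} (hYB : Y ⊆ B) (hYZ : Y ⊆ Z)
    (hh : h • Y ⊆ Z) :
    (((h • B) \ B).card : ℝ) ≤ (B.card - Y.card) + (Z.card - Y.card) := by
  have hcover : (h • B) \ B ⊆ (h • (B \ Y)) ∪ (Z \ Y) := by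
    intro g hg
    obtain ⟨hg, hgB⟩ := Finset.mem_sdiff.1 hg
    obtain ⟨y, hy, rfl⟩ := Finset.mem_smul_finset.1 hg
    by_cases hyY : y ∈ Y
    · exact Finset.mem_union_right _ (Finset.mem_sdiff.2
        ⟨hh (Finset.smul_mem_smul_finset hyY), fun hmem => hgB (hYB hmem)⟩)
    · exact Finset.mem_union_left _
        (Finset.smul_mem_smul_finset (Finset.mem_sdiff.2 ⟨hy, hyY⟩))
  have hcard := (Finset.card_le_card hcover).trans (Finset.card_union_le _ _)
  rw [Finset.card_smul_finset] at hcard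
  rw [← Finset.cast_card_sdiff hYB, ← Finset.cast_card_sdiff hYZ]
  exact_mod_cast hcard

/-- The seminorm `x` traps at level `η` in time `M` if an element whose first `M` powers stay in
the ball of radius `1 / 2` lies in the ball of radius `η`. -/
def IsTrapping (x : GroupSeminorm G) (η : ℝ) (M : ℕ) : Prop :=
  ∀ g ∈ powSmall x (1 / 2) M, x g ≤ η

open scoped Classical in
/-- The products of `j` elements with `M` small powers and one small element, where smallness is
measured by `conjSup ℓ 5`. The truncation to the ball of radius `2` only makes the set finite:
it has no effect when `j ≤ M` and the radius `ε` is suitably small. -/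
noncomputable def growthSet {ℓ : GroupSeminorm G} (hfin : {g | ℓ g ≤ 2}.Finite) (ε : ℝ)
    (M j : ℕ) : Finset G :=
  hfin.toFinset.filter (· ∈ powSmall (conjSup ℓ 5) ε M ^ j * {s | conjSup ℓ 5 s ≤ ε})

variable {ℓ : GroupSeminorm G} {hfin : {g | ℓ g ≤ 2}.Finite} {ε : ℝ}

lemma mem_growthSet {M j : ℕ} {g : G} : g ∈ growthSet hfin ε M j ↔
    ℓ g ≤ 2 ∧ g ∈ powSmall (conjSup ℓ 5) ε M ^ j * {s | conjSup ℓ 5 s ≤ ε} := by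
  simp [growthSet]

lemma growthSet_mono (hε : 0 ≤ ε) (M : ℕ) : Monotone (growthSet hfin ε M) := fun _ _ hij _ hg =>
  mem_growthSet.2 ((mem_growthSet.1 hg).imp_right fun h => Set.mul_subset_mul_right
    (Set.pow_subset_pow_right (one_mem_powSmall _ hε M) hij) h)

lemma growthSet_anti (j : ℕ) : Antitone fun M => growthSet hfin ε M j := fun _ _ hMN _ hg =>
  mem_growthSet.2 ((mem_growthSet.1 hg).imp_right fun h => Set.mul_subset_mul_right
    (Set.pow_subset_pow_left (powSmall_anti _ ε hMN)) h)

lemma mul_mem_growthSet (hε : 0 ≤ ε) (hε1 : ε ≤ 1) {M j : ℕ}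
    (hpow : ∀ g ∈ powSmall (conjSup ℓ 5) ε M ^ M, ℓ g ≤ 1) (hj : j ≤ M) {q s : G}
    (hq : q ∈ powSmall (conjSup ℓ 5) ε M ^ j) (hs : conjSup ℓ 5 s ≤ ε) :
    q * s ∈ growthSet hfin ε M j := by
  refine mem_growthSet.2 ⟨?_, Set.mul_mem_mul hq hs⟩
  have hq1 := hpow q (Set.pow_subset_pow_right (one_mem_powSmall _ hε M) hj hq)
  linarith [map_mul_le_add ℓ q s, self_le_conjSup ℓ (by norm_num : (0 : ℝ) ≤ 5) s]

lemma mem_growthSet_of_conjSup_le (hε : 0 ≤ ε) (hε1 : ε ≤ 1) {M j : ℕ} {g : G}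
    (hg : conjSup ℓ 5 g ≤ ε) : g ∈ growthSet hfin ε M j := by
  refine mem_growthSet.2 ⟨?_, 1, Set.one_mem_pow (one_mem_powSmall _ hε M), g, hg, one_mul g⟩
  linarith [self_le_conjSup ℓ (by norm_num : (0 : ℝ) ≤ 5) g]

lemma card_growthSet_le {C : ℝ → ℕ} {R : ℝ} (hC : HasSmallPartitions ℓ (conjSup ℓ 5) R C)
    (hR : 2 ≤ R) (hε : 0 < ε) (hε1 : ε ≤ 1) (M j : ℕ) :
    ((growthSet hfin ε M j).card : ℝ) ≤ C ε * (growthSet hfin ε 0 0).card :=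
  hC.card_le hε (fun _ hg => (mem_growthSet.1 hg).1.trans hR) fun _ hg =>
    mem_growthSet_of_conjSup_le hε.le hε1 hg

variable [DecidableEq G]

lemma smul_growthSet_subset (hε : 0 ≤ ε) (hε1 : ε ≤ 1) {M j m : ℕ}
    (hpow : ∀ g ∈ powSmall (conjSup ℓ 5) ε M ^ M, ℓ g ≤ 1) (hjm : j + m ≤ M) {h : G}
    (hh : h ∈ powSmall (conjSup ℓ 5) ε M ^ m) :
    h • growthSet hfin ε M j ⊆ growthSet hfin ε M (j + m) := by
  intro _ hg
  obtain ⟨_, hqs, rfl⟩ := Finset.mem_smul_finset.1 hg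
  obtain ⟨-, q, hq, s, hs, rfl⟩ := mem_growthSet.1 hqs
  rw [smul_eq_mul, ← mul_assoc]
  refine mul_mem_growthSet hε hε1 hpow hjm ?_ hs
  rw [add_comm, pow_add]
  exact Set.mul_mem_mul hh hq

lemma card_smul_growthSet_sdiff_le (hε : 0 ≤ ε) (hε1 : ε ≤ 1) {M N j J m : ℕ}
    (hpow : ∀ g ∈ powSmall (conjSup ℓ 5) ε M ^ M, ℓ g ≤ 1) (hjJ : j ≤ J) (hMN : M ≤ N)
    (hjm : j + m ≤ M) {h : G} (hh : h ∈ powSmall (conjSup ℓ 5) ε M ^ m) :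
    (((h • growthSet hfin ε N J) \ growthSet hfin ε N J).card : ℝ) ≤
      ((growthSet hfin ε N J).card - (growthSet hfin ε N j).card) +
        ((growthSet hfin ε M (j + m)).card - (growthSet hfin ε N j).card) :=
  have hsub : growthSet hfin ε N j ⊆ growthSet hfin ε M j := growthSet_anti j hMN
  card_smul_sdiff_le (growthSet_mono hε N hjJ)
    (hsub.trans (growthSet_mono hε M (Nat.le_add_right j m)))
    ((Finset.smul_finset_subset_smul_finset hsub).trans
      (smul_growthSet_subset hε hε1 hpow hjm hh))

lemma isTrapping_of_card_growthSet_lt (hε : 0 ≤ ε) (hε1 : ε ≤ 1) {M N j J : ℕ} {η A s : ℝ}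
    (hη : 0 < η) (hA : 0 < A) (hpow : ∀ g ∈ powSmall (conjSup ℓ 5) ε M ^ M, ℓ g ≤ 1)
    (hjJ : j ≤ J) (hMN : M ≤ N) (hjM : j + ⌈8 / η⌉₊ ≤ M)
    (hlower : (s - η / (8 * A)) * (growthSet hfin ε 0 0).card < (growthSet hfin ε N j).card)
    (hupperJ : (growthSet hfin ε N J).card < (s + η / (8 * A)) * (growthSet hfin ε 0 0).card)
    (hupperM : (growthSet hfin ε M (j + ⌈8 / η⌉₊)).card <
      (s + η / (8 * A)) * (growthSet hfin ε 0 0).card)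
    {x : GroupSeminorm G} (hx_test : ∀ g, x g ≤ 1 / 2 → conjSup ℓ 5 g ≤ ε)
    (hx_pow : ∀ g κ, 0 ≤ κ → ∀ m : ℕ, 0 < m →
      (∀ i < m, (((g ^ i • growthSet hfin ε N J) \ growthSet hfin ε N J).card : ℝ) ≤
        κ * (growthSet hfin ε N J).card) →
      (∀ i < m, x (g ^ i) ≤ 1 / 2) → x g ≤ 4 / m + A * κ) : IsTrapping x η M := by
  intro g hg
  have hgM : g ∈ powSmall (conjSup ℓ 5) ε M := fun i hi => hx_test _ (hg i hi)
  have hκ : 0 ≤ 4 * (η / (8 * A)) := by positivity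
  refine (hx_pow g _ hκ ⌈8 / η⌉₊ (Nat.ceil_pos.2 (by positivity)) (fun i hi => ?_)
    fun i hi => hg i (by lia)).trans ?_
  · refine (card_smul_growthSet_sdiff_le hε hε1 hpow hjJ hMN hjM (Set.pow_subset_pow_right
      (one_mem_powSmall _ hε M) hi.le (Set.pow_mem_pow hgM))).trans ?_
    have hcard : ((growthSet hfin ε 0 0).card : ℝ) ≤ (growthSet hfin ε N J).card := by
      exact_mod_cast Finset.card_le_card fun g hg => mem_growthSet_of_conjSup_le hε hε1
        (by simpa using (mem_growthSet.1 hg).2)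
    linarith [mul_le_mul_of_nonneg_left hcard hκ]
  · have hm : 4 / (⌈8 / η⌉₊ : ℝ) ≤ 4 / (8 / η) := by gcongr; exact Nat.le_ceil _
    have : 4 / (8 / η) = η / 2 := by field_simp; norm_num
    have : A * (4 * (η / (8 * A))) = η / 2 := by field_simp; norm_num
    linarith

end Trapping

-- The ratios `|growthSet M j| / |growthSet 0 0|` are bounded, so for suitable `M` and `j` they
-- barely change: the corresponding growth set is almost invariant under `powSmall`.
theorem exists_trapping_seminorm (C : ℝ → ℕ) : ∃ K > 0,
    ∀ (G : ℕ → Type*) [∀ n, Group (G n)] (ℓ : ∀ n, GroupSeminorm (G n)),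
      (∀ n R, {g | ℓ n g ≤ R}.Finite) → (∀ n, HasSmallPartitions (ℓ n) (ℓ n) 20 C) →
      ∃ M : Set.Ioi (0 : ℝ) → ℕ, ∀ P : Finset (Set.Ioi (0 : ℝ)), ∃ᶠ n in atTop,
        ∃ x : GroupSeminorm (G n), (∀ g, x g ≤ 1 / 2 → ℓ n g ≤ 1 / 4) ∧
          (∀ g, x g ≤ K * conjSup (ℓ n) 7 g) ∧ ∀ η ∈ P, IsTrapping x η (M η) := by
  classical
  obtain ⟨ε, hε₀, hε4, hpow⟩ := exists_powSmall_pow_le_one C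
  have hε1 : ε ≤ 1 := hε4.trans (by norm_num)
  obtain ⟨K, hK, A, hA, hseminorm⟩ := exists_groupSeminorm_of_hasSmallPartitions
    (fun δ => C (δ / 3) ^ C (δ / 3)) (half_pos hε₀)
  simp only [mul_div_cancel₀ ε two_ne_zero] at hseminorm
  refine ⟨K, hK, fun G _ ℓ hfin hC => ?_⟩
  have hC' := fun n => (hC n).conjSup (ρ := 5) (S := 15) (by norm_num) (by norm_num)
  set Y : ∀ n, ℕ → ℕ → Finset (G n) := fun n => growthSet (hfin n 2) ε
  have hY₀ : ∀ n, (0 : ℝ) < (Y n 0 0).card := fun n => by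
    have : 1 ∈ Y n 0 0 := mem_growthSet_of_conjSup_le hε₀.le hε1
      (by rw [map_one_eq_zero]; exact hε₀.le)
    exact_mod_cast Finset.card_pos.2 ⟨1, this⟩
  obtain ⟨s, j, M, hjM, hstable⟩ := exists_stabilizing_indices
    (y := fun n M j => ((Y n M j).card : ℝ) / (Y n 0 0).card)
    (κ := fun η : Set.Ioi (0 : ℝ) => η / (8 * A)) (fun n M j => by positivity)
    (fun n M j => (div_le_iff₀ (hY₀ n)).2 (card_growthSet_le (hC' n) (by norm_num) hε₀ hε1 M j))
    (fun n j M N hMN => div_le_div_of_nonneg_right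
      (by exact_mod_cast Finset.card_le_card (growthSet_anti j hMN)) (hY₀ n).le)
    (fun η => div_pos η.2 (by positivity)) fun η => ⌈8 / (η : ℝ)⌉₊
  refine ⟨M, fun P => ?_⟩
  obtain ⟨J, N, hbound, hfreq⟩ := hstable P
  refine hfreq.mono fun n hn => ?_
  obtain ⟨x, hx_test, hx_lip, hx_pow⟩ := hseminorm (G n) (ℓ n) (conjSup (ℓ n) 5) 15 (hC' n)
    (Y n N J) (fun g hg => mem_growthSet_of_conjSup_le hε₀.le hε1 hg)
    (fun g hg => (mem_growthSet.1 hg).1.trans (by norm_num))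
  refine ⟨x, fun g hg => ?_, fun g => ?_, fun η hη => ?_⟩
  · linarith [hx_test g hg, self_le_conjSup (ℓ n) (by norm_num : (0 : ℝ) ≤ 5) g]
  · exact hx_lip g _ (apply_nonneg _ _) fun y hy =>
      conjSup_conj_le (ℓ n) (mem_growthSet.1 hy).1 (by norm_num) g
  obtain ⟨hlower, hupperJ, hupperM⟩ := hn η hη
  exact isTrapping_of_card_growthSet_lt hε₀.le hε1 η.2 hA (hpow (G n) (ℓ n) (hfin n) (hC n) _)
    (hbound η hη).1 (hbound η hη).2 (hjM η) ((lt_div_iff₀ (hY₀ n)).1 hlower)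
    ((div_lt_iff₀ (hY₀ n)).1 hupperJ) ((div_lt_iff₀ (hY₀ n)).1 hupperM) hx_test hx_pow

/-! ### Escape weights -/

section EscapeWeight

variable {G : Type*} [Group G]

open scoped Classical in
/-- The largest `m ≤ N` such that the first `m` powers of `g` are `ε`-small for `σ`. -/
noncomputable def escapeRank (σ : GroupSeminorm G) (ε : ℝ) (N : ℕ) (g : G) : ℕ :=
  Nat.findGreatest (fun m => g ∈ powSmall σ ε m) N

/-- The reciprocal of the escape rank; it is `1` if `g` itself is not `ε`-small. -/
noncomputable def escapeWeight (σ : GroupSeminorm G) (ε : ℝ) (N : ℕ) (g : G) : ℝ :=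
  1 / max 1 (escapeRank σ ε N g : ℝ)

variable (σ : GroupSeminorm G) (ε : ℝ)

open scoped Classical in
lemma escapeWeight_inv (N : ℕ) (g : G) : escapeWeight σ ε N g⁻¹ = escapeWeight σ ε N g := by
  have hiff : ∀ m, g⁻¹ ∈ powSmall σ ε m ↔ g ∈ powSmall σ ε m := fun m =>
    ⟨fun h => by simpa using inv_mem_powSmall h, inv_mem_powSmall⟩
  have hpred : (fun m => g⁻¹ ∈ powSmall σ ε m) = fun m => g ∈ powSmall σ ε m :=
    funext fun m => propext (hiff m)
  rw [escapeWeight, escapeWeight, escapeRank, escapeRank]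
  congr!

lemma escapeWeight_nonneg (N : ℕ) (g : G) : 0 ≤ escapeWeight σ ε N g := by
  rw [escapeWeight]
  positivity

lemma escapeWeight_le_one (N : ℕ) (g : G) : escapeWeight σ ε N g ≤ 1 :=
  div_le_one_of_le₀ (le_max_left _ _) (by positivity)

lemma one_div_le_escapeWeight {N : ℕ} (hN : 1 ≤ N) (g : G) :
    1 / (N : ℝ) ≤ escapeWeight σ ε N g := by
  refine one_div_le_one_div_of_le (by positivity) (max_le (by exact_mod_cast hN) ?_)
  classical exact_mod_cast Nat.findGreatest_le N

variable {σ ε}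

lemma escapeWeight_le {N m : ℕ} (hm : 1 ≤ m) (hmN : m ≤ N) {g : G} (hg : g ∈ powSmall σ ε m) :
    escapeWeight σ ε N g ≤ 1 / m := by
  refine one_div_le_one_div_of_le (by positivity) (le_max_of_le_right ?_)
  classical exact_mod_cast Nat.le_findGreatest (P := fun m => g ∈ powSmall σ ε m) hmN hg

lemma exists_mul_escapeWeight_eq_one {N : ℕ} {g : G} (h : escapeWeight σ ε N g < 1) :
    ∃ n : ℕ, 0 < n ∧ n * escapeWeight σ ε N g = 1 ∧ g ∈ powSmall σ ε n := by
  have hrank : escapeRank σ ε N g ≠ 0 := fun h0 => by simp [escapeWeight, h0] at h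
  have hrank1 : (1 : ℝ) ≤ escapeRank σ ε N g := by exact_mod_cast Nat.pos_of_ne_zero hrank
  refine ⟨_, Nat.pos_of_ne_zero hrank, ?_,
    by classical exact Nat.findGreatest_of_ne_zero (P := fun m => g ∈ powSmall σ ε m) rfl hrank⟩
  rw [escapeWeight, max_eq_right hrank1, mul_one_div_cancel (by positivity)]

end EscapeWeight

section NoSmallSubgroups

variable {G : Type*} [Group G] {x : GroupSeminorm G} {F V : Finset G} {c : ℝ} {M N : ℕ}

/-- Every word of total escape weight less than `1` lies in the ball of radius `1 / 64`. -/
def IsWordTrapping (x : GroupSeminorm G) (c : ℝ) : Prop :=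
  ∀ N, 1 ≤ N → ∀ l : List G, (l.map (escapeWeight (conjSup x (3 / 64)) c N)).sum < 1 →
    x l.prod ≤ 1 / 64

lemma exists_one_le_mul_escapeWeight_div {g : G} {R : ℝ} (hR : 0 < R) (hR1 : R ≤ 1)
    (hg : escapeWeight (conjSup x (3 / 64)) c N g < 1) :
    ∃ n : ℕ, 0 < n ∧ 1 ≤ n * (escapeWeight (conjSup x (3 / 64)) c N g / R) ∧
      ∀ j ≤ n, ∀ y, x y ≤ 3 / 64 → x (y⁻¹ * g ^ j * y) ≤ c := by
  obtain ⟨n, hn, hnp, hgn⟩ := exists_mul_escapeWeight_eq_one hg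
  refine ⟨n, hn, ?_, fun j hj y hy => (le_conjSup x hy _).trans (hgn j hj)⟩
  rwa [← mul_div_assoc, hnp, one_le_div₀ hR]

-- Gleason's argument applies to the powers of the word, so the trapping property applies to its
-- product.
lemma le_of_sum_escapeWeight_lt_two_mul (hc : 0 ≤ c) (hF : ∀ g, g ∈ F ↔ x g ≤ 1 / 32)
    (hV : ∀ g ∈ V, x g ≤ 1 / 1024) (hM : IsTrapping x (1 / 64) M)
    (hsmall : 6 * F.card * c * (2 * M) < 1 / 512 * V.card) {R : ℝ} (hR : 0 < R) (hR1 : 2 * R ≤ 1)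
    (hword : ∀ l : List G, (l.map (escapeWeight (conjSup x (3 / 64)) c N)).sum < R →
      x l.prod ≤ 1 / 64) {l : List G}
    (hl : (l.map (escapeWeight (conjSup x (3 / 64)) c N)).sum < 2 * R) : x l.prod ≤ 1 / 64 := by
  set p := escapeWeight (conjSup x (3 / 64)) c N
  have hp : ∀ g, 0 ≤ p g := escapeWeight_nonneg _ _ _
  have hdiv : ∀ l : List G, (l.map fun g => p g / R).sum = (l.map p).sum / R := fun l => by
    simp only [div_eq_mul_inv, List.sum_map_mul_right]
  have hpR₀ : ∀ g, 0 ≤ p g / R := fun g => div_nonneg (hp g) hR.le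
  have hpRinv : ∀ g, p g⁻¹ / R = p g / R := fun g => congrArg (· / R) (escapeWeight_inv _ _ _ g)
  set lam := wordSeminorm (fun g => p g / R) hpR₀ hpRinv
  have hball : ∀ w, lam w < 1 → x w ≤ 1 / 64 := by
    intro w hw
    obtain ⟨l, rfl, hl⟩ := exists_list_of_wordSeminorm_lt _ hpR₀ hpRinv hw
    rw [hdiv, div_lt_one hR] at hl
    exact hword l hl
  refine hM _ fun i hi => ?_
  have hiM : (i : ℝ) ≤ M := by exact_mod_cast hi
  have hletter : ∀ g ∈ (List.replicate i l).flatten, lam g ≤ p g / R ∧ ∃ n : ℕ, 0 < n ∧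
      1 ≤ n * (p g / R) ∧ ∀ j ≤ n, ∀ y ∈ F, x (y⁻¹ * g ^ j * y) ≤ c := by
    intro g hg
    have hgl : g ∈ l := by
      obtain ⟨_, hmem, hg⟩ := List.mem_flatten.1 hg
      rwa [List.eq_of_mem_replicate hmem] at hg
    obtain ⟨n, hn, hnp, hgn⟩ := exists_one_le_mul_escapeWeight_div hR (by linarith)
      (((le_sum_map_of_mem hp hgl).trans_lt hl).trans_le hR1)
    exact ⟨wordSeminorm_le _ hpR₀ hpRinv g, n, hn, hnp, fun j hj y hy =>
      hgn j hj y (((hF y).1 hy).trans (by norm_num))⟩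
  have hlength : ((List.replicate i l).flatten.map fun g => p g / R).sum ≤ 2 * M := by
    have hsum : ((List.replicate i l).flatten.map p).sum = i * (l.map p).sum := by simp
    rw [hdiv, hsum, div_le_iff₀ hR]
    calc i * (l.map p).sum ≤ i * (2 * R) := by gcongr
      _ ≤ M * (2 * R) := by gcongr
      _ = 2 * M * R := by ring
  obtain ⟨w, s, hw, hs, hws⟩ := exists_list_prod_eq_mul_of_sum_le lam x (by norm_num)
    (fun w s hw hs => (hF _).2 (by linarith [map_mul_le_add x w s, hball w hw]))
    (fun y hy => (hV y hy).trans_eq (by norm_num)) _ hc hsmall hletter hlength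
  have hprod : (List.replicate i l).flatten.prod = l.prod ^ i := by simp
  rw [← hprod, hws]
  linarith [map_mul_le_add x w s, hball w hw]

-- Weights are at least `1 / N`, so a word of weight less than `1 / 2 ^ k ≤ 1 / N` is empty; then
-- double the admissible weight until it reaches `1`.
theorem isWordTrapping_of_isTrapping (hc : 0 ≤ c) (hF : ∀ g, g ∈ F ↔ x g ≤ 1 / 32)
    (hV : ∀ g ∈ V, x g ≤ 1 / 1024) (hM : IsTrapping x (1 / 64) M)
    (hsmall : 6 * F.card * c * (2 * M) < 1 / 512 * V.card) : IsWordTrapping x c := by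
  intro N hN
  set p := escapeWeight (conjSup x (3 / 64)) c N
  suffices hdouble : ∀ j k : ℕ, N ≤ 2 ^ (j + k) → ∀ l : List G, (l.map p).sum < 1 / 2 ^ k →
      x l.prod ≤ 1 / 64 from fun l hl =>
    hdouble N 0 (by simpa using Nat.lt_two_pow_self.le) l (by simpa using hl)
  intro j
  induction j with
  | zero =>
    rintro k hk (_ | ⟨g, l⟩) hl
    · simp [map_one_eq_zero]
    · have hpg : p g < 1 / 2 ^ k :=
        (le_sum_map_of_mem (escapeWeight_nonneg _ _ _) List.mem_cons_self).trans_lt hl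
      have hNk : (1 : ℝ) / 2 ^ k ≤ 1 / N :=
        one_div_le_one_div_of_le (by positivity) (by exact_mod_cast (by simpa using hk))
      linarith [one_div_le_escapeWeight (conjSup x (3 / 64)) c hN g]
  | succ j ih =>
    intro k hk l hl
    have htwo : (2 : ℝ) * (1 / 2 ^ (k + 1)) = 1 / 2 ^ k := by rw [pow_succ]; field_simp
    refine le_of_sum_escapeWeight_lt_two_mul (R := 1 / 2 ^ (k + 1)) hc hF hV hM hsmall
      (by positivity) ?_ (ih (k + 1) (by rwa [← add_assoc, add_right_comm])) (htwo ▸ hl)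
    rw [htwo]
    exact div_le_one_of_le₀ (one_le_pow₀ one_le_two) (by positivity)

lemma inv_mul_mul_pow (y g : G) (i : ℕ) : (y⁻¹ * g * y) ^ i = y⁻¹ * g ^ i * y := by
  simpa using conj_pow (i := i) (a := y⁻¹) (b := g)

lemma IsTrapping.mem_powSmall_conjSup (hM : IsTrapping x c M) (hc : 0 ≤ c) {m : ℕ} {g : G}
    (hg : ∀ i ≤ m * M, x (g ^ i) ≤ 1 / 16) : g ∈ powSmall (conjSup x (3 / 64)) c m := by
  refine fun i hi => conjSup_le x hc fun z hz => hM _ fun j hj => ?_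
  rw [inv_mul_mul_pow, ← pow_mul]
  linarith [groupSeminorm_conj_le x z (g ^ (i * j)), hg (i * j) (Nat.mul_le_mul hi hj)]

lemma IsTrapping.escapeWeight_conj_le (hM : IsTrapping x c M) (hM₀ : 0 < M) (hc : 0 ≤ c)
    (hc1 : c ≤ 1 / 64) {n : ℕ} (hn : 1 ≤ n) (hnN : n ≤ N) {u y : G}
    (hu : u ∈ powSmall (conjSup x (3 / 64)) c n) (hy : x y ≤ 3 / 64) :
    escapeWeight (conjSup x (3 / 64)) c N (y⁻¹ * u * y) ≤ 2 * M / n := by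
  rcases lt_or_ge n M with hnM | hMn
  · refine (escapeWeight_le_one _ _ _ _).trans ((one_le_div₀ (by positivity)).2 ?_)
    have : (n : ℝ) ≤ M := by exact_mod_cast hnM.le
    linarith
  · have hq : 1 ≤ n / M := (Nat.one_le_div_iff hM₀).2 hMn
    have hmem : y⁻¹ * u * y ∈ powSmall (conjSup x (3 / 64)) c (n / M) := by
      refine hM.mem_powSmall_conjSup hc fun i hi => ?_
      rw [inv_mul_mul_pow]
      linarith [le_conjSup x hy (u ^ i), hu i (hi.trans (Nat.div_mul_le_self _ _))]
    refine (escapeWeight_le hq ((Nat.div_le_self _ _).trans hnN) hmem).trans ?_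
    have hlt : n ≤ 2 * M * (n / M) := by nlinarith [Nat.lt_div_mul_add hM₀ (a := n)]
    rw [div_le_div_iff₀ (by positivity) (by positivity), one_mul]
    exact_mod_cast hlt

lemma card_le_convOn_plateau_one (lam σ : GroupSeminorm G) {a : ℝ} (hVF : V ⊆ F)
    (hV : ∀ y ∈ V, σ y ≤ a) :
    (V.card : ℝ) ≤ convOn F (plateau lam σ a) (plateau lam σ a) 1 := by
  calc (V.card : ℝ) = ∑ y ∈ V, plateau lam σ a y * plateau lam σ a (y⁻¹ * 1) := by
        rw [Finset.sum_congr rfl fun y hy => ?_, Finset.sum_const, nsmul_one]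
        rw [plateau_eq_one lam σ (hV y hy), mul_one, one_mul, plateau_eq_one lam σ]
        rw [map_inv_eq_map]
        exact hV y hy
    _ ≤ _ := Finset.sum_le_sum_of_subset_of_nonneg hVF fun y _ _ =>
        mul_nonneg (plateau_nonneg _ _ _ _) (plateau_nonneg _ _ _ _)

lemma ne_zero_of_abs_inv_mul_sub_le {ψ : G → ℝ} {k : G} {b : ℝ}
    (hψ : ∀ z, |ψ (k⁻¹ * z) - ψ z| ≤ b) {i : ℕ} (hi : b * i < ψ 1) : ψ (k ^ i)⁻¹ ≠ 0 := by
  have hmove := abs_inv_list_prod_mul_sub_le ψ (fun _ => 1) (c := b) (l := List.replicate i k)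
    (fun g hg z => by rw [List.eq_of_mem_replicate hg, mul_one]; exact hψ z) 1
  simp only [List.prod_replicate, mul_one, List.map_replicate, List.sum_replicate,
    nsmul_eq_mul] at hmove
  intro h0
  rw [h0] at hmove
  linarith [(abs_le.1 hmove).1]

-- The convolution square `ψ` of the plateau function is moved by the commutator by at most
-- `4 * |F| * (α * β)`, while `ψ 1 ≥ |V|`; so small powers of the commutator stay in its support.
lemma commutator_pow_le {lam : GroupSeminorm G} (hF : ∀ g, g ∈ F ↔ x g ≤ 1 / 32)
    (hV : ∀ g ∈ V, x g ≤ 1 / 1024) (hsupp : ∀ y, plateau lam x (1 / 512) y ≠ 0 → x y ≤ 1 / 32)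
    {g h : G} {α β : ℝ} (hgx : x g ≤ 1 / 64) (hhx : x h ≤ 1 / 64)
    (hg : ∀ y, x y ≤ 3 / 64 → lam (y⁻¹ * g * y) ≤ α)
    (hh : ∀ y, x y ≤ 3 / 64 → lam (y⁻¹ * h * y) ≤ β) {i : ℕ}
    (hi : 4 * F.card * (α * β) * i < V.card) : x (⁅g⁻¹, h⁻¹⁆ ^ i) ≤ 1 / 16 := by
  set ψ := convOn F (plateau lam x (1 / 512)) (plateau lam x (1 / 512))
  have hone : x 1 ≤ 3 / 64 := by
    rw [map_one_eq_zero]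
    norm_num
  have hderiv : ∀ z, |ψ (⁅g⁻¹, h⁻¹⁆⁻¹ * z) - ψ z| ≤ 4 * F.card * (α * β) := by
    refine abs_convOn_plateau_commutator_sub_le lam x (fun y hy => (hF y).2 (hsupp y hy)) g h
      (fun y hy => ?_) (fun y hy => ?_) (by simpa using hg 1 hone) (by simpa using hh 1 hone)
    · have hy := (hF y).1 hy
      exact ⟨hg y (by linarith), hg _ (by linarith [map_mul_le_add x h y])⟩
    · have hy := (hF y).1 hy
      exact ⟨hh y (by linarith), hh _ (by linarith [map_mul_le_add x g y])⟩
  have hψ1 : (V.card : ℝ) ≤ ψ 1 := card_le_convOn_plateau_one lam x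
    (fun y hy => (hF y).2 ((hV y hy).trans (by norm_num)))
    (fun y hy => (hV y hy).trans (by norm_num))
  obtain ⟨y, hy, hky⟩ := exists_of_convOn_ne_zero
    (ne_zero_of_abs_inv_mul_sub_le hderiv (hi.trans_le hψ1))
  have hadd := map_mul_le_add x y (y⁻¹ * (⁅g⁻¹, h⁻¹⁆ ^ i)⁻¹)
  rw [mul_inv_cancel_left, map_inv_eq_map] at hadd
  linarith [hsupp _ hy, hsupp _ hky]

theorem commutator_mem_powSmall {D : ℝ} {m l : ℕ} (hc : 0 ≤ c) (hc1 : c ≤ 1 / 64)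
    (hF : ∀ g, g ∈ F ↔ x g ≤ 1 / 32) (hV : ∀ g ∈ V, x g ≤ 1 / 1024) (hV₀ : 0 < V.card)
    (hD : (F.card : ℝ) ≤ D * V.card) (hword : IsWordTrapping x c) (hM₀ : 0 < M)
    (hM : IsTrapping x c M) (hDm : 32 * D * M ^ 3 < m) (hm : 1 ≤ m) (hl : 1 ≤ l) {g h : G}
    (hg : g ∈ powSmall (conjSup x (3 / 64)) c m) (hh : h ∈ powSmall (conjSup x (3 / 64)) c l) :
    ⁅g⁻¹, h⁻¹⁆ ∈ powSmall (conjSup x (3 / 64)) c (2 * l) := by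
  set N := max m l
  set p := escapeWeight (conjSup x (3 / 64)) c N
  have hp : ∀ g, 0 ≤ p g := escapeWeight_nonneg _ _ _
  have hpinv : ∀ g, p g⁻¹ = p g := escapeWeight_inv _ _ _
  set lam := wordSeminorm p hp hpinv
  have hsupp : ∀ y, plateau lam x (1 / 512) y ≠ 0 → x y ≤ 1 / 32 := by
    intro y hy
    obtain ⟨w, s, hw, hs, rfl⟩ := exists_eq_mul_of_plateau_ne_zero lam x hy
    obtain ⟨l, rfl, hl⟩ := exists_list_of_wordSeminorm_lt _ hp hpinv hw
    linarith [map_mul_le_add x l.prod s, hword N (hm.trans (le_max_left _ _)) l hl]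
  have hlam : ∀ {n}, 1 ≤ n → n ≤ N → ∀ {u}, u ∈ powSmall (conjSup x (3 / 64)) c n → ∀ y,
      x y ≤ 3 / 64 → lam (y⁻¹ * u * y) ≤ 2 * M / n := fun hn hnN _ hu _ hy =>
    (wordSeminorm_le _ hp hpinv _).trans (hM.escapeWeight_conj_le hM₀ hc hc1 hn hnN hu hy)
  have hself : ∀ {n}, 1 ≤ n → ∀ {u}, u ∈ powSmall (conjSup x (3 / 64)) c n → x u ≤ 1 / 64 :=
    fun hn u hu => ((self_le_conjSup x (by norm_num) u).trans (le_of_mem_powSmall hu hn)).trans hc1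
  refine hM.mem_powSmall_conjSup hc fun i hi => commutator_pow_le hF hV hsupp (hself hm hg)
    (hself hl hh) (hlam hm (le_max_left _ _) hg) (hlam hl (le_max_right _ _) hh) ?_
  have hi' : (i : ℝ) ≤ 2 * l * M := by exact_mod_cast hi
  calc 4 * F.card * (2 * M / m * (2 * M / l)) * (i : ℝ)
      ≤ 4 * F.card * (2 * M / m * (2 * M / l)) * (2 * l * M) := by gcongr
    _ = F.card * (32 * M ^ 3) / m := by field_simp; ring
    _ ≤ D * V.card * (32 * M ^ 3) / m := by gcongr
    _ = 32 * D * M ^ 3 * V.card / m := by ring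
    _ < V.card := by
      rw [div_lt_iff₀ (by positivity), mul_comm (V.card : ℝ)]
      gcongr

lemma mul_mem_powSmall (hc : 0 ≤ c) (hword : IsWordTrapping x c) (hM : IsTrapping x c M) {g h : G}
    (hg : ∀ l, g ∈ powSmall (conjSup x (3 / 64)) c l)
    (hh : ∀ l, h ∈ powSmall (conjSup x (3 / 64)) c l) (l : ℕ) :
    g * h ∈ powSmall (conjSup x (3 / 64)) c l := by
  refine hM.mem_powSmall_conjSup hc fun i _ => ?_
  set N := 2 * i + 1
  have hN : (N : ℝ) = 2 * i + 1 := by simp [N]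
  have hsum : ((List.replicate i [g, h]).flatten.map
      (escapeWeight (conjSup x (3 / 64)) c N)).sum < 1 := by
    simp only [List.map_flatten, List.map_replicate, List.map_cons, List.map_nil,
      List.sum_flatten, List.sum_replicate, List.sum_cons, List.sum_nil, nsmul_eq_mul, add_zero]
    calc _ ≤ (i : ℝ) * (1 / N + 1 / N) := by
          gcongr
          · exact escapeWeight_le (by omega) le_rfl (hg N)
          · exact escapeWeight_le (by omega) le_rfl (hh N)
      _ = 2 * i / N := by ring
      _ < 1 := by
          rw [div_lt_one (by positivity), hN]
          linarith
  have := hword N (by omega) _ hsum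
  simp only [List.prod_flatten, List.map_replicate, List.prod_replicate, List.prod_cons,
    List.prod_nil, mul_one] at this
  linarith

lemma exists_subgroup_forall_mem_iff (hc : 0 ≤ c) (hword : IsWordTrapping x c)
    (hM : IsTrapping x c M) :
    ∃ H : Subgroup G, ∀ g, g ∈ H ↔ ∀ l, g ∈ powSmall (conjSup x (3 / 64)) c l :=
  ⟨{ carrier := {g | ∀ l, g ∈ powSmall (conjSup x (3 / 64)) c l}
     one_mem' := one_mem_powSmall _ hc
     mul_mem' := mul_mem_powSmall hc hword hM
     inv_mem' := fun hg l => inv_mem_powSmall (hg l) }, fun _ => Iff.rfl⟩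

lemma mem_powSmall_of_card_le {σ : GroupSeminorm G} {ε : ℝ} {S : Finset G}
    (hS : ∀ g, σ g ≤ ε → g ∈ S) {l : ℕ} (hl : S.card ≤ l) {g : G} (hg : g ∈ powSmall σ ε l)
    (l' : ℕ) : g ∈ powSmall σ ε l' := by
  obtain ⟨i, hi, j, hj, hij, heq⟩ := Finset.exists_ne_map_eq_of_card_lt_of_maps_to
    (s := Finset.range (l + 1)) (f := (g ^ ·)) (by rw [Finset.card_range]; omega)
    fun i hi => hS _ (hg i (Finset.mem_range_succ_iff.1 hi))
  obtain ⟨n, hn, hnl, hgn⟩ : ∃ n, 0 < n ∧ n ≤ l ∧ g ^ n = 1 := by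
    rw [Finset.mem_range] at hi hj
    rcases lt_or_gt_of_ne hij with h | h
    · exact ⟨j - i, by omega, by omega, by rw [pow_sub g h.le, ← heq, mul_inv_cancel]⟩
    · exact ⟨i - j, by omega, by omega, by rw [pow_sub g h.le, heq, mul_inv_cancel]⟩
  intro i _
  rw [← Nat.div_add_mod i n, pow_add, pow_mul, hgn, one_pow, one_mul]
  exact hg _ ((Nat.mod_lt i hn).le.trans hnl)

-- The elements all of whose powers are small form a finite subgroup, and taking a commutator with
-- an element of `powSmall _ c m` doubles the escape rank; so iterated commutators end up in it.
theorem isVirtuallyNilpotent_closure_powSmall {D : ℝ} {m : ℕ} (hc : 0 ≤ c) (hc1 : c ≤ 1 / 64)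
    (hF : ∀ g, g ∈ F ↔ x g ≤ 1 / 32) (hV : ∀ g ∈ V, x g ≤ 1 / 1024) (hV₀ : 0 < V.card)
    (hD : (F.card : ℝ) ≤ D * V.card) (hword : IsWordTrapping x c) (hM₀ : 0 < M)
    (hM : IsTrapping x c M) (hDm : 32 * D * M ^ 3 < m) (hm : 1 ≤ m) :
    IsVirtuallyNilpotent (Subgroup.closure (powSmall (conjSup x (3 / 64)) c m)) := by
  set Q := powSmall (conjSup x (3 / 64)) c
  obtain ⟨H, hH⟩ : ∃ H : Subgroup G, ∀ g, g ∈ H ↔ ∀ l, g ∈ Q l :=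
    exists_subgroup_forall_mem_iff hc hword hM
  have hQF : ∀ g, conjSup x (3 / 64) g ≤ c → g ∈ F := fun g hg =>
    (hF g).2 (by linarith [self_le_conjSup x (ρ := 3 / 64) (by norm_num) g])
  have : Finite H := F.finite_toSet.subset fun g hg =>
    hQF g (le_of_mem_powSmall ((hH g).1 hg 1) le_rfl)
  have hcomm : ∀ l, 1 ≤ l → ∀ g ∈ Q l, ∀ t ∈ Q m, ⁅g, t⁆ ∈ Q (2 * l) := by
    intro l hl g hg t ht
    have := commutator_mem_powSmall hc hc1 hF hV hV₀ hD hword hM₀ hM hDm hm hl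
      (inv_mem_powSmall ht) (inv_mem_powSmall hg)
    rw [inv_inv, inv_inv] at this
    rw [← commutatorElement_inv]
    exact inv_mem_powSmall this
  refine isVirtuallyNilpotent_closure_of_iterated_commutators (Q := fun k => Q (2 ^ k * m))
    (K := F.card) (by simp) (fun k g hg t ht => ?_) H (fun g hg => (hH g).2 ?_)
    (fun g hg => Subgroup.subset_closure ((hH g).1 hg m)) (fun t ht h hh => ?_)
  · rw [pow_succ', mul_assoc]
    exact hcomm _ (Nat.mul_pos (by positivity) hm) g hg t ht
  · exact mem_powSmall_of_card_le hQF
      (Nat.lt_two_pow_self.le.trans (Nat.le_mul_of_pos_right _ hm)) hg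
  · have hconj : t * h * t⁻¹ = ⁅h, t⁆⁻¹ * h := by
      rw [commutatorElement_inv, commutatorElement_def]
      group
    rw [hconj]
    refine H.mul_mem (H.inv_mem ((hH _).2 fun l => ?_)) hh
    exact powSmall_anti _ _ (by omega) (hcomm (l + 1) (by omega) h ((hH h).1 hh _) t ht)

end NoSmallSubgroups

/-! ### The Margulis constant -/

section MargulisConstant

variable {G : Type*} [Group G] {ℓ : GroupSeminorm G} {C : ℝ → ℕ}

lemma IsTrapping.mono {x : GroupSeminorm G} {η : ℝ} {M N : ℕ} (h : IsTrapping x η M)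
    (hMN : M ≤ N) : IsTrapping x η N := fun g hg => h g (powSmall_anti x _ hMN hg)

-- Otherwise the first powers of the ball of radius `r` would meet more and more cosets of `N`.
lemma isVirtuallyNilpotent_closure_of_hasSmallPartitions (h : HasSmallPartitions ℓ ℓ 20 C)
    {ε r : ℝ} (hε : 0 < ε) {N : Subgroup G} (hN : IsVirtuallyNilpotent N)
    (hεN : ∀ g, conjSup ℓ 8 g ≤ ε → g ∈ N) (hr : 0 ≤ r)
    (hr12 : (C (ε / 3) ^ C (ε / 3) : ℕ) * r ≤ 12) :
    IsVirtuallyNilpotent (Subgroup.closure {g | ℓ g ≤ r}) := by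
  obtain ⟨hfin, hcard⟩ :=
    (h.conjSup (ρ := 8) (S := 12) (by norm_num) (by norm_num)).ncard_cosets_le hε hεN
  refine isVirtuallyNilpotent_closure_of_ncard_cosets_le hN ((map_one_eq_zero ℓ).trans_le hr)
    (fun g hg => ?_) hfin hcard
  obtain ⟨f, rfl⟩ := Set.mem_pow.1 hg
  refine (groupSeminorm_list_prod_le ℓ _).trans (le_trans ?_ hr12)
  have hf : ∀ i, ℓ (f i) ≤ r := fun i => (f i).2
  have := List.sum_le_card_nsmul ((List.ofFn fun i => (f i : G)).map ℓ) r (by simpa using hf)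
  simpa using this

lemma mem_powSmall_of_conjSup_le {x : GroupSeminorm G} {K c : ℝ} (hK : 0 < K) (hc : 0 ≤ c)
    (hx_ball : ∀ g, x g ≤ 1 / 2 → ℓ g ≤ 1 / 4) (hx_lip : ∀ g, x g ≤ K * conjSup ℓ 7 g) {m : ℕ}
    (hm : 0 < m) {g : G} (hg : conjSup ℓ 8 g ≤ c / (K * m)) :
    g ∈ powSmall (conjSup x (3 / 64)) c m := by
  intro i hi
  have hconj : conjSup x (3 / 64) g ≤ K * (c / (K * m)) := by
    refine conjSup_le x (by positivity) fun y hy => (hx_lip _).trans ?_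
    have hy1 : ℓ y ≤ 1 := (hx_ball y (by linarith)).trans (by norm_num)
    gcongr
    exact (conjSup_conj_le ℓ hy1 (by norm_num) g).trans hg
  calc conjSup x (3 / 64) (g ^ i) ≤ i * conjSup x (3 / 64) g := groupSeminorm_pow_le _ _ _
    _ ≤ m * (K * (c / (K * m))) := by gcongr
    _ = c := by field_simp

theorem isVirtuallyNilpotent_closure_powSmall_of_isTrapping {x : GroupSeminorm G} {K c : ℝ}
    {D M₁ M₂ m : ℕ} (hfin : ∀ R, {g | ℓ g ≤ R}.Finite) (h : HasSmallPartitions ℓ ℓ 20 C)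
    (hK : 0 < K) (hD : D = C (1 / (1024 * K) / 3) ^ C (1 / (1024 * K) / 3))
    (hx_ball : ∀ g, x g ≤ 1 / 2 → ℓ g ≤ 1 / 4) (hx_lip : ∀ g, x g ≤ K * conjSup ℓ 7 g)
    (hM₁ : IsTrapping x (1 / 64) M₁) (hc : 0 < c) (hc1 : c ≤ 1 / 64)
    (hcM₁ : 12 * D * M₁ * c < 1 / 512) (hM₂ : IsTrapping x c M₂) (hM₂₀ : 0 < M₂)
    (hm : 32 * (D : ℝ) * M₂ ^ 3 < m) :
    IsVirtuallyNilpotent (Subgroup.closure (powSmall (conjSup x (3 / 64)) c m)) := by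
  have hball : ∀ t : ℝ, t ≤ 1 / 2 → {g | x g ≤ t}.Finite := fun t ht =>
    (hfin (1 / 4)).subset fun g (hg : x g ≤ t) => hx_ball g (hg.trans ht)
  set F := (hball (1 / 32) (by norm_num)).toFinset
  set V := (hball (1 / 1024) (by norm_num)).toFinset
  have hF : ∀ g, g ∈ F ↔ x g ≤ 1 / 32 := fun g => Set.Finite.mem_toFinset _
  have hV : ∀ g, g ∈ V ↔ x g ≤ 1 / 1024 := fun g => Set.Finite.mem_toFinset _
  have hV₀ : 0 < V.card :=
    Finset.card_pos.2 ⟨1, (hV 1).2 ((map_one_eq_zero x).trans_le (by norm_num))⟩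
  have hFV : (F.card : ℝ) ≤ D * V.card := by
    rw [hD]
    refine (h.conjSup (ρ := 7) (S := 13) (by norm_num) (by norm_num)).card_le (δ := 1 / (1024 * K))
      (by positivity) (fun g hg => ?_) fun g hg => (hV g).2 ((hx_lip g).trans ?_)
    · linarith [hx_ball g (((hF g).1 hg).trans (by norm_num))]
    · calc K * conjSup ℓ 7 g ≤ K * (1 / (1024 * K)) := by gcongr
        _ = 1 / 1024 := by field_simp
  have hsmall : 6 * F.card * c * (2 * M₁) < 1 / 512 * V.card := by
    calc 6 * F.card * c * (2 * M₁) ≤ 6 * (D * V.card) * c * (2 * M₁) := by gcongr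
      _ = 12 * D * M₁ * c * V.card := by ring
      _ < 1 / 512 * V.card := by gcongr
  have hm₀ : (0 : ℝ) < m := (by positivity : (0 : ℝ) ≤ 32 * D * M₂ ^ 3).trans_lt hm
  exact isVirtuallyNilpotent_closure_powSmall hc.le hc1 hF (fun g => (hV g).1) hV₀ hFV
    (isWordTrapping_of_isTrapping hc.le hF (fun g => (hV g).1) hM₁ hsmall) hM₂₀ hM₂ hm
    (by exact_mod_cast hm₀)

lemma exists_pos_le_mul_lt {a b d : ℝ} (ha : 0 ≤ a) (hb : 0 < b) (hd : 0 < d) :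
    ∃ c > 0, c ≤ b ∧ a * c < d := by
  refine ⟨min b (d / (a + 1)), by positivity, min_le_left _ _, ?_⟩
  calc a * min b (d / (a + 1)) ≤ a * (d / (a + 1)) := by gcongr; exact min_le_right _ _
    _ < d := by
      rw [← mul_div_assoc, div_lt_iff₀ (by positivity)]
      linarith

theorem exists_margulis_constant (C : ℝ → ℕ) : ∃ ε > 0,
    ∀ (G : Type*) [Group G] (ℓ : GroupSeminorm G), (∀ R, {g | ℓ g ≤ R}.Finite) →
      HasSmallPartitions ℓ ℓ 20 C → ∀ r, 0 ≤ r → r < ε →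
        IsVirtuallyNilpotent (Subgroup.closure {g | ℓ g ≤ r}) := by
  by_contra! hcon
  choose G inst ℓ hfin hC r hr₀ hr hbad using fun n : ℕ => hcon (1 / (n + 1)) (by positivity)
  obtain ⟨K, hK, htrap⟩ := exists_trapping_seminorm C
  obtain ⟨M, hM⟩ := htrap G ℓ hfin hC
  set D : ℕ := C (1 / (1024 * K) / 3) ^ C (1 / (1024 * K) / 3)
  let η : Set.Ioi (0 : ℝ) := ⟨1 / 64, by norm_num⟩
  obtain ⟨c, hc, hc1, hcM⟩ := exists_pos_le_mul_lt (a := 12 * D * M η) (b := 1 / 64) (d := 1 / 512)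
    (by positivity) (by norm_num) (by norm_num)
  obtain ⟨m, hm⟩ := exists_nat_gt (32 * (D : ℝ) * (M ⟨c, hc⟩ + 1 : ℕ) ^ 3)
  have hm₀ : 0 < m := by
    exact_mod_cast (by positivity : (0 : ℝ) ≤ 32 * D * (M ⟨c, hc⟩ + 1 : ℕ) ^ 3).trans_lt hm
  set ε : ℝ := c / (K * m)
  have hε : 0 < ε := by positivity
  obtain ⟨n, ⟨x, hx_ball, hx_lip, hx_trap⟩, hn⟩ := ((hM {η, ⟨c, hc⟩}).and_eventually
    (eventually_ge_atTop (C (ε / 3) ^ C (ε / 3)))).exists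
  have hvn := isVirtuallyNilpotent_closure_powSmall_of_isTrapping (hfin n) (hC n) hK rfl hx_ball
    hx_lip (hx_trap η (by simp)) hc hc1 hcM ((hx_trap ⟨c, hc⟩ (by simp)).mono (Nat.le_succ _))
    (Nat.succ_pos _) hm
  refine hbad n (isVirtuallyNilpotent_closure_of_hasSmallPartitions (hC n) hε hvn
    (fun g hg => Subgroup.subset_closure
      (mem_powSmall_of_conjSup_le hK hc.le hx_ball hx_lip hm₀ hg)) (hr₀ n) ?_)
  calc (C (ε / 3) ^ C (ε / 3) : ℕ) * r n ≤ n * (1 / (n + 1)) :=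
        mul_le_mul (by exact_mod_cast hn) (hr n).le (hr₀ n) (by positivity)
    _ ≤ 12 := by
        rw [mul_one_div, div_le_iff₀ (by positivity)]
        linarith [Nat.cast_nonneg (α := ℝ) n]

end MargulisConstant

/-! ### Packed spaces -/

section Bicombing

variable {X : Type*} [MetricSpace X] {σ : X → X → ℝ → X} {μ : ℝ}

lemma IsGCB.exists_dist_eq_mul (hσ : IsGCB σ) (hμ : 1 ≤ μ) (z y : X) :
    ∃ w, dist z w = μ * dist z y ∧ σ z w (1 / μ) = y := by
  have hμ₀ : 0 < μ := one_pos.trans_le hμ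
  obtain ⟨γ, hγ, hγσ, hy⟩ := hσ.geodComplete z y
  have hγ₀ : γ 0 = z := by simpa [hσ.source] using (hy 0 (by simp)).symm
  have hγ₁ : γ (dist z y) = y := by simpa [hσ.target] using (hy 1 (by simp)).symm
  refine ⟨γ (μ * dist z y), ?_, ?_⟩
  · nth_rewrite 1 [← hγ₀]
    rw [hγ.dist_eq, Real.dist_eq, zero_sub, abs_neg, abs_of_nonneg (by positivity)]
  · have hline := hγσ 0 (μ * dist z y) (by positivity) (1 / μ)
      ⟨by positivity, (div_le_one hμ₀).2 hμ⟩
    have hparam : 0 + 1 / μ * (μ * dist z y - 0) = dist z y := by field_simp; ring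
    rwa [hγ₀, hparam, hγ₁] at hline

lemma IsGCB.mul_dist_le (hσ : IsGCB σ) (hμ : 1 ≤ μ) (z w w' : X) :
    μ * dist (σ z w (1 / μ)) (σ z w' (1 / μ)) ≤ dist w w' := by
  have hμ₀ : 0 < μ := one_pos.trans_le hμ
  obtain ⟨-, hconv⟩ := hσ.convex z w z w'
  replace hconv := hconv (x := 0) (y := 1) (by simp) (by simp) (a := 1 - 1 / μ) (b := 1 / μ)
    (sub_nonneg.2 ((div_le_one hμ₀).2 hμ)) (by positivity) (by ring)
  simp only [smul_eq_mul, mul_zero, zero_add, mul_one, hσ.source, hσ.target, dist_self] at hconv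
  rwa [one_div_mul_eq_div, le_div_iff₀' hμ₀] at hconv

-- Expand the separated set away from `z` along geodesic lines until the scale is `r₀`.
theorem IsPacked.of_le (hσ : IsGCB σ) {P₀ r₀ s : ℝ} (h : IsPacked X P₀ r₀) (hs : 0 < s)
    (hsr : s ≤ r₀) : IsPacked X P₀ s := by
  classical
  intro z S hS hsep
  have hμ : 1 ≤ r₀ / s := (one_le_div hs).2 hsr
  have hμs : r₀ / s * s = r₀ := div_mul_cancel₀ _ hs.ne'
  choose f hzf hσf using hσ.exists_dist_eq_mul hμ z
  have hexpand : ∀ y y', r₀ / s * dist y y' ≤ dist (f y) (f y') := fun y y' => by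
    simpa only [hσf] using hσ.mul_dist_le hμ z (f y) (f y')
  have hinj : Function.Injective f := fun y y' hyy' => by rw [← hσf y, hyy', hσf]
  rw [← Finset.card_image_of_injective S hinj]
  refine h z _ ?_ ?_
  · rw [Finset.coe_image, Set.image_subset_iff]
    intro y hy
    calc dist (f y) z = r₀ / s * dist y z := by rw [dist_comm, hzf, dist_comm]
      _ ≤ r₀ / s * (3 * s) := by gcongr; exact hS hy
      _ = 3 * r₀ := by rw [mul_left_comm, hμs]
  · simp only [Finset.forall_mem_image]
    intro y hy y' hy' hyy'
    calc 2 * r₀ = r₀ / s * (2 * s) := by rw [mul_left_comm, hμs]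
      _ < r₀ / s * dist y y' := by
        gcongr
        exact hsep y hy y' hy' (ne_of_apply_ne f hyy')
      _ ≤ dist (f y) (f y') := hexpand y y'

end Bicombing

section Covering

variable {X : Type*} [MetricSpace X]

lemma IsPacked.packingNumber_le {P s : ℝ} (h : IsPacked X P s) (hs : 0 ≤ s) (z : X) :
    packingNumber (2 * s).toNNReal (closedBall z (3 * s)) ≤ (⌊P⌋₊ : ℕ∞) := by
  refine iSup_le fun A => iSup_le fun hA => iSup_le fun hsep => ?_
  by_contra! hlt
  obtain ⟨S, hSA, hS⟩ := Set.exists_subset_encard_eq (Order.add_one_le_of_lt hlt)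
  lift S to Finset X using Set.finite_of_encard_eq_coe (k := ⌊P⌋₊ + 1) (by exact_mod_cast hS)
  rw [Set.encard_coe_eq_coe_finsetCard] at hS
  have hcard : S.card = ⌊P⌋₊ + 1 := by exact_mod_cast hS
  have hle : S.card ≤ ⌊P⌋₊ := Nat.le_floor (h z S (hSA.trans hA) fun a ha b hb hab => by
    have hdist : _ < edist a b := hsep (hSA ha) (hSA hb) hab
    rw [edist_dist] at hdist
    exact (ENNReal.ofReal_lt_ofReal_iff_of_nonneg (by positivity)).1 hdist)
  omega

lemma IsPacked.exists_cover {P s : ℝ} (h : IsPacked X P s) (hs : 0 ≤ s) (z : X) :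
    ∃ T : Finset X, T.card ≤ ⌊P⌋₊ ∧ ∀ y ∈ closedBall z (3 * s), ∃ t ∈ T, dist t y ≤ 2 * s := by
  have hle := h.packingNumber_le hs z
  have htop : packingNumber (2 * s).toNNReal (closedBall z (3 * s)) ≠ ⊤ :=
    (hle.trans_lt (ENat.natCast_lt_top _)).ne
  set A := maximalSeparatedSet (2 * s).toNNReal (closedBall z (3 * s))
  have hA : A.encard ≤ (⌊P⌋₊ : ℕ∞) := (encard_maximalSeparatedSet htop).trans_le hle
  have hAfin : A.Finite := Set.finite_of_encard_le_coe hA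
  refine ⟨hAfin.toFinset, ?_, fun y hy => ?_⟩
  · rw [hAfin.encard_eq_coe_toFinset_card] at hA
    exact_mod_cast hA
  · obtain ⟨t, ht, hyt⟩ := isCover_maximalSeparatedSet htop hy
    refine ⟨t, hAfin.mem_toFinset.2 ht, ?_⟩
    rw [dist_comm, dist_edist]
    exact ENNReal.toReal_le_of_le_ofReal (by positivity) hyt

lemma exists_cover_pow {P : ℝ → ℝ} {r : ℝ} (hr : 0 < r)
    (h : ∀ s, 0 < s → s ≤ r → IsPacked X (P s) s) (z : X) (j : ℕ) :
    ∃ T : Finset X, T.card ≤ ∏ i ∈ Finset.range j, ⌊P (r * (2 / 3) ^ i)⌋₊ ∧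
      ∀ y ∈ closedBall z (3 * r), ∃ t ∈ T, dist t y ≤ 3 * (r * (2 / 3) ^ j) := by
  classical
  induction j with
  | zero => exact ⟨{z}, by simp, fun y hy => ⟨z, by simp, by simpa [dist_comm] using hy⟩⟩
  | succ j ih =>
    obtain ⟨T, hT, hcov⟩ := ih
    have hs : 0 < r * (2 / 3) ^ j := by positivity
    have hsr : r * (2 / 3) ^ j ≤ r :=
      mul_le_of_le_one_right hr.le (pow_le_one₀ (by norm_num) (by norm_num))
    choose U hUcard hUcov using (h _ hs hsr).exists_cover hs.le
    refine ⟨T.biUnion U, ?_, fun y hy => ?_⟩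
    · rw [Finset.prod_range_succ]
      exact (Finset.card_biUnion_le_card_mul T U _ fun t _ => hUcard t).trans
        (Nat.mul_le_mul_right _ hT)
    · obtain ⟨t, ht, hty⟩ := hcov y hy
      obtain ⟨t', ht', ht'y⟩ := hUcov t y (mem_closedBall'.2 hty)
      refine ⟨t', Finset.mem_biUnion.2 ⟨t, ht, ht'⟩, ht'y.trans_eq ?_⟩
      rw [pow_succ]
      ring

end Covering

section Displacement

variable {X : Type*} [MetricSpace X] (Γ : Subgroup (X ≃ᵢ X)) (x : X) {c : ℝ}

/-- The displacement function `g ↦ dist x (g x)` of `Γ` at `x`, in units of `c`. -/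
noncomputable def displacement (c : ℝ) (hc : 0 ≤ c) : GroupSeminorm Γ where
  toFun g := dist x (g.1 x) / c
  map_one' := by simp
  mul_le' g h := by
    rw [← add_div]
    gcongr
    exact (dist_triangle x (g.1 x) _).trans_eq (congrArg _ (g.1.dist_eq x (h.1 x)))
  inv' g := by
    rw [← g.1.dist_eq x]
    simp [dist_comm]

lemma displacement_le_iff (hc : 0 < c) {g : Γ} {R : ℝ} :
    displacement Γ x c hc.le g ≤ R ↔ dist x (g.1 x) ≤ R * c := div_le_iff₀ hc

lemma hasSmallPartitions_displacement (hc : 0 < c) {R : ℝ} (hR : 0 ≤ R) {C : ℝ → ℕ}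
    (hcov : ∀ δ > 0, ∃ T : Finset X, T.card ≤ C δ ∧
      ∀ y ∈ closedBall x (R * c), ∃ t ∈ T, dist t y ≤ δ * c / 2) :
    HasSmallPartitions (displacement Γ x c hc.le) (displacement Γ x c hc.le) R C := by
  intro δ hδ
  obtain ⟨T, hT, hTcov⟩ := hcov δ hδ
  obtain ⟨t₀, ht₀, -⟩ := hTcov x (mem_closedBall_self (by positivity))
  have : Nonempty T := ⟨⟨t₀, ht₀⟩⟩
  have hnear : ∀ g, displacement Γ x c hc.le g ≤ R → ∃ t : T, dist t.1 (g.1 x) ≤ δ * c / 2 := by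
    intro g hg
    obtain ⟨t, ht, htg⟩ := hTcov (g.1 x) (mem_closedBall'.2 ((displacement_le_iff Γ x hc).1 hg))
    exact ⟨⟨t, ht⟩, htg⟩
  choose! τ hτ using hnear
  refine ⟨fun g => Fin.castLE hT (T.equivFin (τ g)), fun g h hg hh hgh => ?_⟩
  have hτgh : τ g = τ h := T.equivFin.injective (Fin.castLE_injective _ hgh)
  rw [displacement_le_iff Γ x hc]
  calc dist x ((g⁻¹ * h).1 x) = dist (g.1 x) (h.1 x) := by rw [← g.1.dist_eq x]; simp
    _ ≤ dist (τ g).1 (g.1 x) + dist (τ g).1 (h.1 x) := dist_triangle_left _ _ _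
    _ ≤ δ * c / 2 + δ * c / 2 := add_le_add (hτ g hg) (hτgh ▸ hτ h hh)
    _ = δ * c := add_halves _

lemma almostStabilizer_eq_map (hc : 0 < c) (r : ℝ) :
    almostStabilizer Γ r x =
      (Subgroup.closure {g : Γ | displacement Γ x c hc.le g ≤ r / c}).map Γ.subtype := by
  rw [MonoidHom.map_closure, almostStabilizer]
  congr 1
  ext g
  simp [displacement_le_iff Γ x hc, div_mul_cancel₀ _ hc.ne', and_comm]

lemma finite_setOf_displacement_le (hc : 0 < c)
    (hfin : ∀ R, {g : X ≃ᵢ X | g ∈ Γ ∧ dist x (g x) ≤ R}.Finite) (R : ℝ) :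
    {g | displacement Γ x c hc.le g ≤ R}.Finite :=
  ((hfin (R * c)).preimage Subtype.val_injective.injOn).subset fun g hg =>
    ⟨g.2, (displacement_le_iff Γ x hc).1 hg⟩

end Displacement

theorem generalized_margulis_lemma_general (P : ℝ → ℝ) {r₀ : ℝ} (hr₀ : 0 < r₀) :
    ∃ ε₀ : ℝ, 0 < ε₀ ∧
      ∀ (X : Type*) [MetricSpace X], (∀ s, 0 < s → s ≤ r₀ → IsPacked X (P s) s) →
        ∀ (Γ : Subgroup (X ≃ᵢ X)) (x : X),
          (∀ R, {g : X ≃ᵢ X | g ∈ Γ ∧ dist x (g x) ≤ R}.Finite) →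
            ∀ r : ℝ, 0 ≤ r → r < ε₀ → IsVirtuallyNilpotent ↥(almostStabilizer Γ r x) := by
  set c : ℝ := 3 * r₀ / 20 with hc_def
  have hc : 0 < c := by positivity
  have hj : ∀ δ : ℝ, 0 < δ → ∃ j : ℕ, (2 / 3 : ℝ) ^ j < δ / 40 := fun δ hδ =>
    exists_pow_lt_of_lt_one (by positivity) (by norm_num)
  choose! j hj using hj
  obtain ⟨ε, hε, hmargulis⟩ := exists_margulis_constant fun δ =>
    ∏ i ∈ Finset.range (j δ), ⌊P (r₀ * (2 / 3) ^ i)⌋₊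
  refine ⟨ε * c, by positivity, fun X _ hP Γ x hfin r hr hrε => ?_⟩
  have hpart := hasSmallPartitions_displacement Γ x hc (R := 20) (by norm_num) fun δ hδ => by
    obtain ⟨T, hT, hTcov⟩ := exists_cover_pow hr₀ hP x (j δ)
    refine ⟨T, hT, fun y hy => ?_⟩
    rw [show 20 * c = 3 * r₀ by rw [hc_def]; ring] at hy
    obtain ⟨t, ht, hty⟩ := hTcov y hy
    refine ⟨t, ht, hty.trans ?_⟩
    calc 3 * (r₀ * (2 / 3) ^ j δ) ≤ 3 * (r₀ * (δ / 40)) := by gcongr; exact (hj δ hδ).le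
      _ = δ * c / 2 := by rw [hc_def]; ring
  have hvn := hmargulis Γ _ (finite_setOf_displacement_le Γ x hc hfin) hpart (r / c)
    (by positivity) ((div_lt_iff₀ hc).2 hrε)
  rw [almostStabilizer_eq_map Γ x hc]
  exact hvn.of_injective
    ((Subgroup.closure _).equivMapOfInjective Γ.subtype Γ.subtype_injective).symm.toMonoidHom
    (MulEquiv.injective _)

/-- **Corollary 2.7** (generalized Margulis lemma for packed GCB-spaces). -/
theorem generalized_margulis_lemma
    (P₀ r₀ : ℝ) (hP₀ : 0 < P₀) (hr₀ : 0 < r₀) :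
    ∃ ε₀ : ℝ, 0 < ε₀ ∧
      ∀ (X : Type*) [MetricSpace X] [CompleteSpace X] (σ : X → X → ℝ → X),
        IsGCB σ → IsPacked X P₀ r₀ →
        ∀ Γ : Subgroup (X ≃ᵢ X), IsDiscreteSubgroup Γ →
          ∀ x : X, ∀ r : ℝ, 0 ≤ r → r < ε₀ →
            IsVirtuallyNilpotent ↥(almostStabilizer Γ r x) := by
  obtain ⟨ε₀, hε₀, h⟩ := generalized_margulis_lemma_general (fun _ => P₀) hr₀
  exact ⟨ε₀, hε₀, fun X _ _ σ hσ hP Γ hΓ x =>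
    h X (fun s hs hsr => hP.of_le hσ hs hsr) Γ x (hΓ x)⟩
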